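/- Let K be a number field and let a, b ∈ Kˣ be totally positive (σ(a) > 0 and σ(b) > 0 for every ring embedding σ : K → ℝ). Let H = H_{a,b} be the quaternion algebra over K with basis 1, i, j, ij where i² = a, j² = b, ij = −ji, let S = {t ∈ K : there exists x ∈ H with x·x̄ = 1 and x + x̄ = t} (where x̄ denotes the quaternion conjugate of x, so x·x̄ is the reduced norm and x + x̄ the reduced trace of x), and let T = S + S = {s + s' : s, s' ∈ S}. Then T = {t ∈ K : for every finite place 𝔮 of K such that the conic z² − a·u² − b·v² has no nontrivial zero over the completion K_𝔮, the element t lies in the valuation ring O_𝔮 ⊆ K_𝔮 (i.e. v_𝔮(t) ≥ 0)}. -/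

import Mathlib

open Quaternion IsDedekindDomain NumberField

/-!
An element of trace `s` and norm `1` with `s ≠ ±2` exists in `H_{a,b}` if and only if some pure
quaternion has square `s² - 4`.

At a ramified place the valuation of the reduced norm is a valuation on the quaternion algebra, so
elements of norm `1` have integral trace. Conversely, let `t` be integral at all ramified places.
At a ramified place `w` every unramified quadratic extension embeds in `H_{a,b}`, so `s` is a local
trace as soon as `X² - sX + 1` is irreducible modulo `w`. A count of the reducible polynomials of
this form over the residue field writes `t` as `s + (t - s)` with both summands of this kind, or
with one of them congruent to `±2`, which can also be arranged to be a local trace. Being a local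
trace is an open condition, so weak approximation gives a single `s ∈ K` for all ramified places.

It remains to see that the pure quaternions represent `d = s² - 4` globally. The local conditions
say that `H_{a,b}` splits locally everywhere over `K(√d)`, and the local-global principle for conics
over that field yields an isotropic pure quaternion, from which a pure quaternion of square `d` is
read off over `K`. Total positivity makes all real places harmless.

The local-global principle for conics is reduced to the norm principle for `F(√d)`, where `d` is
totally positive and a local square at the dyadic places: an element that is a norm locally
everywhere is a global norm. This follows by comparing indices in a group of `S`-units: Hilbert's
Theorem 90 and the unit theorem bound the index of the global norms from above, and the quadratic
characters of the `S`-units at suitable auxiliary places bound the index of the local norms from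
below. Everything is phrased over the global field, where an element is a local square if it is
a global square times a unit congruent to `1` modulo `4𝔪`.
-/

namespace NormOneTrace

open scoped WithZero

/-! ### Local squares and local norms -/

section ValuedField

variable {F Γ₀ : Type*} [Field F] [LinearOrderedCommGroupWithZero Γ₀] (v : Valuation F Γ₀)

lemma valuation_natCast_le_one (n : ℕ) : v (n : F) ≤ 1 := by
  induction n with
  | zero => simp
  | succ k ih =>
    push_cast
    exact v.map_add_le ih v.map_one.le

lemma valuation_two_le_one : v 2 ≤ 1 := by exact_mod_cast valuation_natCast_le_one v 2

lemma valuation_four_le_one : v 4 ≤ 1 := by exact_mod_cast valuation_natCast_le_one v 4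

lemma valuation_four : v 4 = v 2 * v 2 := by rw [← map_mul]; norm_num

lemma valuation_four_mul_le (x : F) : v (4 * x) ≤ v x := by
  rw [map_mul]
  exact mul_le_of_le_one_left zero_le (valuation_four_le_one v)

variable {v} in
lemma valuation_eq_of_sub_lt_four {x y : F} (h : v (x - y) < v (4 * y)) : v x = v y :=
  v.map_eq_of_sub_lt (h.trans_le (valuation_four_mul_le v y))

variable {v} in
lemma valuation_sub_lt_four_symm {x y : F} (h : v (x - y) < v (4 * y)) :
    v (y - x) < v (4 * x) := by
  rwa [v.map_sub_swap, map_mul, valuation_eq_of_sub_lt_four h, ← map_mul]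

/-- The nonzero values of the norm form `y ^ 2 - a * z ^ 2` of `F(√a) / F`, as a group. -/
def normGroup (a : F) : Subgroup Fˣ where
  carrier := {x | ∃ y z : F, (x : F) = y ^ 2 - a * z ^ 2}
  one_mem' := ⟨1, 0, by simp⟩
  mul_mem' := by
    rintro x x' ⟨y, z, h⟩ ⟨y', z', h'⟩
    refine ⟨y * y' + a * z * z', y * z' + z * y', ?_⟩
    rw [Units.val_mul, h, h']
    ring
  inv_mem' := by
    rintro x ⟨y, z, h⟩
    refine ⟨y / x, z / x, ?_⟩
    have : (x : F) ≠ 0 := x.ne_zero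
    rw [Units.val_inv_eq_inv_val]
    field_simp
    exact h

lemma mem_normGroup {a : F} {x : Fˣ} :
    x ∈ normGroup a ↔ ∃ y z : F, (x : F) = y ^ 2 - a * z ^ 2 := Iff.rfl

lemma square_le_normGroup (a : F) : Subgroup.square Fˣ ≤ normGroup a := by
  rintro _ ⟨y, rfl⟩
  exact ⟨y, 0, by push_cast; ring⟩

lemma normGroup_eq_top_of_isSquare [CharZero F] {a : Fˣ} (ha : IsSquare (a : F)) :
    normGroup (a : F) = ⊤ := by
  obtain ⟨r, hr⟩ := ha
  have hr0 : r ≠ 0 := by rintro rfl; simp at hr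
  refine eq_top_iff.2 fun x _ => ⟨(x + 1) / 2, (x - 1) / (2 * r), ?_⟩
  rw [hr]
  field_simp
  ring

variable [CharZero F]

/-- The group of units congruent to `1` modulo `4𝔪`, where `𝔪` is the maximal ideal of the
valuation ring. Over a complete field all of these are squares. -/
def unitsNearOne : Subgroup Fˣ where
  carrier := {x | v ((x : F) - 1) < v 4}
  one_mem' := by simp [zero_lt_iff]
  mul_mem' := by
    intro x y (hx : v (x - 1 : F) < v 4) (hy : v (y - 1 : F) < v 4)
    have hy1 : v (y : F) = 1 := by
      simpa using valuation_eq_of_sub_lt_four (v := v) (x := (y : F)) (y := 1) (by simpa using hy)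
    have hxy : ((x * y : Fˣ) : F) - 1 = (x - 1) * y + (y - 1) := by push_cast; ring
    rw [Set.mem_ofPred_eq, hxy]
    exact v.map_add_lt (by rwa [map_mul, hy1, mul_one]) hy
  inv_mem' := by
    intro x (hx : v (x - 1 : F) < v 4)
    have hx1 : v (x : F) = 1 := by
      simpa using valuation_eq_of_sub_lt_four (v := v) (x := (x : F)) (y := 1) (by simpa using hx)
    have hinv : ((x⁻¹ : Fˣ) : F) - 1 = (1 - x) * (x : F)⁻¹ := by
      push_cast
      field_simp
    rw [Set.mem_ofPred_eq, hinv, map_mul, map_inv₀, hx1, inv_one, mul_one, v.map_sub_swap]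
    exact hx

lemma mem_unitsNearOne {x : Fˣ} : x ∈ unitsNearOne v ↔ v ((x : F) - 1) < v 4 := Iff.rfl

lemma mem_sup_unitsNearOne {H : Subgroup Fˣ} {x : Fˣ} :
    x ∈ H ⊔ unitsNearOne v ↔ ∃ y ∈ H, v ((x : F) - y) < v (4 * (y : F)) := by
  have key (y : Fˣ) : v ((x : F) - y) < v (4 * (y : F)) ↔ y⁻¹ * x ∈ unitsNearOne v := by
    have hy : 0 < v (y : F) := by simp [zero_lt_iff]
    have hxy : (x : F) - y = (((y⁻¹ * x : Fˣ) : F) - 1) * y := by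
      push_cast
      field_simp
    rw [mem_unitsNearOne, hxy, map_mul, map_mul, mul_lt_mul_iff_left₀ hy]
  rw [Subgroup.mem_sup]
  constructor
  · rintro ⟨y, hy, z, hz, rfl⟩
    exact ⟨y, hy, (key y).2 (by simpa using hz)⟩
  · rintro ⟨y, hy, h⟩
    exact ⟨y, hy, _, (key y).1 h, mul_inv_cancel_left y x⟩

/-- The elements that become squares in the completion at `v`, described without reference to the
completion as the products of a global square and an element close to `1`. -/
def localSquares : Subgroup Fˣ := Subgroup.square Fˣ ⊔ unitsNearOne v

/-- The elements that become norms from `F(√a)` at `v`, described without reference to the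
completion as the products of a global norm and an element close to `1`. -/
def localNorms (a : F) : Subgroup Fˣ := normGroup a ⊔ unitsNearOne v

lemma mem_localSquares {x : Fˣ} :
    x ∈ localSquares v ↔ ∃ y : F, y ≠ 0 ∧ v ((x : F) - y ^ 2) < v (4 * y ^ 2) := by
  rw [localSquares, mem_sup_unitsNearOne]
  constructor
  · rintro ⟨_, ⟨z, rfl⟩, h⟩
    exact ⟨z, z.ne_zero, by simpa [sq] using h⟩
  · rintro ⟨y, hy, h⟩
    exact ⟨Units.mk0 y hy ^ 2, IsSquare.sq (Units.mk0 y hy), by simpa using h⟩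

lemma mem_localSquares_of_isSquare {x : Fˣ} (hx : IsSquare x) : x ∈ localSquares v :=
  Subgroup.mem_sup_left hx

lemma sq_mem_localSquares (x : Fˣ) : x ^ 2 ∈ localSquares v :=
  mem_localSquares_of_isSquare v (IsSquare.sq x)

lemma localSquares_le_localNorms (a : F) : localSquares v ≤ localNorms v a :=
  sup_le_sup_right (square_le_normGroup a) _

lemma normGroup_le_localNorms (a : F) : normGroup a ≤ localNorms v a := le_sup_left

variable {v}

lemma mem_localSquares_of_close {x y : Fˣ} (hy : y ∈ localSquares v)
    (h : v ((x : F) - y) < v (4 * (y : F))) : x ∈ localSquares v := by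
  have : x ∈ localSquares v ⊔ unitsNearOne v := (mem_sup_unitsNearOne v).2 ⟨y, hy, h⟩
  rwa [localSquares, sup_assoc, sup_idem] at this

lemma mem_localNorms_of_close {a : F} {x y : Fˣ} (hy : y ∈ localNorms v a)
    (h : v ((x : F) - y) < v (4 * (y : F))) : x ∈ localNorms v a := by
  have : x ∈ localNorms v a ⊔ unitsNearOne v := (mem_sup_unitsNearOne v).2 ⟨y, hy, h⟩
  rwa [localNorms, sup_assoc, sup_idem] at this

end ValuedField

section WeakApproximation

variable {R F : Type*} [CommRing R] [IsDedekindDomain R] [Field F] [Algebra R F]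
  [IsFractionRing R F]

theorem exists_valuation_sub_lt (S : Finset (HeightOneSpectrum R)) (x : HeightOneSpectrum R → F)
    {γ : HeightOneSpectrum R → ℤᵐ⁰} (hγ : ∀ v ∈ S, γ v ≠ 0) :
    ∃ g : F, ∀ v ∈ S, v.valuation F (g - x v) < γ v := by
  classical
  obtain ⟨b, hb⟩ := IsLocalization.exist_integer_multiples (nonZeroDivisors R) S x
  choose! n hn using hb
  have hbF : algebraMap R F b ≠ 0 := IsFractionRing.to_map_ne_zero_of_mem_nonZeroDivisors b.2
  have hprec : ∀ v ∈ S, ∃ e : ℕ,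
      WithZero.exp (-(e : ℤ)) < γ v * v.valuation F (algebraMap R F b) :=
    fun v hv => WithZero.exists_exp_neg_natCast_lt
      (mul_ne_zero (hγ v hv) ((v.valuation F).ne_zero_iff.2 hbF))
  choose! e he using hprec
  obtain ⟨y, hy⟩ := IsDedekindDomain.exists_forall_sub_mem_ideal (s := S) (fun v => v.asIdeal) e
    (fun v _ => v.prime) (fun v _ w _ hvw h => hvw (HeightOneSpectrum.ext h)) (fun v => n v)
  refine ⟨algebraMap R F y / algebraMap R F b, fun v hv => ?_⟩
  have hclose := (v.intValuation_le_pow_iff_mem _ _).2 (hy v hv)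
  rw [← HeightOneSpectrum.valuation_of_algebraMap (K := F)] at hclose
  have hsplit : algebraMap R F (y - n v) =
      (algebraMap R F y / algebraMap R F b - x v) * algebraMap R F b := by
    rw [map_sub, hn v hv, Algebra.smul_def]
    field_simp
  have hlt := hclose.trans_lt (he v hv)
  change v.valuation F (algebraMap R F (y - n v)) < _ at hlt
  rw [hsplit, map_mul] at hlt
  exact lt_of_mul_lt_mul_right' hlt

theorem exists_unit_valuation_sub_lt (S : Finset (HeightOneSpectrum R)) [CharZero F]
    (x : HeightOneSpectrum R → Fˣ) :
    ∃ g : Fˣ, ∀ v ∈ S, v.valuation F ((g : F) - x v) < v.valuation F (4 * (x v : F)) := by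
  rcases S.eq_empty_or_nonempty with rfl | ⟨w, hw⟩
  · exact ⟨1, by simp⟩
  obtain ⟨g, hg⟩ := exists_valuation_sub_lt S (fun v => (x v : F))
    (γ := fun v => v.valuation F (4 * (x v : F))) (by simp)
  have hg0 : g ≠ 0 := by
    rintro rfl
    refine (w.valuation F).ne_zero_iff.2 (x w).ne_zero ?_
    rw [← valuation_eq_of_sub_lt_four (hg w hw), map_zero]
  exact ⟨Units.mk0 g hg0, hg⟩

end WeakApproximation

lemma exists_sq_add_self_eq {L : Type*} [NormedField L] [CompleteSpace L] [IsUltrametricDist L]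
    {ε : L} (hε : ‖ε‖ < 1) : ∃ y : L, y ^ 2 + y = ε := by
  let X := Metric.closedBall (0 : L) ‖ε‖
  have hmaps (y : X) : ε - (y : L) ^ 2 ∈ X := by
    have hy : ‖(y : L)‖ ≤ ‖ε‖ := mem_closedBall_zero_iff.1 y.2
    refine mem_closedBall_zero_iff.2 ?_
    rw [sub_eq_add_neg]
    refine (IsUltrametricDist.norm_add_le_max _ _).trans (max_le le_rfl ?_)
    rw [norm_neg, norm_pow]
    nlinarith [norm_nonneg (y : L)]
  let f : X → X := fun y => ⟨ε - (y : L) ^ 2, hmaps y⟩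
  have : CompleteSpace X := (Metric.isClosed_closedBall (x := (0 : L))).completeSpace_coe
  have : Nonempty X := ⟨⟨0, by simp [X]⟩⟩
  have hf : ContractingWith ‖ε‖₊ f := by
    refine ⟨by exact_mod_cast hε, LipschitzWith.of_dist_le_mul fun y z => ?_⟩
    have hfactor : ε - (y : L) ^ 2 - (ε - (z : L) ^ 2) = (z + y) * (z - y) := by ring
    rw [Subtype.dist_eq, Subtype.dist_eq, dist_eq_norm, dist_eq_norm, hfactor, norm_mul,
      norm_sub_rev (z : L), coe_nnnorm]
    gcongr
    exact (IsUltrametricDist.norm_add_le_max _ _).trans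
      (max_le (mem_closedBall_zero_iff.1 z.2) (mem_closedBall_zero_iff.1 y.2))
  have hfix : ε - (hf.fixedPoint : L) ^ 2 = hf.fixedPoint :=
    congrArg Subtype.val hf.fixedPoint_isFixedPt
  exact ⟨hf.fixedPoint, by linear_combination -hfix⟩

/-- The conic `z ^ 2 = a * u ^ 2 + b * v ^ 2` has a point over `L`. -/
def ConicSolvable {L : Type*} [Field L] (a b : L) : Prop :=
  ∃ z u v : L, ¬(z = 0 ∧ u = 0 ∧ v = 0) ∧ z ^ 2 - a * u ^ 2 - b * v ^ 2 = 0

section Conic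

variable {L : Type*} [Field L] {a b : L}

lemma conicSolvable_of_pure_sq {s u v w : L} (hs : s ≠ 0)
    (h : s ^ 2 = a * u ^ 2 + b * v ^ 2 - a * b * w ^ 2) : ConicSolvable a b := by
  by_cases hvw : v ^ 2 - a * w ^ 2 = 0
  · rcases eq_or_ne w 0 with rfl | hw
    · obtain rfl : v = 0 := by simpa using hvw
      exact ⟨s, u, 0, fun h0 => hs h0.1, by linear_combination h⟩
    · exact ⟨v, w, 0, fun h0 => hw h0.2.1, by linear_combination hvw⟩
  · exact ⟨s * v + a * u * w, s * w + u * v, v ^ 2 - a * w ^ 2, fun h0 => hvw h0.2.2,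
      by linear_combination (v ^ 2 - a * w ^ 2) * h⟩

lemma ConicSolvable.exists_eq_one [NeZero (2 : L)] (ha : a ≠ 0) (hb : b ≠ 0)
    (h : ConicSolvable a b) : ∃ x y : L, a * x ^ 2 + b * y ^ 2 = 1 := by
  obtain ⟨z, u, v, h0, h⟩ := h
  rcases eq_or_ne z 0 with rfl | hz
  · have hv : v ≠ 0 := by
      rintro rfl
      exact h0 ⟨rfl, by simpa [ha] using h, rfl⟩
    have hu : u ≠ 0 := by
      rintro rfl
      exact hv (by simpa [hb] using h)
    have hb' : b = -a * u ^ 2 / v ^ 2 := by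
      field_simp
      linear_combination -h
    refine ⟨(1 + 1 / a) / 2, (1 - 1 / a) / (2 * (u / v)), ?_⟩
    have h2 : (2 : L) ≠ 0 := NeZero.ne 2
    rw [hb']
    field_simp
    ring
  · refine ⟨u / z, v / z, ?_⟩
    field_simp
    linear_combination -h

end Conic

section Completion

variable {F : Type*} [Field F] [NumberField F] (v : HeightOneSpectrum (𝓞 F))

instance charZero_adicCompletion : CharZero (v.adicCompletion F) :=
  charZero_of_injective_algebraMap (algebraMap F (v.adicCompletion F)).injective

lemma norm_algebraMap_lt_iff {x y : F} (hy : y ≠ 0) :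
    ‖algebraMap F (v.adicCompletion F) x‖ < ‖algebraMap F (v.adicCompletion F) y‖ ↔
      v.valuation F x < v.valuation F y := by
  have hy₁ : 0 < ‖algebraMap F (v.adicCompletion F) y‖ := by simpa using hy
  have hy₂ : 0 < v.valuation F y := by simpa [zero_lt_iff] using hy
  rw [← div_lt_one hy₁, ← div_lt_one₀ hy₂, ← norm_div, ← map_div₀, ← map_div₀,
    ← HeightOneSpectrum.valuedAdicCompletion_eq_valuation', Valued.toNormedField.norm_lt_one_iff]
  rfl

lemma isSquare_algebraMap_of_mem_localSquares {x : Fˣ} (hx : x ∈ localSquares (v.valuation F)) :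
    IsSquare (algebraMap F (v.adicCompletion F) x) := by
  obtain ⟨y, hy, h⟩ := (mem_localSquares _).1 hx
  have h0 : 4 * y ^ 2 ≠ 0 := mul_ne_zero (by norm_num) (pow_ne_zero 2 hy)
  have hsmall : ‖algebraMap F (v.adicCompletion F) ((x - y ^ 2) / (4 * y ^ 2))‖ < 1 := by
    rw [map_div₀, norm_div, div_lt_one (norm_pos_iff.2 (by simpa using h0))]
    exact (norm_algebraMap_lt_iff v h0).2 h
  obtain ⟨t, ht⟩ := exists_sq_add_self_eq hsmall
  have hx : (x : F) = y ^ 2 * (1 + 4 * ((x - y ^ 2) / (4 * y ^ 2))) := by field_simp; ring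
  refine ⟨algebraMap F _ y * (1 + 2 * t), ?_⟩
  rw [hx]
  simp only [map_mul _ (y ^ 2), map_mul _ (4 : F), map_add, map_pow, map_one, map_ofNat, ← ht]
  ring

/-- Solvability of `a * x ^ 2 + b * y ^ 2 = 1` in the completion at `v`, described without
reference to the completion. -/
def LocallySolvable {F Γ₀ : Type*} [Field F] [CharZero F] [LinearOrderedCommGroupWithZero Γ₀]
    (v : Valuation F Γ₀) (a b : F) : Prop :=
  ∃ x y : F, ∃ z : Fˣ, (z : F) = a * x ^ 2 + b * y ^ 2 ∧ z ∈ localSquares v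

lemma locallySolvable_of_conicSolvable {a b : F} (ha : a ≠ 0) (hb : b ≠ 0)
    (h : ConicSolvable (algebraMap F (v.adicCompletion F) a) (algebraMap F _ b)) :
    LocallySolvable (v.valuation F) a b := by
  obtain ⟨X, Y, hXY⟩ := h.exists_eq_one (by simpa using ha) (by simpa using hb)
  set A := algebraMap F (v.adicCompletion F) with hA
  have hdense : DenseRange (Prod.map A A) :=
    (HeightOneSpectrum.denseRange_algebraMap _ _).prodMap
      (HeightOneSpectrum.denseRange_algebraMap _ _)
  have hcont : Continuous fun p : v.adicCompletion F × v.adicCompletion F =>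
    A a * p.1 ^ 2 + A b * p.2 ^ 2 := by fun_prop
  obtain ⟨⟨x, y⟩, hxy⟩ := hdense.exists_mem_open
    ((Metric.isOpen_ball (x := 1) (ε := ‖A 4‖)).preimage hcont) ⟨(X, Y), by simp [hXY]⟩
  have hclose : v.valuation F (a * x ^ 2 + b * y ^ 2 - 1) < v.valuation F (4 * 1) := by
    rw [mul_one, ← norm_algebraMap_lt_iff v (by norm_num)]
    simpa only [Prod.map, Set.mem_preimage, mem_ball_iff_norm, hA, map_sub, map_add, map_mul,
      map_pow, map_one] using hxy
  have hne : a * x ^ 2 + b * y ^ 2 ≠ 0 := by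
    intro h0
    simpa [h0] using valuation_eq_of_sub_lt_four hclose
  exact ⟨x, y, Units.mk0 _ hne, rfl,
    (mem_localSquares _).2 ⟨1, one_ne_zero, by simpa using hclose⟩⟩

end Completion

/-! ### `S`-units -/

section IndexOfMultiples

lemma index_range_of_finite {A : Type*} [AddCommGroup A] [Finite A] (f : A →+ A) :
    f.range.index = Nat.card f.ker := by
  refine Nat.eq_of_mul_eq_mul_left (Nat.card_pos (α := f.range)) ?_
  rw [f.range.card_mul_index, ← AddSubgroup.index_ker, f.ker.index_mul_card]

/-- The multiplicativity of the Herbrand quotient of multiplication by `m`, for a product whose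
second factor is finite. -/
lemma index_range_nsmul_prod {A T : Type*} [AddCommGroup A] [IsAddTorsionFree A] [AddCommGroup T]
    [Finite T] {m : ℕ} (hm : m ≠ 0) :
    (nsmulAddMonoidHom m : A × T →+ A × T).range.index =
      (nsmulAddMonoidHom m : A →+ A).range.index *
        Nat.card (nsmulAddMonoidHom m : A × T →+ A × T).ker := by
  have hrange : (nsmulAddMonoidHom m : A × T →+ A × T).range =
      (nsmulAddMonoidHom m : A →+ A).range.prod (nsmulAddMonoidHom m : T →+ T).range := by
    ext ⟨x, y⟩
    simp [AddMonoidHom.mem_range, AddSubgroup.mem_prod, Prod.ext_iff]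
  have hker : (nsmulAddMonoidHom m : A × T →+ A × T).ker =
      (⊥ : AddSubgroup A).prod (nsmulAddMonoidHom m : T →+ T).ker := by
    ext ⟨x, y⟩
    simp [AddMonoidHom.mem_ker, AddSubgroup.mem_prod, Prod.ext_iff, hm]
  rw [hrange, AddSubgroup.index_prod, index_range_of_finite (nsmulAddMonoidHom m : T →+ T), hker,
    Nat.card_congr (AddSubgroup.prodEquiv _ _).toEquiv, Nat.card_prod, AddSubgroup.card_bot,
    one_mul]

lemma index_range_nsmul_of_free {A : Type*} [AddCommGroup A] [Module.Free ℤ A] [Module.Finite ℤ A]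
    (m : ℕ) [NeZero m] :
    (nsmulAddMonoidHom m : A →+ A).range.index = m ^ Module.finrank ℤ A := by
  rw [← ModN.natCard_eq, ModN, AddSubgroup.index]
  refine Nat.card_congr (QuotientAddGroup.quotientAddEquivOfEq ?_).toEquiv
  ext x
  simp

theorem index_range_nsmul {M : Type*} [AddCommGroup M] [Module.Finite ℤ M] (m : ℕ) [NeZero m] :
    (nsmulAddMonoidHom m : M →+ M).range.index =
      m ^ Module.finrank ℤ M * Nat.card (nsmulAddMonoidHom m : M →+ M).ker := by
  have : AddGroup.FG M := Module.Finite.iff_addGroup_fg.1 inferInstance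
  obtain ⟨n, ι, _, p, hp, e, ⟨f⟩⟩ := AddCommGroup.equiv_free_prod_directSum_zmod M
  classical
  set T := DirectSum ι (fun i => ZMod (p i ^ e i))
  have (i : ι) : NeZero (p i ^ e i) := ⟨pow_ne_zero _ (hp i).ne_zero⟩
  have : Finite T :=
    Finite.of_equiv _ (DirectSum.addEquivProd (fun i => ZMod (p i ^ e i))).symm.toEquiv
  have hrank : Module.finrank ℤ M = Module.finrank ℤ (Fin n →₀ ℤ) := by
    have hT : Module.finrank ℤ T = 0 := Module.finrank_eq_zero_iff_isTorsion.2 fun x =>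
      ⟨⟨Nat.card T, by simp [Nat.card_pos.ne']⟩,
        (natCast_zsmul x (Nat.card T)).trans card_nsmul_eq_zero'⟩
    have hker : Module.finrank ℤ (LinearMap.ker (LinearMap.fst ℤ (Fin n →₀ ℤ) T)) = 0 := by
      rw [LinearMap.ker_fst, LinearMap.finrank_range_of_inj LinearMap.inr_injective, hT]
    rw [f.toIntLinearEquiv.finrank_eq, ← Submodule.finrank_quotient_add_finrank
      (LinearMap.ker (LinearMap.fst ℤ (Fin n →₀ ℤ) T)), hker, add_zero,
      ((LinearMap.fst ℤ (Fin n →₀ ℤ) T).quotKerEquivOfSurjective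
        LinearMap.fst_surjective).finrank_eq]
  have hrange : (nsmulAddMonoidHom m : M →+ M).range.map (f : M →+ (Fin n →₀ ℤ) × T) =
      (nsmulAddMonoidHom m : (Fin n →₀ ℤ) × T →+ _).range := by
    ext x
    constructor
    · rintro ⟨_, ⟨y, rfl⟩, rfl⟩
      exact ⟨f y, (map_nsmul f m y).symm⟩
    · rintro ⟨y, rfl⟩
      exact ⟨m • f.symm y, ⟨_, rfl⟩, by simp⟩
  have hker : (nsmulAddMonoidHom m : M →+ M).ker.map (f : M →+ (Fin n →₀ ℤ) × T) =
      (nsmulAddMonoidHom m : (Fin n →₀ ℤ) × T →+ _).ker := by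
    ext x
    obtain ⟨x, rfl⟩ := f.surjective x
    simp [AddMonoidHom.mem_ker, ← map_nsmul, f.injective.eq_iff]
  rw [← AddSubgroup.index_map_equiv _ f, hrange, index_range_nsmul_prod (NeZero.ne m),
    index_range_nsmul_of_free, hrank, ← hker,
    Nat.card_congr ((nsmulAddMonoidHom m : M →+ M).ker.equivMapOfInjective
      (f : M →+ (Fin n →₀ ℤ) × T) f.injective).toEquiv]

end IndexOfMultiples

section LogValuation

variable {F : Type*} [Field F] (v : Valuation F ℤᵐ⁰)

/-- The additive form of a discrete valuation on units. It is `≤ 0` on integral elements, so it is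
the opposite of the usual normalised order. -/
noncomputable def logValuation (x : Fˣ) : ℤ := WithZero.log (v x)

lemma exp_logValuation (x : Fˣ) : WithZero.exp (logValuation v x) = v x :=
  WithZero.exp_log ((v.ne_zero_iff).2 x.ne_zero)

variable {v} in
lemma logValuation_eq_iff {x : Fˣ} {n : ℤ} : logValuation v x = n ↔ v x = WithZero.exp n := by
  rw [← exp_logValuation, WithZero.exp_inj]

variable {v} in
lemma logValuation_eq_zero_iff {x : Fˣ} : logValuation v x = 0 ↔ v x = 1 := by
  rw [logValuation_eq_iff, WithZero.exp_zero]

@[simp]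
lemma logValuation_one : logValuation v 1 = 0 := logValuation_eq_zero_iff.2 (by simp)

@[simp]
lemma logValuation_mul (x y : Fˣ) :
    logValuation v (x * y) = logValuation v x + logValuation v y := by
  rw [logValuation_eq_iff, WithZero.exp_add, exp_logValuation, exp_logValuation, ← map_mul,
    Units.val_mul]

@[simp]
lemma logValuation_zpow (x : Fˣ) (n : ℤ) : logValuation v (x ^ n) = n * logValuation v x := by
  rw [logValuation, Units.val_zpow_eq_zpow_val, map_zpow₀, WithZero.log_zpow, smul_eq_mul,
    logValuation]

@[simp]
lemma logValuation_pow (x : Fˣ) (n : ℕ) : logValuation v (x ^ n) = n * logValuation v x := by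
  exact_mod_cast logValuation_zpow v x n

@[simp]
lemma logValuation_inv (x : Fˣ) : logValuation v x⁻¹ = -logValuation v x := by
  simpa using logValuation_zpow v x (-1)

lemma logValuation_prod {ι : Type*} (s : Finset ι) (f : ι → Fˣ) :
    logValuation v (∏ i ∈ s, f i) = ∑ i ∈ s, logValuation v (f i) := by
  classical
  induction s using Finset.induction_on with
  | empty => simp
  | insert i s hi ih => rw [Finset.prod_insert hi, Finset.sum_insert hi, logValuation_mul, ih]

variable {v} in
lemma not_isSquare_of_odd_logValuation {x : Fˣ} (h : Odd (logValuation v x)) :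
    ¬ IsSquare (x : F) := by
  rintro ⟨y, hy⟩
  have hy0 : y ≠ 0 := by rintro rfl; simp at hy
  obtain rfl : x = Units.mk0 y hy0 * Units.mk0 y hy0 := Units.ext hy
  rw [logValuation_mul] at h
  exact Int.not_even_iff_odd.2 h ⟨_, rfl⟩

end LogValuation

section SUnits

variable {R F : Type*} [CommRing R] [IsDedekindDomain R] [Field F] [Algebra R F]
  [IsFractionRing R F]

variable (F) in
theorem exists_unit_valuation_eq_exp_neg [Finite (ClassGroup R)] (v : HeightOneSpectrum R) :
    ∃ (c : Fˣ) (n : ℕ), 0 < n ∧ v.valuation F (c : F) = WithZero.exp (-(n : ℤ)) ∧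
      ∀ w ≠ v, w.valuation F (c : F) = 1 := by
  classical
  set h := Nat.card (ClassGroup R)
  obtain ⟨c, hc⟩ : (v.asIdeal ^ h).IsPrincipal := by
    have h0 : v.asIdeal ∈ nonZeroDivisors (Ideal R) := mem_nonZeroDivisors_of_ne_zero v.ne_bot
    have := pow_card_eq_one' (x := ClassGroup.mk0 ⟨v.asIdeal, h0⟩)
    rwa [← map_pow, ClassGroup.mk0_eq_one_iff] at this
  replace hc : Ideal.span {c} = v.asIdeal ^ h := hc.symm
  have hc0 : c ≠ 0 := by
    rintro rfl
    exact pow_ne_zero h v.ne_bot (by simpa [eq_comm] using hc)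
  have hval (w : HeightOneSpectrum R) : w.valuation F (algebraMap R F c) =
      WithZero.exp
        (-(h * (Associates.mk w.asIdeal).count (Associates.mk v.asIdeal).factors : ℤ)) := by
    rw [HeightOneSpectrum.valuation_of_algebraMap, w.intValuation_if_neg hc0, hc, Associates.mk_pow,
      Associates.count_pow (by simpa using v.ne_bot) w.associates_irreducible]
    push_cast
    rfl
  refine ⟨Units.mk0 (algebraMap R F c) (by simpa using hc0), h, Nat.card_pos, ?_, fun w hw => ?_⟩
  · rw [Units.val_mk0, hval, Associates.count_self v.associates_irreducible, Nat.cast_one, mul_one]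
  · rw [Units.val_mk0, hval, Associates.count_eq_zero_of_ne w.associates_irreducible
      v.associates_irreducible (by
        rwa [Ne, Associates.mk_eq_mk_iff_associated, associated_iff_eq,
          ← HeightOneSpectrum.ext_iff])]
    simp

variable (F) in
/-- The group of `S`-units of `F`, for a finite set `S` of finite places. -/
noncomputable abbrev sUnits (S : Finset (HeightOneSpectrum R)) : Subgroup Fˣ :=
  (S : Set (HeightOneSpectrum R)).unit F

lemma mem_sUnits {S : Finset (HeightOneSpectrum R)} {x : Fˣ} :
    x ∈ sUnits F S ↔ ∀ v ∉ S, v.valuation F (x : F) = 1 := Iff.rfl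

lemma sUnits_mono {S T : Finset (HeightOneSpectrum R)} (h : S ⊆ T) : sUnits F S ≤ sUnits F T :=
  fun _ hx v hv => hx v fun hvS => hv (h hvS)

lemma neg_one_mem_sUnits (S : Finset (HeightOneSpectrum R)) : -1 ∈ sUnits F S :=
  mem_sUnits.2 fun v _ => by simp

variable (F) in
/-- The vector of valuations of an `S`-unit at the places of `S`. -/
noncomputable def sUnitsLog (S : Finset (HeightOneSpectrum R)) :
    Additive (sUnits F S) →+ (S → ℤ) where
  toFun x v := logValuation (v.1.valuation F) x.toMul
  map_zero' := by ext; simp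
  map_add' := by intros; ext; simp

variable (F) in
/-- The inclusion of the units of the Dedekind domain in the group of `S`-units. -/
noncomputable def unitsToSUnits (S : Finset (HeightOneSpectrum R)) :
    Additive Rˣ →+ Additive (sUnits F S) :=
  MonoidHom.toAdditive ((Units.map (algebraMap R F).toMonoidHom).codRestrict (sUnits F S)
    fun x v _ => by
      rw [← HeightOneSpectrum.valuationOfNeZero_eq]
      exact congrArg _ (HeightOneSpectrum.valuation_of_unit_eq v x))

lemma unitsToSUnits_injective (S : Finset (HeightOneSpectrum R)) :
    Function.Injective (unitsToSUnits F S) := fun _ _ h =>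
  Additive.toMul.injective (Units.map_injective (FaithfulSMul.algebraMap_injective R F)
    (congrArg (fun z : Additive (sUnits F S) => (z.toMul : Fˣ)) h))

lemma exists_units_eq_of_valuation_eq_one {z : Fˣ}
    (hz : ∀ v : HeightOneSpectrum R, v.valuation F (z : F) = 1) :
    ∃ r : Rˣ, algebraMap R F r = z := by
  obtain ⟨r, hr⟩ := HeightOneSpectrum.mem_integers_of_valuation_le_one F (z : F)
    fun v => (hz v).le
  obtain ⟨s, hs⟩ := HeightOneSpectrum.mem_integers_of_valuation_le_one F ((z⁻¹ : Fˣ) : F)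
    fun v => by rw [Units.val_inv_eq_inv_val, map_inv₀, hz v, inv_one]
  have hrs : r * s = 1 := FaithfulSMul.algebraMap_injective R F (by simp [hr, hs])
  exact ⟨⟨r, s, hrs, by rw [mul_comm, hrs]⟩, hr⟩

lemma range_unitsToSUnits (S : Finset (HeightOneSpectrum R)) :
    (unitsToSUnits F S).range = (sUnitsLog F S).ker := by
  ext x
  constructor
  · rintro ⟨y, rfl⟩
    ext v
    refine logValuation_eq_zero_iff.2 ?_
    rw [← HeightOneSpectrum.valuationOfNeZero_eq]
    exact congrArg _ (HeightOneSpectrum.valuation_of_unit_eq v.1 y.toMul)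
  · intro hx
    obtain ⟨r, hr⟩ := exists_units_eq_of_valuation_eq_one (z := (x.toMul : Fˣ)) fun v => by
      by_cases hv : v ∈ S
      · exact logValuation_eq_zero_iff.1 (congrFun hx ⟨v, hv⟩)
      · exact x.toMul.2 v hv
    exact ⟨Additive.ofMul r, Additive.toMul.injective (Subtype.ext (Units.ext hr))⟩

lemma ker_sUnitsLog_toIntLinearMap (S : Finset (HeightOneSpectrum R)) :
    LinearMap.ker (sUnitsLog F S).toIntLinearMap =
      LinearMap.range (unitsToSUnits F S).toIntLinearMap := by
  ext x
  exact (SetLike.ext_iff.1 (range_unitsToSUnits S) x).symm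

theorem finrank_range_sUnitsLog [Finite (ClassGroup R)] (S : Finset (HeightOneSpectrum R)) :
    Module.finrank ℤ (LinearMap.range (sUnitsLog F S).toIntLinearMap) = S.card := by
  classical
  refine le_antisymm ((Submodule.finrank_le _).trans (by simp)) ?_
  choose c n hn hc hc' using exists_unit_valuation_eq_exp_neg (R := R) F
  have hcS (v : S) : c v ∈ sUnits F S := fun w hw => hc' _ _ fun h => hw (h ▸ v.2)
  let g (v : S) : LinearMap.range (sUnitsLog F S).toIntLinearMap :=
    ⟨_, ⟨Additive.ofMul ⟨c v, hcS v⟩, rfl⟩⟩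
  have hg (v w : S) : (g v : S → ℤ) w = if v = w then -(n v : ℤ) else 0 := by
    change logValuation (w.1.valuation F) (c v) = _
    split_ifs with h
    · rw [h, logValuation_eq_iff, hc]
    · exact logValuation_eq_zero_iff.2 (hc' _ _ fun h' => h (Subtype.ext h'.symm))
  have hli : LinearIndependent ℤ g := by
    refine Fintype.linearIndependent_iff.2 fun a ha w => ?_
    have hw := congrFun (congrArg Subtype.val ha) w
    simp only [AddSubmonoidClass.coe_finsetSum, Finset.sum_apply, SetLike.val_smul,
      Pi.smul_apply, hg] at hw
    simpa [(hn w).ne'] using hw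
  simpa using hli.fintype_card_le_finrank

instance finite_sUnits [Module.Finite ℤ (Additive Rˣ)] (S : Finset (HeightOneSpectrum R)) :
    Module.Finite ℤ (Additive (sUnits F S)) := by
  refine ⟨Submodule.fg_of_fg_map_of_fg_inf_ker (sUnitsLog F S).toIntLinearMap
    (IsNoetherian.noetherian _) ?_⟩
  rw [top_inf_eq, ker_sUnitsLog_toIntLinearMap, LinearMap.range_eq_map]
  exact Module.Finite.fg_top.map _

end SUnits

section NumberField

variable {F : Type*} [Field F] [NumberField F]

theorem finrank_sUnits (S : Finset (HeightOneSpectrum (𝓞 F))) :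
    Module.finrank ℤ (Additive (sUnits F S)) + 1 = Fintype.card (InfinitePlace F) + S.card := by
  rw [← Submodule.finrank_quotient_add_finrank (LinearMap.ker (sUnitsLog F S).toIntLinearMap),
    (sUnitsLog F S).toIntLinearMap.quotKerEquivRange.finrank_eq, finrank_range_sUnitsLog,
    ker_sUnitsLog_toIntLinearMap, LinearMap.finrank_range_of_inj (unitsToSUnits_injective S),
    Units.finrank_eq, Units.rank]
  have : 0 < Fintype.card (InfinitePlace F) := Fintype.card_pos
  omega

lemma card_ker_two_sUnits (S : Finset (HeightOneSpectrum (𝓞 F))) :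
    Nat.card (nsmulAddMonoidHom 2 : Additive (sUnits F S) →+ Additive (sUnits F S)).ker = 2 := by
  refine Nat.card_eq_two_iff.2 ⟨0, ⟨Additive.ofMul ⟨-1, neg_one_mem_sUnits S⟩, ?_⟩, ?_, ?_⟩
  · exact Additive.toMul.injective (Subtype.ext (by simp))
  · intro h
    have h1 : (1 : F) = -1 := congrArg (fun z => ((z.1.toMul : Fˣ) : F)) h
    norm_num at h1
  · refine Set.eq_univ_of_forall fun x => ?_
    have hx : ((x.1.toMul : Fˣ) : F) ^ 2 = 1 :=
      congrArg (fun z : Additive (sUnits F S) => ((z.toMul : Fˣ) : F)) x.2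
    exact (sq_eq_one_iff.1 hx).imp
      (fun h => Subtype.ext (Additive.toMul.injective (Subtype.ext (Units.ext h))))
      (fun h => Subtype.ext (Additive.toMul.injective (Subtype.ext (Units.ext h))))

theorem relIndex_sq_sUnits (S : Finset (HeightOneSpectrum (𝓞 F))) :
    ((sUnits F S).map (powMonoidHom 2)).relIndex (sUnits F S) =
      2 ^ (Fintype.card (InfinitePlace F) + S.card) := by
  have h := index_range_nsmul (M := Additive (sUnits F S)) 2
  rw [card_ker_two_sUnits, ← pow_succ, finrank_sUnits] at h
  rw [← h, Subgroup.relIndex, ← Subgroup.index_toAddSubgroup]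
  congr 1
  ext x
  constructor
  · rintro ⟨y, hy, h⟩
    exact ⟨Additive.ofMul ⟨y, hy⟩, Additive.toMul.injective (Subtype.ext h)⟩
  · rintro ⟨y, rfl⟩
    exact ⟨_, y.toMul.2, rfl⟩

end NumberField

section ClassGroup

variable {R F : Type*} [CommRing R] [IsDedekindDomain R] [Field F] [Algebra R F]
  [IsFractionRing R F]

lemma finite_valuation_ne_one (x : Fˣ) :
    {v : HeightOneSpectrum R | v.valuation F (x : F) ≠ 1}.Finite := by
  refine ((HeightOneSpectrum.Support.finite R (x : F)).union
    (HeightOneSpectrum.Support.finite R ((x⁻¹ : Fˣ) : F))).subset fun v hv => ?_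
  rcases lt_or_gt_of_ne hv with h | h
  · refine Or.inr ((one_lt_inv₀ ?_).2 h |>.trans_eq ?_)
    · simp [zero_lt_iff]
    · simp
  · exact Or.inl h

variable (F) in
/-- Triviality of the class group of the ring of `S`-integers: every place outside `S` has a
generator in `F` up to places of `S`. -/
def TrivialSClassGroup (S : Finset (HeightOneSpectrum R)) : Prop :=
  ∀ w ∉ S, ∃ c : Fˣ, w.valuation F (c : F) = WithZero.exp (-1) ∧
    ∀ u ∉ S, u ≠ w → u.valuation F (c : F) = 1

lemma TrivialSClassGroup.mono {S T : Finset (HeightOneSpectrum R)} (h : TrivialSClassGroup F S)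
    (hST : S ⊆ T) : TrivialSClassGroup F T := by
  intro w hw
  obtain ⟨c, hcw, hc⟩ := h w fun hwS => hw (hST hwS)
  exact ⟨c, hcw, fun u hu => hc u fun huS => hu (hST huS)⟩

lemma exists_unit_of_isPrincipal_mul {w : HeightOneSpectrum R} {J : Ideal R} (hJ : J ≠ ⊥)
    (hwJ : (w.asIdeal * J).IsPrincipal) : ∃ c : Fˣ,
      (¬ w.asIdeal ∣ J → w.valuation F (c : F) = WithZero.exp (-1)) ∧
      ∀ u ≠ w, ¬ u.asIdeal ∣ J → u.valuation F (c : F) = 1 := by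
  classical
  obtain ⟨c, hc⟩ := hwJ
  replace hc : Ideal.span {c} = w.asIdeal * J := hc.symm
  have hc0 : c ≠ 0 := by
    rintro rfl
    exact mul_ne_zero w.ne_bot hJ (by simpa [eq_comm] using hc)
  have hval (u : HeightOneSpectrum R) (hu : ¬ u.asIdeal ∣ J) :
      u.valuation F (algebraMap R F c) = WithZero.exp
        (-((Associates.mk u.asIdeal).count (Associates.mk w.asIdeal).factors : ℤ)) := by
    rw [HeightOneSpectrum.valuation_of_algebraMap, u.intValuation_if_neg hc0, hc,
      ← Associates.mk_mul_mk, Associates.count_mul (by simpa using w.ne_bot) (by simpa using hJ)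
        u.associates_irreducible,
      not_ne_iff.1 (mt (Associates.count_ne_zero_iff_dvd hJ u.irreducible).1 hu), add_zero]
  refine ⟨Units.mk0 (algebraMap R F c) (by simpa using hc0), fun hw => ?_, fun u huw hu => ?_⟩
  · rw [Units.val_mk0, hval w hw, Associates.count_self w.associates_irreducible, Nat.cast_one]
  · rw [Units.val_mk0, hval u hu, Associates.count_eq_zero_of_ne u.associates_irreducible
      w.associates_irreducible (by
        rwa [Ne, Associates.mk_eq_mk_iff_associated, associated_iff_eq,
          ← HeightOneSpectrum.ext_iff])]
    simp

variable (R F) in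
theorem exists_trivialSClassGroup [Finite (ClassGroup R)] :
    ∃ S : Finset (HeightOneSpectrum R), TrivialSClassGroup F S := by
  choose I hI using ClassGroup.mk0_surjective (R := R)
  have hfin : (⋃ c, {v : HeightOneSpectrum R | v.asIdeal ∣ (I c : Ideal R)}).Finite :=
    Set.finite_iUnion fun c => Ideal.finite_factors (nonZeroDivisors.ne_zero (I c).2)
  have hdvd : ∀ u ∉ hfin.toFinset, ∀ c, ¬ u.asIdeal ∣ (I c : Ideal R) := fun u hu c h =>
    hu (hfin.mem_toFinset.2 (Set.mem_iUnion.2 ⟨c, h⟩))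
  refine ⟨hfin.toFinset, fun w hw => ?_⟩
  let W : nonZeroDivisors (Ideal R) := ⟨w.asIdeal, mem_nonZeroDivisors_of_ne_zero w.ne_bot⟩
  have htriv : ClassGroup.mk0 (W * I (ClassGroup.mk0 W)⁻¹) = 1 := by
    rw [map_mul, hI, mul_inv_cancel]
  obtain ⟨c, hcw, hc⟩ := exists_unit_of_isPrincipal_mul (F := F)
    (nonZeroDivisors.ne_zero (I (ClassGroup.mk0 W)⁻¹).2) ((ClassGroup.mk0_eq_one_iff _).1 htriv)
  exact ⟨c, hcw (hdvd w hw _), fun u hu huw => hc u huw (hdvd u hu _)⟩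

lemma TrivialSClassGroup.exists_logValuation_eq {S : Finset (HeightOneSpectrum R)}
    (h : TrivialSClassGroup F S) {n : HeightOneSpectrum R → ℤ} (hn : {v | n v ≠ 0}.Finite) :
    ∃ c : Fˣ, ∀ w ∉ S, logValuation (w.valuation F) c = n w := by
  classical
  choose! c hcw hc using h
  refine ⟨∏ v ∈ hn.toFinset \ S, c v ^ (-n v), fun w hw => ?_⟩
  have hterm : ∀ v ∈ hn.toFinset \ S,
      logValuation (w.valuation F) (c v ^ (-n v)) = if v = w then n w else 0 := by
    intro v hv
    have hvS := (Finset.mem_sdiff.1 hv).2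
    split_ifs with hvw
    · rw [hvw, logValuation_zpow, logValuation_eq_iff.2 (hcw w hw), neg_mul_neg, mul_one]
    · rw [logValuation_zpow, logValuation_eq_zero_iff.2 (hc v hvS w hw (Ne.symm hvw)), mul_zero]
  rw [logValuation_prod, Finset.sum_congr rfl hterm, Finset.sum_ite_eq', ite_eq_left_iff]
  intro hwn
  simpa [hw, eq_comm] using hwn

end ClassGroup

/-! ### Norms of `S`-units from a quadratic extension -/

section RingEquiv

variable {R R' K K' : Type*} [CommRing R] [IsDedekindDomain R] [CommRing R'] [IsDedekindDomain R']
  [Field K] [Algebra R K] [IsFractionRing R K] [Field K'] [Algebra R' K'] [IsFractionRing R' K']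

lemma intValuation_comap_ringEquiv (e : R ≃+* R') (P : HeightOneSpectrum R') (x : R) :
    (P.comap (e : R →+* R') e.surjective).intValuation x = P.intValuation (e x) := by
  have hpow (n : ℕ) : (P.comap (e : R →+* R') e.surjective).asIdeal ^ n =
      (P.asIdeal ^ n).comap (e : R →+* R') := by
    change (P.asIdeal.comap e) ^ n = (P.asIdeal ^ n).comap e
    rw [← Ideal.map_symm, ← Ideal.map_symm, Ideal.map_pow]
  have hle (n : ℕ) :
      (P.comap (e : R →+* R') e.surjective).intValuation x ≤ WithZero.exp (-(n : ℤ)) ↔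
        P.intValuation (e x) ≤ WithZero.exp (-(n : ℤ)) := by
    rw [HeightOneSpectrum.intValuation_le_pow_iff_mem,
      HeightOneSpectrum.intValuation_le_pow_iff_mem, hpow]
    rfl
  by_cases hx : x = 0
  · simp [hx]
  refine le_antisymm ?_ ?_
  · rw [P.intValuation_eq_exp_neg_multiplicity (by simpa using hx), hle,
      ← P.intValuation_eq_exp_neg_multiplicity (by simpa using hx)]
  · rw [HeightOneSpectrum.intValuation_eq_exp_neg_multiplicity _ hx, ← hle,
      ← HeightOneSpectrum.intValuation_eq_exp_neg_multiplicity _ hx]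

lemma valuation_comap_ringEquiv {e : R ≃+* R'} {σ : K ≃+* K'}
    (hσ : ∀ r, σ (algebraMap R K r) = algebraMap R' K' (e r)) (P : HeightOneSpectrum R') (x : K) :
    (P.comap (e : R →+* R') e.surjective).valuation K x = P.valuation K' (σ x) := by
  obtain ⟨n, d, -, rfl⟩ := IsFractionRing.div_surjective (A := R) x
  simp only [map_div₀, hσ, HeightOneSpectrum.valuation_of_algebraMap,
    intValuation_comap_ringEquiv]

end RingEquiv

section Extension

variable {F E : Type*} [Field F] [Field E] [Algebra F E]

/-- The image of a place under an automorphism `σ` of `E / F`. -/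
noncomputable def conjPlace (σ : E ≃ₐ[F] E) (P : HeightOneSpectrum (𝓞 E)) :
    HeightOneSpectrum (𝓞 E) :=
  P.comap (RingOfIntegers.mapRingEquiv (σ : E ≃+* E) : 𝓞 E →+* 𝓞 E)
    (RingOfIntegers.mapRingEquiv (σ : E ≃+* E)).surjective

lemma under_conjPlace (σ : E ≃ₐ[F] E) (P : HeightOneSpectrum (𝓞 E)) :
    (conjPlace σ P).under (𝓞 F) = P.under (𝓞 F) := by
  ext x
  have hx : RingOfIntegers.mapRingEquiv (σ : E ≃+* E) (algebraMap (𝓞 F) (𝓞 E) x) =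
      algebraMap (𝓞 F) (𝓞 E) x := by
    ext
    exact σ.commutes (x : F)
  change RingOfIntegers.mapRingEquiv (σ : E ≃+* E) (algebraMap (𝓞 F) (𝓞 E) x) ∈ P.asIdeal ↔ _
  rw [hx]
  rfl

variable (F E) in
lemma under_surjective [NumberField F] :
    Function.Surjective fun P : HeightOneSpectrum (𝓞 E) => P.under (𝓞 F) := by
  intro v
  have := v.isMaximal
  obtain ⟨Q, hQ, hQv⟩ := Ideal.exists_maximal_ideal_liesOver_of_isIntegral (S := 𝓞 E) v.asIdeal
  refine ⟨⟨Q, hQ.isPrime, ?_⟩, HeightOneSpectrum.ext hQv.over.symm⟩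
  rintro rfl
  exact v.ne_bot (by simp [hQv.over, Ideal.under_def])

variable [NumberField E]

lemma valuation_conjPlace (σ : E ≃ₐ[F] E) (P : HeightOneSpectrum (𝓞 E)) (x : E) :
    (conjPlace σ P).valuation E x = P.valuation E (σ x) :=
  valuation_comap_ringEquiv (e := RingOfIntegers.mapRingEquiv (σ : E ≃+* E)) (σ := (σ : E ≃+* E))
    (fun _ => rfl) P x

variable [NumberField F]

lemma exists_valuation_algebraMap_eq_pow (P : HeightOneSpectrum (𝓞 E)) : ∃ e : ℕ, e ≠ 0 ∧
    ∀ x : F, P.valuation E (algebraMap F E x) = (P.under (𝓞 F)).valuation F x ^ e := by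
  have : P.asIdeal.LiesOver (P.under (𝓞 F)).asIdeal := ⟨rfl⟩
  exact ⟨_, Ideal.IsDedekindDomain.ramificationIdx'_ne_zero_of_liesOver P.asIdeal
    (P.under (𝓞 F)).ne_bot, fun x => (HeightOneSpectrum.valuation_liesOver E _ P x).symm⟩

lemma valuation_algebraMap_le_iff (P : HeightOneSpectrum (𝓞 E)) {x y : F} :
    P.valuation E (algebraMap F E x) ≤ P.valuation E (algebraMap F E y) ↔
      (P.under (𝓞 F)).valuation F x ≤ (P.under (𝓞 F)).valuation F y := by
  obtain ⟨e, he, h⟩ := exists_valuation_algebraMap_eq_pow (F := F) P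
  rw [h, h, pow_le_pow_iff_left₀ zero_le zero_le he]

lemma valuation_algebraMap_lt_iff (P : HeightOneSpectrum (𝓞 E)) {x y : F} :
    P.valuation E (algebraMap F E x) < P.valuation E (algebraMap F E y) ↔
      (P.under (𝓞 F)).valuation F x < (P.under (𝓞 F)).valuation F y := by
  rw [← not_le, valuation_algebraMap_le_iff, not_le]

lemma valuation_algebraMap_eq_one_iff (P : HeightOneSpectrum (𝓞 E)) {x : F} :
    P.valuation E (algebraMap F E x) = 1 ↔ (P.under (𝓞 F)).valuation F x = 1 := by
  obtain ⟨e, he, h⟩ := exists_valuation_algebraMap_eq_pow (F := F) P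
  rw [h, pow_eq_one_iff, or_iff_left he]

variable (E) in
lemma finite_setOf_under_mem (S : Finset (HeightOneSpectrum (𝓞 F))) :
    {P : HeightOneSpectrum (𝓞 E) | P.under (𝓞 F) ∈ S}.Finite := by
  refine S.finite_toSet.preimage' fun v _ => ?_
  have := v.isMaximal
  refine ((IsDedekindDomain.primesOver_finite v.asIdeal (𝓞 E)).subset ?_).of_finite_image
    (f := HeightOneSpectrum.asIdeal) fun P _ Q _ h => HeightOneSpectrum.ext h
  rintro _ ⟨P, rfl, rfl⟩
  exact ⟨P.isPrime, ⟨rfl⟩⟩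

variable (E) in
/-- The finite set of places of `E` that lie over a finite set of places of `F`. -/
noncomputable def placesAbove (S : Finset (HeightOneSpectrum (𝓞 F))) :
    Finset (HeightOneSpectrum (𝓞 E)) := (finite_setOf_under_mem E S).toFinset

lemma mem_placesAbove {S : Finset (HeightOneSpectrum (𝓞 F))} {P : HeightOneSpectrum (𝓞 E)} :
    P ∈ placesAbove E S ↔ P.under (𝓞 F) ∈ S := by
  simp [placesAbove]

lemma map_mem_sUnits_placesAbove {S : Finset (HeightOneSpectrum (𝓞 F))} {x : Fˣ}
    (hx : x ∈ sUnits F S) : Units.map (algebraMap F E : F →* E) x ∈ sUnits E (placesAbove E S) :=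
  mem_sUnits.2 fun P hP => (valuation_algebraMap_eq_one_iff P).2
    (mem_sUnits.1 hx _ fun h => hP (mem_placesAbove.2 h))

lemma map_mem_localSquares {P : HeightOneSpectrum (𝓞 E)} {x : Fˣ}
    (h : x ∈ localSquares ((P.under (𝓞 F)).valuation F)) :
    Units.map (algebraMap F E : F →* E) x ∈ localSquares (P.valuation E) := by
  obtain ⟨y, hy, h⟩ := (mem_localSquares _).1 h
  refine (mem_localSquares _).2 ⟨algebraMap F E y, by simpa using hy, ?_⟩
  simpa only [map_sub, map_mul, map_pow, map_ofNat, Units.coe_map, MonoidHom.coe_coe] using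
    (valuation_algebraMap_lt_iff P).2 h

end Extension

section IndexFormula

variable {G H : Type*} [CommGroup G] [CommGroup H]

lemma map_powMonoidHom_le (U : Subgroup G) : U.map (powMonoidHom 2) ≤ U := by
  rintro _ ⟨u, hu, rfl⟩
  exact pow_mem hu 2

variable {ι : G →* H} {N : H →* G} {U : Subgroup G} {M : Subgroup H}

lemma relIndex_sq_map_norm (hU : U.map ι ≤ M) (hM : M.map N ≤ U) (hN : ∀ u, N (ι u) = u ^ 2)
    (h90 : ∀ x ∈ M, N x ∈ U.map (powMonoidHom 2) → ∃ u ∈ U, ∃ m ∈ M, x = ι u * m ^ 2) :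
    (U.map (powMonoidHom 2)).relIndex (M.map N) =
      (U.map ι ⊔ M.map (powMonoidHom 2)).relIndex M := by
  rw [← Subgroup.relIndex_comap, ← Subgroup.inf_relIndex_right]
  congr 1
  refine le_antisymm ?_ (sup_le ?_ ?_)
  · rintro x ⟨hx, hxM⟩
    obtain ⟨u, hu, m, hm, rfl⟩ := h90 x hxM hx
    exact Subgroup.mul_mem_sup ⟨u, hu, rfl⟩ ⟨m, hm, rfl⟩
  · rintro _ ⟨u, hu, rfl⟩
    exact ⟨⟨u, hu, (hN u).symm⟩, hU ⟨u, hu, rfl⟩⟩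
  · rintro _ ⟨m, hm, rfl⟩
    exact ⟨⟨N m, hM ⟨m, hm, rfl⟩, (map_pow N m 2).symm⟩, pow_mem hm 2⟩

lemma relIndex_sq_comap_eq_two {d : G} (hd : d ∈ U) (hdsq : d ∉ U.map (powMonoidHom 2))
    (hsq : ∀ u ∈ U, ι u ∈ M.map (powMonoidHom 2) ↔
      u ∈ U.map (powMonoidHom 2) ∨ u * d ∈ U.map (powMonoidHom 2)) :
    (U.map (powMonoidHom 2)).relIndex ((M.map (powMonoidHom 2)).comap ι ⊓ U) = 2 := by
  rw [Subgroup.relIndex, Subgroup.index_eq_two_iff]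
  refine ⟨⟨d, (hsq d hd).2 (Or.inr ⟨d, hd, sq d⟩), hd⟩, ?_⟩
  rintro ⟨b, hb, hbU⟩
  simp only [Subgroup.mem_subgroupOf, Subgroup.coe_mul]
  rcases (hsq b hbU).1 hb with hb' | hb'
  · exact Or.inr ⟨hb', fun h => hdsq (by simpa using mul_mem (inv_mem hb') h)⟩
  · exact Or.inl ⟨hb', fun h => hdsq (by simpa using mul_mem (inv_mem h) hb')⟩

/-- If `ι` and `N` are the inclusion and the norm of a quadratic extension, the index of the norms
is controlled by the indices of the squares. -/
theorem relIndex_norm_mul_relIndex_sq {d : G} (hd : d ∈ U) (hdsq : d ∉ U.map (powMonoidHom 2))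
    (hU : U.map ι ≤ M) (hM : M.map N ≤ U) (hN : ∀ u, N (ι u) = u ^ 2)
    (h90 : ∀ x ∈ M, N x ∈ U.map (powMonoidHom 2) → ∃ u ∈ U, ∃ m ∈ M, x = ι u * m ^ 2)
    (hsq : ∀ u ∈ U, ι u ∈ M.map (powMonoidHom 2) ↔
      u ∈ U.map (powMonoidHom 2) ∨ u * d ∈ U.map (powMonoidHom 2)) :
    (M.map N).relIndex U * 2 * (M.map (powMonoidHom 2)).relIndex M =
      (U.map (powMonoidHom 2)).relIndex U ^ 2 := by
  have hsqN : (U.map (powMonoidHom 2)).relIndex (M.map N) * (M.map N).relIndex U =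
      (U.map (powMonoidHom 2)).relIndex U := by
    refine Subgroup.relIndex_mul_relIndex _ _ _ ?_ hM
    rintro _ ⟨u, hu, rfl⟩
    exact ⟨ι u, hU ⟨u, hu, rfl⟩, hN u⟩
  have hsup : (M.map (powMonoidHom 2)).relIndex (U.map ι ⊔ M.map (powMonoidHom 2)) *
      (U.map ι ⊔ M.map (powMonoidHom 2)).relIndex M = (M.map (powMonoidHom 2)).relIndex M :=
    Subgroup.relIndex_mul_relIndex _ _ _ le_sup_right (sup_le hU (map_powMonoidHom_le M))
  have hcomap : (M.map (powMonoidHom 2)).relIndex (U.map ι ⊔ M.map (powMonoidHom 2)) =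
      ((M.map (powMonoidHom 2)).comap ι).relIndex U := by
    rw [Subgroup.relIndex_sup_right, Subgroup.relIndex_comap]
  have htwo : 2 * ((M.map (powMonoidHom 2)).comap ι).relIndex U =
      (U.map (powMonoidHom 2)).relIndex U := by
    have h := Subgroup.relIndex_mul_relIndex (U.map (powMonoidHom 2))
      ((M.map (powMonoidHom 2)).comap ι ⊓ U) U (fun u hu => ?_) inf_le_right
    · rwa [relIndex_sq_comap_eq_two hd hdsq hsq, Subgroup.inf_relIndex_right] at h
    exact ⟨(hsq u (map_powMonoidHom_le U hu)).2 (Or.inl hu), map_powMonoidHom_le U hu⟩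
  rw [← hsup, hcomap, ← relIndex_sq_map_norm hU hM hN h90]
  linear_combination (U.map (powMonoidHom 2)).relIndex U * hsqN +
    (M.map N).relIndex U * (U.map (powMonoidHom 2)).relIndex (M.map N) * htwo

end IndexFormula

section AdjoinSqrt

variable {F : Type*} [Field F] {d : F}

/-- The quadratic extension `F(√d)`; the square root of `d` is `QuadraticAlgebra.omega`. -/
abbrev AdjoinSqrt (d : F) : Type _ := QuadraticAlgebra F d 0

/-- The nontrivial automorphism of `F(√d)`. -/
def sqrtConj (d : F) : AdjoinSqrt d ≃ₐ[F] AdjoinSqrt d :=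
  AlgEquiv.ofRingEquiv (f := starRingAut (R := AdjoinSqrt d)) fun r => by ext <;> simp

lemma sqrtConj_apply (x : AdjoinSqrt d) : sqrtConj d x = star x := rfl

lemma omega_sq : (QuadraticAlgebra.omega : AdjoinSqrt d) ^ 2 = algebraMap F _ d := by
  rw [sq]
  ext <;> simp

lemma star_omega : star (QuadraticAlgebra.omega : AdjoinSqrt d) = -QuadraticAlgebra.omega := by
  ext <;> simp

lemma omega_ne_zero : (QuadraticAlgebra.omega : AdjoinSqrt d) ≠ 0 := fun h => by
  simpa using congrArg QuadraticAlgebra.im h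

lemma star_algebraMap (r : F) : star (algebraMap F (AdjoinSqrt d) r) = algebraMap F _ r :=
  (sqrtConj d).commutes r

lemma eq_re_add_im_mul_omega (x : AdjoinSqrt d) :
    x = algebraMap F _ x.re + algebraMap F _ x.im * QuadraticAlgebra.omega := by
  ext <;> simp

lemma fact_ne_of_not_isSquare (hd : ¬ IsSquare d) : Fact (∀ r : F, r ^ 2 ≠ d + 0 * r) :=
  ⟨fun r hr => hd ⟨r, by rw [← sq, hr]; ring⟩⟩

variable [Fact (∀ r : F, r ^ 2 ≠ d + 0 * r)]

instance numberField_adjoinSqrt [NumberField F] : NumberField (AdjoinSqrt d) where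
  to_finiteDimensional := by
    have : IsScalarTower ℚ F (AdjoinSqrt d) := IsScalarTower.of_algebraMap_eq fun x => by simp
    exact Module.Finite.trans F _

lemma isSquare_algebraMap_adjoinSqrt_iff [NeZero (2 : F)] {u : F} :
    IsSquare (algebraMap F (AdjoinSqrt d) u) ↔ IsSquare u ∨ IsSquare (u * d) := by
  constructor
  · rintro ⟨y, hy⟩
    have hre := congrArg QuadraticAlgebra.re hy
    have him := congrArg QuadraticAlgebra.im hy
    simp only [QuadraticAlgebra.algebraMap_re, QuadraticAlgebra.algebraMap_im,
      QuadraticAlgebra.re_mul, QuadraticAlgebra.im_mul] at hre him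
    have hprod : y.re * y.im = 0 := by
      have : 2 * (y.re * y.im) = 0 := by linear_combination -him
      simpa [NeZero.ne (2 : F)] using this
    rcases mul_eq_zero.1 hprod with h | h
    · exact Or.inr ⟨d * y.im, by rw [hre, h]; ring⟩
    · exact Or.inl ⟨y.re, by rw [hre, h]; ring⟩
  · rintro (⟨y, hy⟩ | ⟨y, hy⟩)
    · exact ⟨algebraMap F _ y, by rw [hy, map_mul]⟩
    · refine ⟨algebraMap F _ y / QuadraticAlgebra.omega, ?_⟩
      have hω := omega_ne_zero (d := d)
      field_simp
      rw [omega_sq, ← map_mul, hy, map_mul, sq]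

theorem exists_mul_star_eq_of_norm_eq_one {x : AdjoinSqrt d} (hx : QuadraticAlgebra.norm x = 1) :
    ∃ y ≠ 0, x * star y = y := by
  have h : x * star x = 1 := by
    rw [← QuadraticAlgebra.algebraMap_norm_eq_mul_star, hx, map_one]
  by_cases hx1 : 1 + x = 0
  · refine ⟨QuadraticAlgebra.omega, omega_ne_zero, ?_⟩
    rw [star_omega]
    linear_combination -QuadraticAlgebra.omega * hx1
  · refine ⟨1 + x, hx1, ?_⟩
    rw [star_add, star_one]
    linear_combination h

variable {Γ₀ : Type*} [LinearOrderedCommGroupWithZero Γ₀] {V : Valuation (AdjoinSqrt d) Γ₀}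

lemma valuation_eq_max_of_valuation_star (h2 : V 2 = 1) (hω : V QuadraticAlgebra.omega = 1)
    {y : AdjoinSqrt d} (hy : V (star y) = V y) :
    V y = max (V (algebraMap F _ y.re)) (V (algebraMap F _ y.im)) := by
  have hstar : star y = algebraMap F _ y.re - algebraMap F _ y.im * QuadraticAlgebra.omega := by
    ext <;> simp
  have hre : V (algebraMap F _ y.re) = V (y + star y) := by
    rw [← one_mul (V (algebraMap F _ _)), ← h2, ← map_mul, hstar]
    nth_rw 2 [eq_re_add_im_mul_omega y]
    ring_nf
  have him : V (algebraMap F _ y.im) = V (y - star y) := by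
    rw [← one_mul (V (algebraMap F _ _)), ← h2, ← map_mul, ← mul_one (V _), ← hω, ← map_mul, hstar]
    nth_rw 2 [eq_re_add_im_mul_omega y]
    ring_nf
  refine le_antisymm ?_ (max_le ?_ ?_)
  · nth_rw 1 [eq_re_add_im_mul_omega y]
    refine (V.map_add _ _).trans_eq ?_
    rw [map_mul, hω, mul_one]
  · rw [hre]
    exact V.map_add_le le_rfl hy.le
  · rw [him]
    exact V.map_sub_le le_rfl hy.le

lemma le_valuation_of_valuation_star (hV : ∀ y, V (star y) = V y) (z : F) :
    V (algebraMap F _ (4 * z ^ 2)) ≤ V (algebraMap F _ (d - z ^ 2)) := by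
  set Z := algebraMap F (AdjoinSqrt d) z with hZ
  have hconj : V (QuadraticAlgebra.omega - Z) = V (QuadraticAlgebra.omega + Z) := by
    rw [← hV, star_sub, star_omega, hZ, star_algebraMap, ← V.map_neg]
    ring_nf
  have h2 : V (2 * Z) ≤ V (QuadraticAlgebra.omega - Z) := by
    rw [show 2 * Z = (QuadraticAlgebra.omega + Z) - (QuadraticAlgebra.omega - Z) by ring]
    exact V.map_sub_le hconj.ge le_rfl
  calc V (algebraMap F _ (4 * z ^ 2)) = V (2 * Z) ^ 2 := by
        rw [← map_pow, map_mul, map_pow, map_ofNat, ← hZ]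
        ring_nf
    _ ≤ V (QuadraticAlgebra.omega - Z) ^ 2 := pow_le_pow_left₀ zero_le h2 2
    _ = V (algebraMap F _ (d - z ^ 2)) := by
        rw [sq]
        nth_rw 2 [hconj]
        rw [← map_mul, map_sub, ← omega_sq, map_pow, ← hZ]
        ring_nf

end AdjoinSqrt

lemma TrivialSClassGroup.exists_valuation_eq_max {R F : Type*} [CommRing R] [IsDedekindDomain R]
    [Field F] [Algebra R F] [IsFractionRing R F] {S : Finset (HeightOneSpectrum R)}
    (hS : TrivialSClassGroup F S) {α β : F} (h : α ≠ 0 ∨ β ≠ 0) :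
    ∃ c : Fˣ, ∀ w ∉ S, w.valuation F (c : F) = max (w.valuation F α) (w.valuation F β) := by
  wlog hα : α ≠ 0 generalizing α β
  · obtain ⟨c, hc⟩ := this h.symm (h.resolve_left hα)
    exact ⟨c, fun w hw => by rw [hc w hw, max_comm]⟩
  have hne (w : HeightOneSpectrum R) : max (w.valuation F α) (w.valuation F β) ≠ 0 :=
    ((zero_lt_iff.2 ((w.valuation F).ne_zero_iff.2 hα)).trans_le (le_max_left _ _)).ne'
  have hfin : {w : HeightOneSpectrum R | max (w.valuation F α) (w.valuation F β) ≠ 1}.Finite := by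
    refine ((finite_valuation_ne_one (Units.mk0 α hα)).union
      (HeightOneSpectrum.Support.finite R β)).subset fun w hw => ?_
    by_contra hw'
    obtain ⟨hα1, hβ1⟩ := not_or.1 hw'
    replace hα1 : w.valuation F α = 1 := not_ne_iff.1 hα1
    exact hw (by rw [hα1, max_eq_left (not_lt.1 hβ1)])
  obtain ⟨c, hc⟩ := hS.exists_logValuation_eq
    (n := fun w => WithZero.log (max (w.valuation F α) (w.valuation F β)))
    (hfin.subset fun w hw h => hw (by simp [h]))
  exact ⟨c, fun w hw => by rw [← exp_logValuation, hc w hw, WithZero.exp_log (hne w)]⟩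

lemma mem_map_powMonoidHom_sUnits {R F : Type*} [CommRing R] [IsDedekindDomain R]
    [Field F] [Algebra R F] [IsFractionRing R F] {S : Finset (HeightOneSpectrum R)} {u : Fˣ}
    (hu : u ∈ sUnits F S) : u ∈ (sUnits F S).map (powMonoidHom 2) ↔ IsSquare (u : F) := by
  constructor
  · rintro ⟨y, -, rfl⟩
    exact ⟨y, by simp [sq]⟩
  · rintro ⟨y, hy⟩
    have hy0 : y ≠ 0 := by rintro rfl; simp at hy
    refine ⟨Units.mk0 y hy0, fun v hv => ?_, by ext; simp [hy, sq]⟩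
    have h : v.valuation F (u : F) = 1 := hu v hv
    rw [hy, ← sq, map_pow, pow_eq_one_iff, or_iff_left two_ne_zero] at h
    exact h

section QuadraticExtension

variable {F : Type*} [Field F] [NumberField F] {S : Finset (HeightOneSpectrum (𝓞 F))}
  {d : Fˣ} [Fact (∀ r : F, r ^ 2 ≠ d + 0 * r)]

variable (S d) in
/-- The norms of the `S`-units of `F(√d)`. -/
noncomputable def sUnitNorms : Subgroup Fˣ :=
  (sUnits (AdjoinSqrt (d : F)) (placesAbove (AdjoinSqrt (d : F)) S)).map
    (Units.map (QuadraticAlgebra.norm : AdjoinSqrt (d : F) →* F))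

lemma sUnitNorms_le_sUnits : sUnitNorms S d ≤ sUnits F S := by
  rintro _ ⟨x, hx, rfl⟩
  refine mem_sUnits.2 fun v hv => ?_
  obtain ⟨P, rfl⟩ := under_surjective F (AdjoinSqrt (d : F)) v
  rw [← valuation_algebraMap_eq_one_iff, Units.coe_map,
    QuadraticAlgebra.algebraMap_norm_eq_mul_star, map_mul, ← sqrtConj_apply,
    ← valuation_conjPlace, mem_sUnits.1 hx P (by rwa [mem_placesAbove]),
    mem_sUnits.1 hx _ (by rwa [mem_placesAbove, under_conjPlace]), one_mul]

lemma sUnitNorms_le_normGroup : sUnitNorms S d ≤ normGroup (d : F) := by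
  rintro _ ⟨x, -, rfl⟩
  refine ⟨(x : AdjoinSqrt (d : F)).re, (x : AdjoinSqrt (d : F)).im, ?_⟩
  rw [Units.coe_map, QuadraticAlgebra.norm_def]
  ring

/-- Hilbert's Theorem 90 for `S`-units, in the absence of `S`-ideal classes and ramification. -/
theorem exists_sUnit_mul_star_eq (hd : d ∈ sUnits F S) (h2 : ∀ v ∉ S, v.valuation F 2 = 1)
    (hS : TrivialSClassGroup F S) {x : (AdjoinSqrt (d : F))ˣ}
    (hx : x ∈ sUnits (AdjoinSqrt (d : F)) (placesAbove (AdjoinSqrt (d : F)) S))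
    (hx1 : QuadraticAlgebra.norm (x : AdjoinSqrt (d : F)) = 1) :
    ∃ y ∈ sUnits (AdjoinSqrt (d : F)) (placesAbove (AdjoinSqrt (d : F)) S),
      (x : AdjoinSqrt (d : F)) * star ↑y = y := by
  obtain ⟨y, hy0, hy⟩ := exists_mul_star_eq_of_norm_eq_one hx1
  obtain ⟨c, hc⟩ := hS.exists_valuation_eq_max (α := y.re) (β := y.im) (by
    by_contra! h
    exact hy0 (QuadraticAlgebra.ext h.1 h.2))
  have hc0 : algebraMap F (AdjoinSqrt (d : F)) c ≠ 0 := by simp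
  refine ⟨Units.mk0 (y / algebraMap F _ (c : F)) (div_ne_zero hy0 hc0), ?_, ?_⟩
  · refine mem_sUnits.2 fun P hP => ?_
    have hPS := mt mem_placesAbove.2 hP
    have hstar : P.valuation _ (star y) = P.valuation _ y := by
      conv_rhs => rw [← hy, map_mul, mem_sUnits.1 hx P hP, one_mul]
    have hω : P.valuation _ (QuadraticAlgebra.omega : AdjoinSqrt (d : F)) = 1 := by
      have h := (valuation_algebraMap_eq_one_iff (E := AdjoinSqrt (d : F)) P).2
        (mem_sUnits.1 hd _ hPS)
      rwa [← omega_sq, map_pow, pow_eq_one_iff, or_iff_left two_ne_zero] at h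
    have h2P : P.valuation (AdjoinSqrt (d : F)) 2 = 1 := by
      simpa only [map_ofNat] using
        (valuation_algebraMap_eq_one_iff (E := AdjoinSqrt (d : F)) P).2 (h2 _ hPS)
    obtain ⟨e, -, he⟩ := exists_valuation_algebraMap_eq_pow (F := F) P
    have hmono : Monotone fun x : ℤᵐ⁰ => x ^ e := fun _ _ h => pow_le_pow_left₀ zero_le h e
    have hyc : P.valuation _ y = P.valuation _ (algebraMap F (AdjoinSqrt (d : F)) c) := by
      rw [valuation_eq_max_of_valuation_star h2P hω hstar, he, he, he, hc _ hPS]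
      exact (hmono.map_max).symm
    rw [Units.val_mk0, map_div₀, hyc, div_self ((Valuation.ne_zero_iff _).2 hc0)]
  · rw [Units.val_mk0, star_div₀, star_algebraMap, ← mul_div_assoc, hy]

lemma exists_eq_mul_sq_of_norm_eq_sq (hd : d ∈ sUnits F S) (h2 : ∀ v ∉ S, v.valuation F 2 = 1)
    (hS : TrivialSClassGroup F S) {x : (AdjoinSqrt (d : F))ˣ}
    (hx : x ∈ sUnits (AdjoinSqrt (d : F)) (placesAbove (AdjoinSqrt (d : F)) S))
    {u : Fˣ} (hu : u ∈ sUnits F S)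
    (hxu : (u : F) ^ 2 = QuadraticAlgebra.norm (x : AdjoinSqrt (d : F))) :
    ∃ t ∈ sUnits F S, ∃ y ∈ sUnits (AdjoinSqrt (d : F)) (placesAbove (AdjoinSqrt (d : F)) S),
      x = Units.map (algebraMap F (AdjoinSqrt (d : F)) : F →* AdjoinSqrt (d : F)) t * y ^ 2 := by
  obtain ⟨y, hy, hxy⟩ := exists_sUnit_mul_star_eq hd h2 hS
    (mul_mem hx (inv_mem (map_mem_sUnits_placesAbove (E := AdjoinSqrt (d : F)) hu))) (by
      rw [Units.val_mul, map_mul, ← hxu, ← map_inv, Units.coe_map, MonoidHom.coe_coe,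
        QuadraticAlgebra.norm_algebraMap]
      simp)
  refine ⟨u * (Units.map (QuadraticAlgebra.norm : AdjoinSqrt (d : F) →* F) y)⁻¹,
    mul_mem hu (inv_mem (sUnitNorms_le_sUnits ⟨y, hy, rfl⟩)), y, hy, ?_⟩
  ext1
  have hu0 : algebraMap F (AdjoinSqrt (d : F)) u ≠ 0 := by simp
  have hy0 : (y : AdjoinSqrt (d : F)) ≠ 0 := y.ne_zero
  have hsy0 : star (y : AdjoinSqrt (d : F)) ≠ 0 := by simp
  rw [← map_inv, Units.val_mul, Units.coe_map, MonoidHom.coe_coe, Units.val_inv_eq_inv_val,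
    map_inv₀] at hxy
  rw [map_mul, map_inv, Units.val_mul, Units.val_mul, Units.val_inv_eq_inv_val,
    Units.coe_map, Units.coe_map, Units.coe_map, MonoidHom.coe_coe,
    QuadraticAlgebra.algebraMap_norm_eq_mul_star, Units.val_pow_eq_pow_val]
  field_simp at hxy ⊢
  rw [hxy]

theorem relIndex_sUnitNorms (hd : d ∈ sUnits F S) (h2 : ∀ v ∉ S, v.valuation F 2 = 1)
    (hS : TrivialSClassGroup F S) :
    (sUnitNorms S d).relIndex (sUnits F S) * 2 *
        2 ^ (Fintype.card (InfinitePlace (AdjoinSqrt (d : F))) +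
          (placesAbove (AdjoinSqrt (d : F)) S).card) =
      (2 ^ (Fintype.card (InfinitePlace F) + S.card)) ^ 2 := by
  rw [← relIndex_sq_sUnits, ← relIndex_sq_sUnits]
  refine relIndex_norm_mul_relIndex_sq (d := d)
    (ι := Units.map (algebraMap F (AdjoinSqrt (d : F)) : F →* AdjoinSqrt (d : F))) hd ?_ ?_
    sUnitNorms_le_sUnits ?_ ?_ ?_
  · rw [mem_map_powMonoidHom_sUnits hd]
    rintro ⟨r, hr⟩
    exact (Fact.out : ∀ r : F, r ^ 2 ≠ d + 0 * r) r (by rw [hr]; ring)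
  · rintro _ ⟨u, hu, rfl⟩
    exact map_mem_sUnits_placesAbove hu
  · intro u
    ext1
    exact QuadraticAlgebra.norm_algebraMap _
  · rintro x hx ⟨u, hu, hxu⟩
    exact exists_eq_mul_sq_of_norm_eq_sq hd h2 hS hx hu (congrArg Units.val hxu)
  · intro u hu
    rw [mem_map_powMonoidHom_sUnits hu, mem_map_powMonoidHom_sUnits (mul_mem hu hd),
      mem_map_powMonoidHom_sUnits (map_mem_sUnits_placesAbove hu)]
    exact isSquare_algebraMap_adjoinSqrt_iff

end QuadraticExtension

/-- The group of totally positive elements of `F`. -/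
def totallyPositive (F : Type*) [Field F] : Subgroup Fˣ where
  carrier := {x | ∀ τ : F →+* ℝ, 0 < τ x}
  one_mem' := by simp
  mul_mem' hx hy τ := by
    rw [Units.val_mul, map_mul]
    exact mul_pos (hx τ) (hy τ)
  inv_mem' hx τ := by
    rw [Units.val_inv_eq_inv_val, map_inv₀]
    exact inv_pos.2 (hx τ)

lemma mem_totallyPositive {F : Type*} [Field F] {x : Fˣ} :
    x ∈ totallyPositive F ↔ ∀ τ : F →+* ℝ, 0 < τ x := Iff.rfl

section NormIndex

variable {F : Type*} [Field F] [NumberField F] {S : Finset (HeightOneSpectrum (𝓞 F))} {d : Fˣ}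

section NonSquare

variable [Fact (∀ r : F, r ^ 2 ≠ d + 0 * r)]

lemma conjPlace_sqrtConj_ne {P : HeightOneSpectrum (𝓞 (AdjoinSqrt (d : F)))}
    (h : d ∈ localSquares ((P.under (𝓞 F)).valuation F)) : conjPlace (sqrtConj (d : F)) P ≠ P := by
  intro hP
  obtain ⟨z, -, hz⟩ := (mem_localSquares _).1 h
  refine absurd ((valuation_algebraMap_lt_iff P).2 hz) (not_lt.2 ?_)
  refine le_valuation_of_valuation_star (fun y => ?_) z
  nth_rw 1 [← hP]
  rw [valuation_conjPlace, sqrtConj_apply, star_star]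

open Classical in
lemma two_mul_card_le_card_placesAbove (S : Finset (HeightOneSpectrum (𝓞 F))) :
    2 * S.card ≤ (placesAbove (AdjoinSqrt (d : F)) S).card +
      (S.filter fun w => d ∉ localSquares (w.valuation F)).card := by
  rw [Finset.card_eq_sum_card_fiberwise (fun P hP => mem_placesAbove.1 hP), Finset.card_filter,
    ← Finset.sum_add_distrib, mul_comm, ← smul_eq_mul]
  refine Finset.card_nsmul_le_sum _ _ _ fun w hw => ?_
  obtain ⟨P, rfl⟩ := under_surjective F (AdjoinSqrt (d : F)) w
  have hP : P ∈ placesAbove (AdjoinSqrt (d : F)) S := mem_placesAbove.2 hw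
  beta_reduce
  split_ifs with hsplit
  swap
  · refine Nat.add_le_add_right (Finset.card_pos.2 ⟨P, ?_⟩) 1
    exact Finset.mem_filter.2 ⟨hP, rfl⟩
  · rw [add_zero, ← Finset.card_pair (conjPlace_sqrtConj_ne (hsplit))]
    refine Finset.card_le_card (Finset.insert_subset ?_ (Finset.singleton_subset_iff.2 ?_))
    · rw [Finset.mem_filter, mem_placesAbove, under_conjPlace]
      exact ⟨hw, rfl⟩
    · exact Finset.mem_filter.2 ⟨hP, rfl⟩

lemma comap_sqrtConj_ne (hpos : d ∈ totallyPositive F) (W : InfinitePlace (AdjoinSqrt (d : F))) :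
    W.comap (sqrtConj (d : F) : AdjoinSqrt (d : F) →+* AdjoinSqrt (d : F)) ≠ W := by
  intro h
  set ψ := W.embedding with hψ
  rw [← InfinitePlace.mk_embedding W, InfinitePlace.comap_mk, InfinitePlace.mk_eq_iff, ← hψ] at h
  have hψω : ψ (sqrtConj (d : F) QuadraticAlgebra.omega) = -ψ QuadraticAlgebra.omega := by
    rw [sqrtConj_apply, star_omega, map_neg]
  have hω0 : ψ QuadraticAlgebra.omega ≠ 0 := (map_ne_zero ψ).2 omega_ne_zero
  rcases h with h | h
  · exact hω0 (neg_eq_self.1 (hψω.symm.trans (RingHom.congr_fun h _)))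
  · have hreal : ComplexEmbedding.IsReal (ψ.comp (algebraMap F (AdjoinSqrt (d : F)))) := by
      refine ComplexEmbedding.isReal_iff.2 (RingHom.ext fun x => ?_)
      simpa using RingHom.congr_fun h (algebraMap F _ x)
    have hre : (ψ QuadraticAlgebra.omega).re = 0 := by
      have := congrArg Complex.re (RingHom.congr_fun h QuadraticAlgebra.omega)
      rw [ComplexEmbedding.conjugate_coe_eq, Complex.conj_re, RingHom.comp_apply,
        RingHom.coe_coe, hψω, Complex.neg_re] at this
      linarith
    have hsq := hreal.coe_embedding_apply d
    rw [RingHom.comp_apply, ← omega_sq, map_pow] at hsq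
    have := congrArg Complex.re hsq
    rw [Complex.ofReal_re, sq, Complex.mul_re, hre] at this
    nlinarith [mem_totallyPositive.1 hpos hreal.embedding,
      mul_self_nonneg (ψ QuadraticAlgebra.omega).im]

open Classical in
lemma two_mul_card_infinitePlace_le (hpos : d ∈ totallyPositive F) :
    2 * Fintype.card (InfinitePlace F) ≤ Fintype.card (InfinitePlace (AdjoinSqrt (d : F))) := by
  rw [← Finset.card_univ, ← Finset.card_univ, Finset.card_eq_sum_card_fiberwise
    (f := fun W : InfinitePlace (AdjoinSqrt (d : F)) => W.comap (algebraMap F _))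
    (t := Finset.univ) (by simp), mul_comm, ← smul_eq_mul]
  refine Finset.card_nsmul_le_sum _ _ _ fun w _ => ?_
  obtain ⟨W, rfl⟩ := InfinitePlace.comap_surjective (K := AdjoinSqrt (d : F)) (k := F) w
  rw [← Finset.card_pair (comap_sqrtConj_ne hpos W)]
  refine Finset.card_le_card (Finset.insert_subset ?_ (by simp))
  simp only [Finset.mem_filter, Finset.mem_univ, true_and]
  rw [← InfinitePlace.comap_comp]
  exact congrArg W.comap (RingHom.ext (sqrtConj (d : F)).commutes)

end NonSquare

lemma relIndex_normGroup_ne_zero (d : Fˣ) (S : Finset (HeightOneSpectrum (𝓞 F))) :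
    (normGroup (d : F)).relIndex (sUnits F S) ≠ 0 := by
  have hsq : (sUnits F S).map (powMonoidHom 2) ≤ normGroup (d : F) := by
    rintro _ ⟨x, -, rfl⟩
    exact square_le_normGroup _ ⟨x, sq x⟩
  refine ne_zero_of_dvd_ne_zero ?_ (Subgroup.relIndex_dvd_of_le_left _ hsq)
  rw [relIndex_sq_sUnits]
  positivity

variable (hdsq : ¬ IsSquare (d : F)) (hd : d ∈ sUnits F S) (h2 : ∀ v ∉ S, v.valuation F 2 = 1)
  (hS : TrivialSClassGroup F S)
include hdsq hd h2 hS

open Classical in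
theorem relIndex_normGroup_le (hpos : d ∈ totallyPositive F) :
    (normGroup (d : F)).relIndex (sUnits F S) * 2 ≤
      2 ^ (S.filter fun w => d ∉ localSquares (w.valuation F)).card := by
  have := fact_ne_of_not_isSquare hdsq
  have hindex := relIndex_sUnitNorms hd h2 hS
  have hfin := two_mul_card_le_card_placesAbove (d := d) S
  have hinf := two_mul_card_infinitePlace_le hpos
  have hne : (sUnitNorms S d).relIndex (sUnits F S) ≠ 0 := fun h0 => by
    rw [h0, zero_mul, zero_mul] at hindex
    exact (by positivity : (2 ^ (Fintype.card (InfinitePlace F) + S.card)) ^ 2 ≠ 0) hindex.symm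
  refine (Nat.mul_le_mul_right 2 (Subgroup.relIndex_le_of_le_left
    sUnitNorms_le_normGroup hne)).trans ?_
  refine le_of_mul_le_mul_right ?_ (Nat.two_pow_pos
    (Fintype.card (InfinitePlace (AdjoinSqrt (d : F))) + (placesAbove (AdjoinSqrt (d : F)) S).card))
  rw [hindex, ← pow_mul, ← pow_add]
  exact Nat.pow_le_pow_right two_pos (by lia)

end NormIndex

/-! ### Elements that are local squares everywhere -/

section NotLocalSquare

variable {F : Type*} [Field F] [NumberField F]

lemma exists_sUnits_trivialSClassGroup (T : Finset (HeightOneSpectrum (𝓞 F))) (X : Finset Fˣ) :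
    ∃ S : Finset (HeightOneSpectrum (𝓞 F)), T ⊆ S ∧ TrivialSClassGroup F S ∧
      (∀ v ∉ S, v.valuation F 2 = 1) ∧ ∀ x ∈ X, x ∈ sUnits F S := by
  classical
  obtain ⟨S₀, hS₀⟩ := exists_trivialSClassGroup (F := F) (R := 𝓞 F)
  have hfin : (⋃ x ∈ insert (Units.mk0 2 two_ne_zero) X,
      {v : HeightOneSpectrum (𝓞 F) | v.valuation F (x : F) ≠ 1}).Finite :=
    (Finset.finite_toSet _).biUnion fun x _ => finite_valuation_ne_one x
  have key {x : Fˣ} (hx : x ∈ insert (Units.mk0 2 two_ne_zero) X) {v : HeightOneSpectrum (𝓞 F)}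
      (hv : v ∉ S₀ ∪ T ∪ hfin.toFinset) : v.valuation F (x : F) = 1 := by
    by_contra h
    exact hv (Finset.mem_union_right _ (hfin.mem_toFinset.2 (Set.mem_biUnion hx h)))
  refine ⟨S₀ ∪ T ∪ hfin.toFinset, by grind, hS₀.mono (by grind), fun v hv => ?_, fun x hx => ?_⟩
  · exact key (Finset.mem_insert_self _ _) hv
  · exact mem_sUnits.2 fun v hv => key (Finset.mem_insert_of_mem hx) hv

theorem isSquare_of_forall_mem_localSquares {x : Fˣ} (hpos : x ∈ totallyPositive F)
    (hx : ∀ v : HeightOneSpectrum (𝓞 F), x ∈ localSquares (v.valuation F)) : IsSquare (x : F) := by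
  classical
  by_contra hsq
  obtain ⟨S, -, hS, h2, hxS⟩ := exists_sUnits_trivialSClassGroup ∅ {x}
  have h := relIndex_normGroup_le hsq (hxS x (Finset.mem_singleton_self x)) h2 hS hpos
  rw [Finset.filter_false_of_mem fun w _ => not_not.2 (hx w), Finset.card_empty] at h
  have := relIndex_normGroup_ne_zero x S
  lia

lemma exists_natCast_valuation_lt_one (S : Finset (HeightOneSpectrum (𝓞 F))) :
    ∃ n : ℕ, 1 < n ∧ ∀ v ∈ S, v.valuation F (n : F) < 1 := by
  refine ⟨2 * ∏ v ∈ S, Ideal.absNorm v.asIdeal, ?_, fun v hv => ?_⟩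
  · have : 0 < ∏ v ∈ S, Ideal.absNorm v.asIdeal := Finset.prod_pos fun v _ =>
      Nat.pos_of_ne_zero (Ideal.absNorm_eq_zero_iff.not.2 v.ne_bot)
    lia
  · rw [← map_natCast (algebraMap (𝓞 F) F), HeightOneSpectrum.valuation_lt_one_iff_mem]
    obtain ⟨k, hk⟩ := (Finset.dvd_prod_of_mem (fun v => Ideal.absNorm v.asIdeal) hv).mul_left 2
    rw [hk, Nat.cast_mul]
    exact Ideal.mul_mem_right _ _ (Ideal.absNorm_mem _)

instance infinite_heightOneSpectrum : Infinite (HeightOneSpectrum (𝓞 F)) := by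
  refine Infinite.of_not_fintype fun _ => ?_
  obtain ⟨n, hn, h⟩ := exists_natCast_valuation_lt_one (F := F) Finset.univ
  have hunit : ¬ IsUnit ((n + 1 : ℕ) : 𝓞 F) := by
    rw [← Ideal.span_singleton_eq_top, ← Ideal.absNorm_eq_one_iff, Ideal.absNorm_span_natCast]
    exact (one_lt_pow₀ (by lia) Module.finrank_pos.ne').ne'
  obtain ⟨P, hP, hnP⟩ := exists_max_ideal_of_mem_nonunits hunit
  have hbot : P ≠ ⊥ := by
    rintro rfl
    exact Nat.cast_ne_zero.2 n.succ_ne_zero (Ideal.mem_bot.1 hnP)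
  have hn' := h ⟨P, hP.isPrime, hbot⟩ (Finset.mem_univ _)
  rw [← map_natCast (algebraMap (𝓞 F) F), HeightOneSpectrum.valuation_lt_one_iff_mem] at hn'
  refine hP.ne_top (P.eq_top_of_unit_mem 1 1 ?_ (one_mul 1))
  simpa using P.sub_mem hnP hn'

lemma exists_totallyPositive_valuation_sub_lt (S : Finset (HeightOneSpectrum (𝓞 F))) (x : Fˣ)
    {γ : HeightOneSpectrum (𝓞 F) → ℤᵐ⁰} (hγ : ∀ v ∈ S, γ v ≠ 0) :
    ∃ y ∈ totallyPositive F, ∀ v ∈ S, v.valuation F ((y : F) - x) < γ v := by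
  obtain ⟨n, hn, hnS⟩ := exists_natCast_valuation_lt_one S
  have hfin : ∀ᶠ k : ℕ in Filter.atTop, ∀ v ∈ S, v.valuation F (n : F) ^ k < γ v := by
    refine (Filter.eventually_all_finset S).2 fun v hv => ?_
    obtain ⟨k, hk⟩ := exists_pow_lt₀ (hnS v hv) (Units.mk0 _ (hγ v hv))
    exact (Filter.eventually_ge_atTop k).mono fun m hm =>
      (pow_le_pow_right_of_le_one' (hnS v hv).le hm).trans_lt hk
  have hinf : ∀ᶠ k : ℕ in Filter.atTop, ∀ τ : F →+* ℝ, -τ x < (n : ℝ) ^ k :=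
    Filter.eventually_all.2 fun τ =>
      (tendsto_pow_atTop_atTop_of_one_lt (by exact_mod_cast hn)).eventually_gt_atTop _
  have hne : ∀ᶠ k : ℕ in Filter.atTop, (n : F) ^ k ≠ -x := by
    have hinj : Function.Injective fun k : ℕ => (n : F) ^ k := fun k l hkl =>
      Nat.pow_right_injective hn (Nat.cast_injective (R := F) (by simpa using hkl))
    rw [← Nat.cofinite_eq_atTop]
    exact hinj.tendsto_cofinite.eventually (Filter.eventually_cofinite_ne _)
  obtain ⟨k, hkfin, hkinf, hk0⟩ := (hfin.and (hinf.and hne)).exists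
  refine ⟨Units.mk0 (x + n ^ k) fun h => hk0 (eq_neg_of_add_eq_zero_right h), ?_, fun v hv => ?_⟩
  · refine mem_totallyPositive.2 fun τ => ?_
    rw [Units.val_mk0, map_add, map_pow, map_natCast]
    linarith [hkinf τ]
  · simpa using hkfin v hv

/-- The factor `g` is used to make an element which is a local square outside `S` into one that is
a local square in `S` as well, at the cost of an odd valuation at a further place. -/
lemma exists_totallyPositive_odd_logValuation (S : Finset (HeightOneSpectrum (𝓞 F)))
    {w : HeightOneSpectrum (𝓞 F)} (hw : w ∉ S) :
    ∃ g ∈ totallyPositive F, (∀ v ∈ S, g ∈ localSquares (v.valuation F)) ∧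
      Odd (logValuation (w.valuation F) g) := by
  classical
  obtain ⟨ϖ, hϖ⟩ := w.valuation_exists_uniformizer F
  have hϖ0 : ϖ ≠ 0 := by
    rintro rfl
    exact WithZero.exp_ne_zero (hϖ.symm.trans (map_zero _))
  obtain ⟨x, hx⟩ :=
    exists_unit_valuation_sub_lt (insert w S) (Function.update 1 w (Units.mk0 ϖ hϖ0))
  obtain ⟨g, hgpos, hg⟩ := exists_totallyPositive_valuation_sub_lt (insert w S) x
    (γ := fun v => v.valuation F (4 * (x : F))) (by simp)
  refine ⟨g, hgpos, fun v hv => ?_, ?_⟩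
  · have hvw : v ≠ w := fun h => hw (h ▸ hv)
    have hxv := hx v (Finset.mem_insert_of_mem hv)
    rw [Function.update_of_ne hvw] at hxv
    exact mem_localSquares_of_close (mem_localSquares_of_close (one_mem _) hxv)
      (hg v (Finset.mem_insert_of_mem hv))
  · have hxw := hx w (Finset.mem_insert_self w S)
    rw [Function.update_self] at hxw
    have := (valuation_eq_of_sub_lt_four (hg w (Finset.mem_insert_self w S))).trans
      (valuation_eq_of_sub_lt_four hxw)
    rw [logValuation_eq_iff.2 (this.trans hϖ)]
    exact odd_neg_one

/-- Over `F(√e)` the hypotheses make `x` totally positive and a local square everywhere. -/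
lemma isSquare_or_isSquare_mul_of_localSquares {x e : Fˣ} (he : ¬ IsSquare (e : F))
    (hpos : x * e ∈ totallyPositive F) (hloc : ∀ v : HeightOneSpectrum (𝓞 F),
      x ∈ localSquares (v.valuation F) ∨ x * e ∈ localSquares (v.valuation F)) :
    IsSquare (x : F) ∨ IsSquare (x * e : F) := by
  have := fact_ne_of_not_isSquare he
  set ι : Fˣ →* (AdjoinSqrt (e : F))ˣ := Units.map (algebraMap F (AdjoinSqrt (e : F)) : F →* _)
  have hω : ι e = Units.mk0 QuadraticAlgebra.omega omega_ne_zero ^ 2 := Units.ext omega_sq.symm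
  refine isSquare_algebraMap_adjoinSqrt_iff.1
    (isSquare_of_forall_mem_localSquares (x := ι x) (mem_totallyPositive.2 fun τ => ?_) fun P => ?_)
  · have hτ : 0 < τ (ι x) * τ (ι e) := by
      simpa [ι] using mem_totallyPositive.1 hpos (τ.comp (algebraMap F _))
    rw [hω, Units.val_pow_eq_pow_val, map_pow] at hτ
    exact pos_of_mul_pos_left hτ (sq_nonneg _)
  · refine (hloc (P.under (𝓞 F))).elim map_mem_localSquares fun h => ?_
    have := map_mem_localSquares (E := AdjoinSqrt (e : F)) h
    rwa [map_mul, (Subgroup.mul_mem_cancel_right _ _)] at this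
    exact hω ▸ sq_mem_localSquares _ _

theorem exists_notMem_localSquares {x : Fˣ} (hx : ¬ IsSquare (x : F))
    (S : Finset (HeightOneSpectrum (𝓞 F))) : ∃ v ∉ S, x ∉ localSquares (v.valuation F) := by
  classical
  by_contra! hloc
  obtain ⟨w, hw⟩ := Infinite.exists_notMem_finset (S ∪ (finite_valuation_ne_one x).toFinset)
  obtain ⟨hwS, hwx⟩ : w ∉ S ∧ logValuation (w.valuation F) x = 0 := by
    simpa [logValuation_eq_zero_iff] using hw
  obtain ⟨g, hgpos, hgS, hgw⟩ := exists_totallyPositive_odd_logValuation S hwS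
  have hxx : x * (x * g) = x ^ 2 * g := by rw [sq, mul_assoc]
  have hodd : Odd (logValuation (w.valuation F) (x * g)) := by simpa [hwx] using hgw
  have hodd' : Odd (logValuation (w.valuation F) (x * (x * g))) := by simpa [hwx] using hgw
  refine (isSquare_or_isSquare_mul_of_localSquares (not_isSquare_of_odd_logValuation hodd)
    (mem_totallyPositive.2 fun τ => ?_) fun v => ?_).elim hx ?_
  · rw [hxx, Units.val_mul, map_mul, Units.val_pow_eq_pow_val, map_pow]
    have : τ x ≠ 0 := (map_ne_zero τ).2 x.ne_zero
    have := mem_totallyPositive.1 hgpos τ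
    positivity
  · by_cases hv : v ∈ S
    · exact Or.inr (hxx ▸ mul_mem (sq_mem_localSquares _ x) (hgS v hv))
    · exact Or.inl (hloc v hv)
  · exact mod_cast not_isSquare_of_odd_logValuation hodd'

end NotLocalSquare

/-! ### The index of the local squares -/

section Index

lemma relIndex_le_natCard {G ι : Type*} [Group G] [Finite ι] {H T : Subgroup G} (f : G → ι)
    (hf : ∀ x ∈ T, ∀ y ∈ T, f x = f y → x⁻¹ * y ∈ H) :
    H.relIndex T ≤ Nat.card ι ∧ H.relIndex T ≠ 0 := by
  let g : T ⧸ H.subgroupOf T → ι := fun q => f (q.out : T)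
  have hg : Function.Injective g := fun p q hpq => by
    rw [← QuotientGroup.out_eq' p, ← QuotientGroup.out_eq' q, QuotientGroup.eq,
      Subgroup.mem_subgroupOf]
    simpa using hf _ p.out.2 _ q.out.2 hpq
  have := Finite.of_injective g hg
  exact ⟨Nat.card_le_card_of_injective g hg, Subgroup.index_ne_zero_of_finite⟩

lemma index_le_natCard {G ι : Type*} [Group G] [Finite ι] {H : Subgroup G} (f : G → ι)
    (hf : ∀ x y, f x = f y → x⁻¹ * y ∈ H) : H.index ≤ Nat.card ι ∧ H.index ≠ 0 := by
  simpa using relIndex_le_natCard (H := H) (T := ⊤) f fun x _ y _ => hf x y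

lemma relIndex_map_powMonoidHom_sup {G : Type*} [CommGroup G] {U T : Subgroup G} (hUT : U ≤ T)
    (hU : U.relIndex T ≠ 0) (n : ℕ) :
    (T.map (powMonoidHom n) ⊔ U).relIndex T = U.relIndex (T ⊓ U.comap (powMonoidHom n)) := by
  have hpow : T.map (powMonoidHom n) ≤ T := by
    rintro _ ⟨x, hx, rfl⟩
    exact pow_mem hx n
  have hU' : U ≤ T ⊓ U.comap (powMonoidHom n) := le_inf hUT fun x hx => pow_mem hx n
  have h₁ := Subgroup.relIndex_mul_relIndex U _ T le_sup_right (sup_le hpow hUT)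
  have h₂ := Subgroup.relIndex_mul_relIndex U _ T hU' inf_le_left
  rw [Subgroup.relIndex_sup_right, ← Subgroup.relIndex_comap] at h₁
  rw [Subgroup.inf_relIndex_left, mul_comm] at h₂
  refine Nat.eq_of_mul_eq_mul_left (Nat.pos_of_ne_zero ?_) (h₁.trans h₂.symm)
  exact left_ne_zero_of_mul (h₁.trans_ne hU)

end Index

section Residues

lemma valuation_sub_one_lt_or_add_one_lt {F Γ : Type*} [Field F]
    [LinearOrderedCommGroupWithZero Γ] (v : Valuation F Γ) {x : F} (hx : v (x ^ 2 - 1) < v 4) :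
    v (x - 1) < v 2 ∨ v (x + 1) < v 2 := by
  rw [valuation_four, show x ^ 2 - 1 = (x - 1) * (x + 1) by ring, map_mul] at hx
  contrapose! hx
  exact mul_le_mul' hx.1 hx.2

variable {R F : Type*} [CommRing R] [IsDedekindDomain R] [Field F] [Algebra R F]
  [IsFractionRing R F] (w : HeightOneSpectrum R)

/-- The ball of radius `exp m` breaks up into at most `#(R ⧸ 𝔭 ^ n)` balls of radius
`exp (m - n)`. -/
lemma exists_map_quotient_pow (m : ℤ) (n : ℕ) :
    ∃ f : F → R ⧸ w.asIdeal ^ n, ∀ x y : F, w.valuation F x ≤ WithZero.exp m →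
      w.valuation F y ≤ WithZero.exp m → f x = f y →
      w.valuation F (x - y) ≤ WithZero.exp (m - n) := by
  set v := w.valuation F
  obtain ⟨π, hπ⟩ := w.valuation_exists_uniformizer F
  set c : F := π ^ (-m)
  have hc : v c = WithZero.exp m := by simp [c, v, hπ, ← WithZero.exp_zsmul]
  have hc0 : c ≠ 0 := by
    rintro h
    exact WithZero.exp_ne_zero (hc.symm.trans (by rw [h, map_zero]))
  have hrep (x : F) : ∃ r : R ⧸ w.asIdeal ^ n, v x ≤ WithZero.exp m →
      ∃ s : R, Ideal.Quotient.mk _ s = r ∧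
        v (algebraMap R F s - x / c) < WithZero.exp (-n : ℤ) := by
    by_cases hx : v x ≤ WithZero.exp m
    · have hx' : v (x / c) ≤ 1 := by
        rw [map_div₀, hc]
        exact div_le_one_of_le₀ hx zero_le
      obtain ⟨s, hs⟩ := w.exists_valuation_sub_lt_of_integer hx'
        (Units.mk0 (WithZero.exp (-n : ℤ)) WithZero.exp_ne_zero)
      exact ⟨_, fun _ => ⟨s, rfl, hs⟩⟩
    · exact ⟨0, fun h => absurd h hx⟩
  choose f hf using hrep
  refine ⟨f, fun x y hx hy hxy => ?_⟩
  obtain ⟨s, hs, hsx⟩ := hf x hx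
  obtain ⟨t, ht, hty⟩ := hf y hy
  have hst : v (algebraMap R F (s - t)) ≤ WithZero.exp (-n : ℤ) := by
    rwa [w.valuation_of_algebraMap, w.intValuation_le_pow_iff_mem, ← Ideal.Quotient.eq, hs, ht]
  have hsplit : x - y = c * (algebraMap R F (s - t) - (algebraMap R F s - x / c) +
      (algebraMap R F t - y / c)) := by
    rw [map_sub]
    field_simp
    ring
  rw [hsplit, map_mul, hc, sub_eq_add_neg m, WithZero.exp_add]
  exact mul_le_mul_right (v.map_add_le (v.map_sub_le hst hsx.le) hty.le) _

end Residues

section LocalIndex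

variable {F : Type*} [Field F] [NumberField F] (w : HeightOneSpectrum (𝓞 F))

lemma natCard_quotient_pow (n : ℕ) :
    Nat.card (𝓞 F ⧸ w.asIdeal ^ n) = Ideal.absNorm w.asIdeal ^ n := by
  rw [← map_pow, Ideal.absNorm_apply, Submodule.cardQuot_apply]

instance finite_quotient_pow (n : ℕ) : Finite (𝓞 F ⧸ w.asIdeal ^ n) :=
  Ideal.finiteQuotientOfFreeOfNeBot _ (pow_ne_zero _ w.ne_bot)

/-- The units of the valuation ring of `w`. -/
noncomputable abbrev localUnits : Subgroup Fˣ := (w.valuation F).valuationSubring.unitGroup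

lemma index_localUnits_sup_localSquares :
    (localUnits w ⊔ localSquares (w.valuation F)).index ≤ 2 ∧
      (localUnits w ⊔ localSquares (w.valuation F)).index ≠ 0 := by
  set v := w.valuation F
  have h := index_le_natCard (H := localUnits w ⊔ localSquares v)
    (fun x => decide (Even (logValuation v x))) fun x y hxy => ?_
  · simpa using h
  · obtain ⟨k, hk⟩ : Even (logValuation v (x⁻¹ * y)) := by
      rw [logValuation_mul, logValuation_inv, Int.even_add, even_neg]
      simpa using hxy
    obtain ⟨c, hc⟩ : ∃ c : Fˣ, v c = WithZero.exp (-1 : ℤ) := by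
      obtain ⟨c, hc⟩ := w.valuation_exists_uniformizer F
      refine ⟨Units.mk0 c ?_, hc⟩
      rintro rfl
      exact WithZero.exp_ne_zero (hc.symm.trans (map_zero _))
    have hunit : x⁻¹ * y * (c ^ k) ^ 2 ∈ localUnits w := by
      rw [Valuation.mem_unitGroup_iff, ← logValuation_eq_zero_iff, logValuation_mul,
        logValuation_pow, logValuation_zpow, logValuation_eq_iff.2 hc, hk]
      push_cast
      ring
    have hsplit : x⁻¹ * y = (x⁻¹ * y * (c ^ k) ^ 2) * (c ^ k)⁻¹ ^ 2 := by
      rw [mul_assoc, ← mul_pow, mul_inv_cancel, one_pow, mul_one]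
    rw [hsplit]
    exact Subgroup.mul_mem_sup hunit (sq_mem_localSquares _ _)

variable {w}

lemma inv_mul_mem_unitsNearOne {x y : Fˣ} (hx : w.valuation F x = 1)
    (hxy : w.valuation F ((x : F) - y) < w.valuation F 4) :
    x⁻¹ * y ∈ unitsNearOne (w.valuation F) := by
  have hsplit : ((x⁻¹ * y : Fˣ) : F) - 1 = (y - x) * (x : F)⁻¹ := by
    push_cast
    field_simp
  rwa [mem_unitsNearOne, hsplit, map_mul, map_inv₀, hx, inv_one, mul_one, Valuation.map_sub_swap]

lemma unitsNearOne_le_localUnits : unitsNearOne (w.valuation F) ≤ localUnits w := fun x hx => by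
  rw [Valuation.mem_unitGroup_iff, ← map_one (w.valuation F)]
  exact valuation_eq_of_sub_lt_four (by rwa [mul_one])

variable {e : ℕ} (he : w.valuation F 2 = WithZero.exp (-e : ℤ))
include he

lemma valuation_four_eq_exp : w.valuation F 4 = WithZero.exp (-(2 * e) : ℤ) := by
  rw [valuation_four, he, ← WithZero.exp_add]
  ring_nf

lemma relIndex_unitsNearOne_localUnits_ne_zero :
    (unitsNearOne (w.valuation F)).relIndex (localUnits w) ≠ 0 := by
  obtain ⟨f, hf⟩ := exists_map_quotient_pow (F := F) w 0 (2 * e + 1)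
  refine (relIndex_le_natCard (fun x : Fˣ => f x) fun x hx y hy hxy => ?_).2
  rw [Valuation.mem_unitGroup_iff] at hx hy
  refine inv_mul_mem_unitsNearOne hx ((hf x y ?_ ?_ hxy).trans_lt ?_)
  · simp [hx]
  · simp [hy]
  · rw [valuation_four_eq_exp he, WithZero.exp_lt_exp]
    push_cast
    linarith

/-- A unit whose square is `1` modulo `4𝔭` is `±1` modulo `2𝔭`; this pins it down up to sign and
one of the residues modulo `𝔭 ^ e`. -/
lemma relIndex_unitsNearOne_comap_sq_le :
    (unitsNearOne (w.valuation F)).relIndex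
      (localUnits w ⊓ (unitsNearOne (w.valuation F)).comap (powMonoidHom 2)) ≤
      2 * Ideal.absNorm w.asIdeal ^ e := by
  classical
  set v := w.valuation F
  set s : Fˣ → Fˣ := fun x => if v ((x : F) - 1) < v 2 then 1 else -1
  have hs (x : Fˣ) : v (s x) = 1 := by
    simp only [s]
    split_ifs <;> simp
  have hnear (x : Fˣ) (hx : x ^ 2 ∈ unitsNearOne v) :
      v ((s x * x : F) - 1) ≤ WithZero.exp (-(e + 1) : ℤ) := by
    have hlt : v ((s x * x : F) - 1) < WithZero.exp (-e : ℤ) := by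
      rw [← he]
      by_cases hx1 : v ((x : F) - 1) < v 2
      · simp [s, hx1]
      · have hneg : (s x * x : F) - 1 = -(x + 1) := by
          simp [s, hx1]
          ring
        rw [hneg, Valuation.map_neg]
        exact (valuation_sub_one_lt_or_add_one_lt v (mod_cast hx)).resolve_left hx1
    rw [← WithZero.lt_mul_exp_iff_le WithZero.exp_ne_zero, ← WithZero.exp_add]
    simpa using hlt
  obtain ⟨f, hf⟩ := exists_map_quotient_pow (F := F) w (-(e + 1)) e
  have h := relIndex_le_natCard (H := unitsNearOne v)
    (T := localUnits w ⊓ (unitsNearOne v).comap (powMonoidHom 2))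
    (fun x => (decide (v ((x : F) - 1) < v 2), f (s x * x - 1))) fun x hx y hy hxy => ?_
  · simpa [natCard_quotient_pow] using h.1
  · obtain ⟨hdec, hfxy⟩ := Prod.ext_iff.1 hxy
    have hsxy : s x = s y := by simp only [s, decide_eq_decide.1 hdec]
    have hdist := hf _ _ (hnear x hx.2) (hnear y hy.2) hfxy
    rw [sub_sub_sub_cancel_right, hsxy, ← mul_sub, map_mul, hs, one_mul] at hdist
    refine inv_mul_mem_unitsNearOne (v.mem_unitGroup_iff _ _ |>.1 hx.1) (hdist.trans_lt ?_)
    rw [valuation_four_eq_exp he, WithZero.exp_lt_exp]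
    linarith

theorem relIndex_localSquares_localUnits_le :
    (localSquares (w.valuation F)).relIndex (localUnits w) ≤ 2 * Ideal.absNorm w.asIdeal ^ e ∧
      (localSquares (w.valuation F)).relIndex (localUnits w) ≠ 0 := by
  set v := w.valuation F
  have hfin := relIndex_unitsNearOne_localUnits_ne_zero he
  have hle : (localUnits w).map (powMonoidHom 2) ⊔ unitsNearOne v ≤ localSquares v := by
    refine sup_le_sup_right ?_ _
    rintro _ ⟨x, -, rfl⟩
    exact ⟨x, sq x⟩
  have hpos : ((localUnits w).map (powMonoidHom 2) ⊔ unitsNearOne v).relIndex (localUnits w) ≠ 0 :=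
    mt (Subgroup.relIndex_eq_zero_of_le_left le_sup_right) hfin
  refine ⟨(Subgroup.relIndex_le_of_le_left hle hpos).trans ?_,
    mt (Subgroup.relIndex_eq_zero_of_le_left hle) hpos⟩
  rw [relIndex_map_powMonoidHom_sup unitsNearOne_le_localUnits hfin]
  exact relIndex_unitsNearOne_comap_sq_le he

theorem index_localSquares_le :
    (localSquares (w.valuation F)).index ≤ 4 * Ideal.absNorm w.asIdeal ^ e ∧
      (localSquares (w.valuation F)).index ≠ 0 := by
  obtain ⟨hunit, hunit0⟩ := relIndex_localSquares_localUnits_le he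
  obtain ⟨htwo, htwo0⟩ := index_localUnits_sup_localSquares w
  rw [← Subgroup.relIndex_mul_index
    (le_sup_right : localSquares (w.valuation F) ≤ localUnits w ⊔ _), Subgroup.relIndex_sup_right]
  exact ⟨(Nat.mul_le_mul hunit htwo).trans_eq (by ring), mul_ne_zero hunit0 htwo0⟩

end LocalIndex

/-! ### The local-global principle for conics -/

section OddNorms

variable {F Γ₀ : Type*} [Field F] [CharZero F] [LinearOrderedCommGroupWithZero Γ₀]
  {v : Valuation F Γ₀}

lemma valuation_sq_sub_mul_sq_eq_max (h2 : v 2 = 1) {c : Fˣ} (hc : c ∉ localSquares v) (y z : F) :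
    v (y ^ 2 - c * z ^ 2) = max (v (y ^ 2)) (v (c * z ^ 2)) := by
  refine (v.map_sub _ _).eq_of_not_lt fun hlt => hc ?_
  have hz : z ≠ 0 := by
    rintro rfl
    simp at hlt
  have heq : v (y ^ 2) = v (c * z ^ 2) := by
    by_contra hne
    rw [sub_eq_add_neg] at hlt
    exact hlt.ne (by rw [v.map_add_of_distinct_val (by rwa [v.map_neg]), v.map_neg])
  have hy : y ≠ 0 := by
    rintro rfl
    simp [hz] at heq
  refine (mem_localSquares v).2 ⟨y / z, div_ne_zero hy hz, ?_⟩
  have hz2 : 0 < v (z ^ 2) := by simp [zero_lt_iff, hz]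
  rw [← mul_lt_mul_iff_left₀ hz2, ← map_mul, ← map_mul, v.map_mul (4 * _) _, v.map_mul 4 _,
    valuation_four, h2, one_mul, one_mul, ← map_mul, div_pow, sub_mul, div_mul_cancel₀ _
    (pow_ne_zero 2 hz), v.map_sub_swap]
  simpa [heq] using hlt

lemma exists_normGroup_of_mem_localNorms {c : F} {x : Fˣ} (hx : x ∈ localNorms v c) :
    ∃ n ∈ normGroup c, v (n : F) = v x ∧ (n ∈ localSquares v → x ∈ localSquares v) := by
  obtain ⟨n, hn, h⟩ := (mem_sup_unitsNearOne v).1 hx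
  exact ⟨n, hn, (valuation_eq_of_sub_lt_four h).symm, fun hsq => mem_localSquares_of_close hsq h⟩

end OddNorms

section OddNormsDiscrete

variable {F : Type*} [Field F] [CharZero F] {v : Valuation F ℤᵐ⁰} {c x : Fˣ}

lemma even_logValuation_of_mem_localNorms (h2 : v 2 = 1) (hc : c ∉ localSquares v)
    (hc_even : Even (logValuation v c)) (hx : x ∈ localNorms v (c : F)) :
    Even (logValuation v x) := by
  obtain ⟨n, ⟨y, z, hn⟩, hnx, -⟩ := exists_normGroup_of_mem_localNorms hx
  have hmax := valuation_sq_sub_mul_sq_eq_max h2 hc y z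
  rw [← hn, hnx] at hmax
  rcases max_choice (v (y ^ 2)) (v (c * z ^ 2)) with h | h <;> rw [h] at hmax
  · have hy : y ≠ 0 := by
      rintro rfl
      simp at hmax
    have : logValuation v x = logValuation v (Units.mk0 y hy ^ 2) := by
      rw [logValuation_eq_iff, exp_logValuation, hmax]
      rfl
    simp [this, logValuation_pow]
  · have hz : z ≠ 0 := by
      rintro rfl
      simp at hmax
    have : logValuation v x = logValuation v (c * Units.mk0 z hz ^ 2) := by
      rw [logValuation_eq_iff, exp_logValuation, hmax]
      rfl
    simp [this, logValuation_mul, logValuation_pow, hc_even, Int.even_add]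

lemma mem_localSquares_of_mem_localNorms (h2 : v 2 = 1) (hc : Odd (logValuation v c))
    (hx : v (x : F) = 1) (hxn : x ∈ localNorms v (c : F)) : x ∈ localSquares v := by
  have hc_not : c ∉ localSquares v := fun h => by
    obtain ⟨y, hy, hlt⟩ := (mem_localSquares v).1 h
    have : logValuation v c = logValuation v (Units.mk0 y hy ^ 2) := by
      rw [logValuation_eq_iff, exp_logValuation, valuation_eq_of_sub_lt_four hlt]
      rfl
    rw [this, logValuation_pow] at hc
    exact Int.not_even_iff_odd.2 hc (even_two_mul _)
  obtain ⟨n, ⟨y, z, hn⟩, hnx, hsq⟩ := exists_normGroup_of_mem_localNorms hxn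
  have hmax := valuation_sq_sub_mul_sq_eq_max h2 hc_not y z
  rw [← hn, hnx, hx] at hmax
  have hcz : v (c * z ^ 2) < 1 := by
    refine (hmax ▸ le_max_right _ _ : v (c * z ^ 2) ≤ 1).lt_of_ne fun h1 => ?_
    have hz : z ≠ 0 := by
      rintro rfl
      simp at h1
    have : logValuation v (c * Units.mk0 z hz ^ 2) = 0 := logValuation_eq_zero_iff.2 h1
    rw [logValuation_mul, logValuation_pow] at this
    exact Int.not_even_iff_odd.2 hc ⟨-logValuation v (Units.mk0 z hz), by push_cast at this; lia⟩
  have hy1 : v (y ^ 2) = 1 := by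
    rcases max_choice (v (y ^ 2)) (v (c * z ^ 2)) with h | h <;> rw [h] at hmax
    exacts [hmax.symm, absurd hmax.symm hcz.ne]
  refine hsq ((mem_localSquares v).2 ⟨y, fun h0 => by simp [h0] at hy1, ?_⟩)
  rw [map_mul, valuation_four, h2, hy1, hn, sub_sub_cancel_left, Valuation.map_neg]
  simpa using hcz

end OddNormsDiscrete

section Separation

variable {F : Type*} [Field F] [NumberField F]

lemma mul_mem_localSquares_of_notMem {w : HeightOneSpectrum (𝓞 F)} (h2 : w.valuation F 2 = 1)
    {x y : Fˣ} (hx : w.valuation F (x : F) = 1) (hy : w.valuation F (y : F) = 1)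
    (hx_not : x ∉ localSquares (w.valuation F)) (hy_not : y ∉ localSquares (w.valuation F)) :
    x * y ∈ localSquares (w.valuation F) := by
  have hx' : x ∈ localUnits w := (Valuation.mem_unitGroup_iff _ _ _).2 hx
  have hy' : y ∈ localUnits w := (Valuation.mem_unitGroup_iff _ _ _).2 hy
  obtain ⟨hle, hne⟩ := relIndex_localSquares_localUnits_le (w := w) (e := 0) (by simpa using h2)
  have htwo : ((localSquares (w.valuation F)).subgroupOf (localUnits w)).index = 2 := by
    refine le_antisymm (hle.trans_eq (by simp)) ((Nat.two_le_iff _).2 ⟨hne, fun h1 => hx_not ?_⟩)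
    exact Subgroup.relIndex_eq_one.1 h1 hx'
  have := Subgroup.mul_mem_iff_of_index_two htwo (a := ⟨x, hx'⟩) (b := ⟨y, hy'⟩)
  simp only [Subgroup.mem_subgroupOf] at this
  exact this.2 (iff_of_false hx_not hy_not)

variable {S : Finset (HeightOneSpectrum (𝓞 F))} {a u : Fˣ}

theorem exists_mem_localSquares_and_notMem (h2 : ∀ v ∉ S, v.valuation F 2 = 1)
    (ha : a ∈ sUnits F S) (hu : u ∈ sUnits F S) (ha_sq : ¬ IsSquare (a : F))
    (hu_sq : ¬ IsSquare (u : F)) (hua_sq : ¬ IsSquare (u * a : F)) :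
    ∃ w ∉ S, a ∈ localSquares (w.valuation F) ∧ u ∉ localSquares (w.valuation F) := by
  have := fact_ne_of_not_isSquare ha_sq
  let ι : Fˣ →* (AdjoinSqrt (a : F))ˣ :=
    Units.map (algebraMap F (AdjoinSqrt (a : F)) : F →* AdjoinSqrt (a : F))
  have hmap_sq : ¬ IsSquare (ι u : AdjoinSqrt (a : F)) :=
    mt isSquare_algebraMap_adjoinSqrt_iff.1 (not_or.2 ⟨hu_sq, hua_sq⟩)
  obtain ⟨P, hP, hPu⟩ := exists_notMem_localSquares hmap_sq (placesAbove _ S)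
  rw [mem_placesAbove] at hP
  have hu_not : u ∉ localSquares ((P.under (𝓞 F)).valuation F) :=
    fun h => hPu (map_mem_localSquares h)
  refine ⟨P.under (𝓞 F), hP, by_contra fun ha_not => hPu ?_, hu_not⟩
  have hmul := map_mem_localSquares (E := AdjoinSqrt (a : F)) (P := P)
    (mul_mem_localSquares_of_notMem (h2 _ hP) (hu _ hP) (ha _ hP) hu_not ha_not)
  have hmap_a : ι a ∈ localSquares (P.valuation _) := by
    refine mem_localSquares_of_isSquare _ ⟨Units.mk0 QuadraticAlgebra.omega omega_ne_zero, ?_⟩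
    exact Units.ext ((omega_sq (d := (a : F))).symm.trans (sq _))
  rw [map_mul] at hmul
  exact (Subgroup.mul_mem_cancel_right _ hmap_a).1 hmul

/-- The quadratic characters of the `S`-units at the places of `T` are independent: they take every
system of values. -/
def SeparatedBySUnits (S T : Finset (HeightOneSpectrum (𝓞 F))) : Prop :=
  ∀ A : Set (HeightOneSpectrum (𝓞 F)), ∃ u ∈ sUnits F S, ∀ w ∈ T,
    (u ∈ localSquares (w.valuation F) ↔ w ∉ A)

variable {T : Finset (HeightOneSpectrum (𝓞 F))} {w : HeightOneSpectrum (𝓞 F)}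

lemma SeparatedBySUnits.cons (hT : SeparatedBySUnits S T) (hwT : w ∉ T) (hwS : w ∉ S)
    (h2 : w.valuation F 2 = 1) (hu : u ∈ sUnits F S)
    (huT : ∀ v ∈ T, u ∈ localSquares (v.valuation F)) (huw : u ∉ localSquares (w.valuation F)) :
    SeparatedBySUnits S (T.cons w hwT) := by
  intro A
  obtain ⟨y, hyS, hy⟩ := hT A
  by_cases hyw : y ∈ localSquares (w.valuation F) ↔ w ∉ A
  · exact ⟨y, hyS, (Finset.forall_mem_cons hwT _).2 ⟨hyw, hy⟩⟩
  · refine ⟨y * u, mul_mem hyS hu, (Finset.forall_mem_cons hwT _).2 ⟨?_, fun v hv => ?_⟩⟩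
    · by_cases hy_sq : y ∈ localSquares (w.valuation F)
      · rw [Subgroup.mul_mem_cancel_left _ hy_sq]
        tauto
      · have := mul_mem_localSquares_of_notMem h2 (hyS w hwS) (hu w hwS) hy_sq huw
        tauto
    · rw [Subgroup.mul_mem_cancel_right _ (huT v hv)]
      exact hy v hv

lemma relIndex_biInf_le {G ι : Type*} [Group G] (H : ι → Subgroup G) (U : Subgroup G)
    (M : Finset ι) : (⨅ i ∈ M, H i).relIndex U ≤ ∏ i ∈ M, (H i).relIndex U := by
  rw [iInf_subtype', ← Finset.prod_coe_sort]
  exact Subgroup.relIndex_iInf_le _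

lemma exists_sUnit_mem_localSquares (h2 : ∀ v ∉ S, v.valuation F 2 = 1) (ha : a ∈ sUnits F S)
    (hTS : ∀ w ∈ T, w ∉ S) (haT : ∀ w ∈ T, a ∈ localSquares (w.valuation F))
    (hcard : T.card + 1 < Fintype.card (InfinitePlace F) + S.card) :
    ∃ u ∈ sUnits F S, (∀ w ∈ T, u ∈ localSquares (w.valuation F)) ∧ ¬ IsSquare (u : F) ∧
      ¬ IsSquare (u * a : F) := by
  by_contra! hcon
  let U := sUnits F S
  let V := ⨅ w ∈ T, localSquares (w.valuation F)
  have hV {u : Fˣ} : u ∈ V ↔ ∀ w ∈ T, u ∈ localSquares (w.valuation F) := by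
    simp [V, Subgroup.mem_iInf]
  have hVU : V.relIndex U ≤ 2 ^ T.card := by
    refine (relIndex_biInf_le _ _ _).trans (Finset.prod_le_pow_card _ _ _ fun w hw => ?_)
    have hle : U ≤ localUnits w := fun u hu => (Valuation.mem_unitGroup_iff _ _ _).2
      (hu w (hTS w hw))
    obtain ⟨h, hne⟩ := relIndex_localSquares_localUnits_le (w := w) (e := 0)
      (by simpa using h2 w (hTS w hw))
    exact (Subgroup.relIndex_le_of_le_right hle hne).trans (by simpa using h)
  have hsqV : (U.map (powMonoidHom 2)).relIndex (V ⊓ U) ∣ 2 := by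
    refine Subgroup.relIndex_dvd_two_iff.2 ⟨a, ⟨hV.2 haT, ha⟩, fun u hu => ?_⟩
    rw [mem_map_powMonoidHom_sUnits (mul_mem hu.2 ha), mem_map_powMonoidHom_sUnits hu.2]
    exact (Classical.em _).symm.imp (hcon u hu.2 (hV.1 hu.1)) id
  have hmul : (U.map (powMonoidHom 2)).relIndex (V ⊓ U) * V.relIndex U =
      2 ^ (Fintype.card (InfinitePlace F) + S.card) := by
    rw [← relIndex_sq_sUnits S, Subgroup.relIndex_inf_mul_relIndex, inf_of_le_left]
    rintro _ ⟨y, -, rfl⟩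
    exact hV.2 fun w _ => sq_mem_localSquares _ y
  have hpow : 2 ^ (Fintype.card (InfinitePlace F) + S.card) ≤ 2 ^ (T.card + 1) := by
    rw [← hmul, pow_succ']
    exact Nat.mul_le_mul (Nat.le_of_dvd two_pos hsqV) hVU
  exact hcard.not_ge ((Nat.pow_le_pow_iff_right one_lt_two).1 hpow)

theorem exists_separatedBySUnits (h2 : ∀ v ∉ S, v.valuation F 2 = 1) (ha : a ∈ sUnits F S)
    (ha_sq : ¬ IsSquare (a : F)) {k : ℕ} (hk : k < Fintype.card (InfinitePlace F) + S.card) :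
    ∃ T : Finset (HeightOneSpectrum (𝓞 F)), T.card = k ∧ (∀ w ∈ T, w ∉ S) ∧
      (∀ w ∈ T, a ∈ localSquares (w.valuation F)) ∧ SeparatedBySUnits S T := by
  induction k with
  | zero => exact ⟨∅, by simp, by simp, by simp, fun A => ⟨1, one_mem _, by simp⟩⟩
  | succ k ih =>
    obtain ⟨T, rfl, hTS, haT, hT⟩ := ih (by lia)
    obtain ⟨u, hu, huT, hu_sq, hua_sq⟩ := exists_sUnit_mem_localSquares h2 ha hTS haT hk
    obtain ⟨w, hwS, haw, huw⟩ := exists_mem_localSquares_and_notMem h2 ha hu ha_sq hu_sq hua_sq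
    have hwT : w ∉ T := fun h => huw (huT w h)
    exact ⟨T.cons w hwT, by simp, (Finset.forall_mem_cons hwT _).2 ⟨hwS, hTS⟩,
      (Finset.forall_mem_cons hwT _).2 ⟨haw, haT⟩, hT.cons hwT hwS (h2 w hwS) hu huT huw⟩

theorem two_pow_card_le_relIndex_biInf {G ι : Type*} [Group G] {U : Subgroup G}
    {H : ι → Subgroup G} (M : Finset ι)
    (hM : ∀ i ∈ M, ∃ x ∈ U, x ∉ H i ∧ ∀ j ∈ M, j ≠ i → x ∈ H j)
    (hne : (⨅ i ∈ M, H i).relIndex U ≠ 0) : 2 ^ M.card ≤ (⨅ i ∈ M, H i).relIndex U := by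
  classical
  induction M using Finset.induction_on with
  | empty => simp
  | insert i M hi ih =>
    rw [Finset.iInf_insert, ← Subgroup.relIndex_inf_mul_relIndex] at hne ⊢
    obtain ⟨x, hxU, hxi, hx⟩ := hM i (Finset.mem_insert_self i M)
    have hxM : x ∈ (⨅ j ∈ M, H j) ⊓ U := by
      simp only [Subgroup.mem_inf, Subgroup.mem_iInf]
      exact ⟨fun j hj => hx j (Finset.mem_insert_of_mem hj) (ne_of_mem_of_not_mem hj hi), hxU⟩
    have htwo : 2 ≤ (H i).relIndex ((⨅ j ∈ M, H j) ⊓ U) :=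
      (Nat.two_le_iff _).2 ⟨left_ne_zero_of_mul hne, fun h1 =>
        hxi (Subgroup.relIndex_eq_one.1 h1 hxM)⟩
    rw [Finset.card_insert_of_notMem hi, pow_succ']
    refine Nat.mul_le_mul htwo (ih (fun j hj => ?_) (right_ne_zero_of_mul hne))
    obtain ⟨y, hyU, hyj, hy⟩ := hM j (Finset.mem_insert_of_mem hj)
    exact ⟨y, hyU, hyj, fun l hl => hy l (Finset.mem_insert_of_mem hl)⟩

variable {c : Fˣ}

open Classical in
lemma SeparatedBySUnits.exists_notMem_localNorms (hT : SeparatedBySUnits S T)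
    (hS : TrivialSClassGroup F S) (hwT : w ∈ T) (hTS : ∀ v ∈ T, v ∉ S)
    (h2 : ∀ v ∉ S, v.valuation F 2 = 1) (hc : c ∉ localSquares (w.valuation F)) :
    ∃ x ∈ sUnits F (S ∪ T), x ∉ localNorms (w.valuation F) (c : F) ∧
      ∀ v ∈ T, v ≠ w → x ∈ localSquares (v.valuation F) := by
  have hwS := hTS w hwT
  rcases Int.even_or_odd (logValuation (w.valuation F) c) with hc_even | hc_odd
  · obtain ⟨π, hπw, hπ⟩ := hS w hwS
    obtain ⟨u, hu, huT⟩ := hT {v | π ∉ localSquares (v.valuation F)}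
    refine ⟨u * π, mul_mem (sUnits_mono Finset.subset_union_left hu) fun v hv => ?_, fun h => ?_,
      fun v hv hvw => ?_⟩
    · rw [Finset.mem_coe, Finset.mem_union, not_or] at hv
      exact hπ v hv.1 (ne_of_mem_of_not_mem hwT hv.2).symm
    · have hlog : logValuation (w.valuation F) (u * π) = -1 := by
        rw [logValuation_mul, logValuation_eq_zero_iff.2 (hu w hwS), logValuation_eq_iff.2 hπw,
          zero_add]
      exact absurd (even_logValuation_of_mem_localNorms (h2 w hwS) hc hc_even h)
        (by simp [hlog])
    · by_cases hπv : π ∈ localSquares (v.valuation F)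
      · exact mul_mem ((huT v hv).2 (not_not.2 hπv)) hπv
      · exact mul_mem_localSquares_of_notMem (h2 v (hTS v hv)) (hu v (hTS v hv))
          (hπ v (hTS v hv) hvw) (fun h => (huT v hv).1 h hπv) hπv
  · obtain ⟨u, hu, huT⟩ := hT {w}
    refine ⟨u, sUnits_mono Finset.subset_union_left hu, fun h => ?_, fun v hv hvw =>
      (huT v hv).2 hvw⟩
    exact (huT w hwT).1 (mem_localSquares_of_mem_localNorms (h2 w hwS) hc_odd (hu w hwS) h) rfl

open Classical in
theorem SeparatedBySUnits.isSquare (hT : SeparatedBySUnits S T) (hS : TrivialSClassGroup F S)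
    (hTS : ∀ v ∈ T, v ∉ S) (h2 : ∀ v ∉ S, v.valuation F 2 = 1) (hc : c ∈ sUnits F (S ∪ T))
    (hcS : ∀ v ∈ S, c ∈ localSquares (v.valuation F)) (hpos : c ∈ totallyPositive F) :
    IsSquare (c : F) := by
  by_contra hns
  have hle := relIndex_normGroup_le hns hc
    (fun v hv => h2 v fun h => hv (Finset.mem_union_left _ h)) (hS.mono Finset.subset_union_left)
    hpos
  set M := (S ∪ T).filter fun w => c ∉ localSquares (w.valuation F)
  have hMT : ∀ w ∈ M, w ∈ T ∧ c ∉ localSquares (w.valuation F) := fun w hw => by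
    obtain ⟨hw, hcw⟩ := Finset.mem_filter.1 hw
    exact ⟨(Finset.mem_union.1 hw).resolve_left fun h => hcw (hcS w h), hcw⟩
  have hnorm : normGroup (c : F) ≤ ⨅ w ∈ M, localNorms (w.valuation F) (c : F) :=
    le_iInf₂ fun w _ => normGroup_le_localNorms _ _
  have hne := relIndex_normGroup_ne_zero c (S ∪ T)
  have hge := two_pow_card_le_relIndex_biInf (U := sUnits F (S ∪ T)) M (fun w hw => by
    obtain ⟨hwT, hcw⟩ := hMT w hw
    obtain ⟨x, hx, hxw, hxT⟩ := hT.exists_notMem_localNorms hS hwT hTS h2 hcw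
    exact ⟨x, hx, hxw, fun v hv hvw =>
      localSquares_le_localNorms _ _ (hxT v (hMT v hv).1 hvw)⟩)
    (mt (Subgroup.relIndex_eq_zero_of_le_left hnorm) hne)
  have := Subgroup.relIndex_le_of_le_left hnorm hne
  lia

end Separation

section Residue

open IsLocalRing

variable {F Γ₀ : Type*} [Field F] [LinearOrderedCommGroupWithZero Γ₀] {v : Valuation F Γ₀}

lemma residue_eq_zero_iff_valuation_lt_one {r : v.valuationSubring} :
    residue v.valuationSubring r = 0 ↔ v (r : F) < 1 := by
  rw [residue_eq_zero_iff, mem_maximalIdeal, mem_nonunits_iff]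
  exact Valuation.Integer.not_isUnit_iff_valuation_lt_one

lemma residue_eq_residue_iff {r s : v.valuationSubring} :
    residue v.valuationSubring r = residue v.valuationSubring s ↔ v (r - s : F) < 1 := by
  rw [← sub_eq_zero, ← map_sub, residue_eq_zero_iff_valuation_lt_one]
  rfl

lemma residue_ne_zero_iff_valuation_eq_one {r : v.valuationSubring} :
    residue v.valuationSubring r ≠ 0 ↔ v (r : F) = 1 := by
  rw [Ne, residue_eq_zero_iff_valuation_lt_one, not_lt]
  exact ⟨r.2.antisymm, ge_of_eq⟩

lemma ringChar_residueField_eq_two_iff :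
    ringChar (ResidueField v.valuationSubring) = 2 ↔ v 2 < 1 := by
  have htwo : (2 : ResidueField v.valuationSubring) = 0 ↔ v 2 < 1 := by
    rw [← map_ofNat (residue v.valuationSubring) 2, residue_eq_zero_iff_valuation_lt_one]
    rfl
  rw [← htwo]
  refine ⟨fun h => ?_, fun h => ?_⟩
  · exact_mod_cast h ▸ ringChar.Nat.cast_ringChar (R := ResidueField v.valuationSubring)
  · exact (CharP.ringChar_of_prime_eq_zero Nat.prime_two (by exact_mod_cast h))

lemma isSquare_residue_of_mem_localSquares [CharZero F] {x : Fˣ} (hx : v (x : F) = 1)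
    (h : x ∈ localSquares v) :
    IsSquare (residue v.valuationSubring ⟨x, hx.le⟩) := by
  obtain ⟨y, -, hlt⟩ := (mem_localSquares v).1 h
  have hy2 : v y ^ 2 = 1 := by rw [← map_pow, ← valuation_eq_of_sub_lt_four hlt, hx]
  have hy : v y = 1 := (pow_eq_one_iff.1 hy2).resolve_right two_ne_zero
  refine ⟨residue _ ⟨y, hy.le⟩, ?_⟩
  rw [← map_mul, residue_eq_residue_iff]
  refine lt_of_lt_of_le (by simpa [sq] using hlt) ?_
  simpa [map_mul, map_pow, hy] using valuation_four_le_one v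

end Residue

section NumberField

open IsLocalRing

variable {F : Type*} [Field F] [NumberField F]

instance finite_residueField (w : HeightOneSpectrum (𝓞 F)) :
    Finite (ResidueField (w.valuation F).valuationSubring) := by
  let g (r : 𝓞 F) : (w.valuation F).valuationSubring := ⟨r, w.valuation_le_one r⟩
  refine Finite.of_surjective (α := 𝓞 F ⧸ w.asIdeal)
    (fun q => residue _ (g q.out)) fun α => ?_
  obtain ⟨x, rfl⟩ := residue_surjective α
  obtain ⟨r, hr⟩ := w.exists_valuation_sub_lt_of_integer x.2 1
  refine ⟨Ideal.Quotient.mk _ r, residue_eq_residue_iff.2 ?_⟩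
  have hout : w.valuation F ((Ideal.Quotient.mk w.asIdeal r).out - r : F) < 1 := by
    rw [← map_sub (algebraMap (𝓞 F) F), w.valuation_lt_one_iff_mem,
      ← Ideal.Quotient.eq_zero_iff_mem, map_sub, Ideal.Quotient.mk_out, sub_self]
  rw [← sub_add_sub_cancel _ (r : F)]
  exact Valuation.map_add_lt _ hout (by simpa using hr)

theorem exists_notMem_localNorms {w : HeightOneSpectrum (𝓞 F)} (h2 : w.valuation F 2 = 1) {c : Fˣ}
    (hc : c ∉ localSquares (w.valuation F)) : ∃ x, x ∉ localNorms (w.valuation F) (c : F) := by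
  by_cases hc_even : Even (logValuation (w.valuation F) c)
  · obtain ⟨π, hπ⟩ := w.valuation_exists_uniformizer F
    refine ⟨Units.mk0 π ((Valuation.ne_zero_iff _).1 (hπ ▸ WithZero.exp_ne_zero)), fun h => ?_⟩
    have := even_logValuation_of_mem_localNorms h2 hc hc_even h
    rw [logValuation, Units.val_mk0, hπ, WithZero.log_exp] at this
    exact absurd this (by decide)
  · obtain ⟨α, hα⟩ := FiniteField.exists_nonsquare
      (ringChar_residueField_eq_two_iff (v := w.valuation F).not.2 h2.not_lt)
    obtain ⟨x, rfl⟩ := residue_surjective α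
    have hx : w.valuation F (x : F) = 1 := residue_ne_zero_iff_valuation_eq_one.1 fun h =>
      hα (h.symm ▸ IsSquare.zero)
    refine ⟨Units.mk0 (x : F) fun h => by simp [h] at hx, fun h => hα ?_⟩
    exact isSquare_residue_of_mem_localSquares (x := Units.mk0 (x : F) _) hx
      (mem_localSquares_of_mem_localNorms h2 (Int.not_even_iff_odd.1 hc_even) hx h)

instance finite_realEmbeddings : Finite (F →+* ℝ) :=
  Finite.of_injective (fun τ : F →+* ℝ => Complex.ofRealHom.comp τ) fun τ τ' h => by
    ext x
    simpa using congrArg (fun φ : F →+* ℂ => φ x) h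

open Classical in
lemma natCard_realEmbeddings_le : Nat.card (F →+* ℝ) ≤ InfinitePlace.nrRealPlaces F := by
  rw [← InfinitePlace.card_real_embeddings, ← Nat.card_eq_fintype_card]
  refine Nat.card_le_card_of_injective (fun τ : F →+* ℝ =>
    ⟨Complex.ofRealHom.comp τ, by ext x; simp⟩) fun τ τ' h => ?_
  ext x
  simpa using congrArg (fun φ : {φ : F →+* ℂ // ComplexEmbedding.IsReal φ} => φ.1 x) h

lemma index_totallyPositive_le :
    (totallyPositive F).index ≤ 2 ^ InfinitePlace.nrRealPlaces F ∧
      (totallyPositive F).index ≠ 0 := by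
  have hsign (x y : Fˣ) (hxy : (fun τ : F →+* ℝ => 0 < τ x) = fun τ => 0 < τ y) :
      x⁻¹ * y ∈ totallyPositive F := fun τ => by
    have hpos : 0 < τ x ↔ 0 < τ y := (congrFun hxy τ).to_iff
    have hx : τ x ≠ 0 := (map_ne_zero τ).2 x.ne_zero
    have hy : τ y ≠ 0 := (map_ne_zero τ).2 y.ne_zero
    rw [Units.val_mul, Units.val_inv_eq_inv_val, map_mul, map_inv₀]
    rcases hx.lt_or_gt with h | h
    · exact mul_pos_of_neg_of_neg (inv_lt_zero.2 h) (hy.lt_of_le (not_lt.1 (hpos.not.1 h.not_gt)))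
    · exact mul_pos (inv_pos.2 h) (hpos.1 h)
  obtain ⟨hle, hne⟩ := index_le_natCard _ hsign
  refine ⟨hle.trans ?_, hne⟩
  rw [Nat.card_fun, Nat.card_eq_fintype_card, Fintype.card_prop]
  exact Nat.pow_le_pow_right two_pos natCard_realEmbeddings_le

lemma exists_valuation_two_eq_exp (w : HeightOneSpectrum (𝓞 F)) :
    ∃ e : ℕ, w.valuation F 2 = WithZero.exp (-e : ℤ) := by
  have h0 : w.valuation F 2 ≠ 0 := by simp
  have hle : WithZero.log (w.valuation F 2) ≤ 0 := by
    rw [WithZero.log_le_iff_le_exp h0]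
    exact valuation_two_le_one _
  obtain ⟨e, he⟩ := Int.exists_eq_neg_ofNat hle
  exact ⟨e, by rw [← he, WithZero.exp_log h0]⟩

lemma prod_absNorm_pow_le {e : HeightOneSpectrum (𝓞 F) → ℕ}
    (he : ∀ w : HeightOneSpectrum (𝓞 F), w.valuation F 2 = WithZero.exp (-e w : ℤ))
    (S : Finset (HeightOneSpectrum (𝓞 F))) :
    ∏ v ∈ S, Ideal.absNorm v.asIdeal ^ e v ≤ 2 ^ Module.finrank ℚ F := by
  have hdvd : ∏ v ∈ S, v.asIdeal ^ e v ∣ Ideal.span {(2 : 𝓞 F)} := by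
    refine Finset.prod_dvd_of_coprime
      (fun v _ v' _ hne => (HeightOneSpectrum.isCoprime_of_ne _ _ hne).pow) fun v _ => ?_
    rw [Ideal.dvd_span_singleton, ← v.intValuation_le_pow_iff_mem,
      ← HeightOneSpectrum.valuation_of_algebraMap (K := F), ← he v]
    exact (congrArg _ (map_ofNat (algebraMap (𝓞 F) F) 2)).le
  have hnorm : Ideal.absNorm (Ideal.span {(2 : 𝓞 F)}) = 2 ^ Module.finrank ℚ F := by
    rw [← RingOfIntegers.rank]
    exact_mod_cast Ideal.absNorm_span_natCast (S := 𝓞 F) 2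
  have := map_dvd (Ideal.absNorm (S := 𝓞 F)) hdvd
  simp only [map_prod, map_pow, hnorm] at this
  exact Nat.le_of_dvd (by positivity) this

/-- The totally positive elements which are local squares at every place of `S`. -/
noncomputable def positiveLocalSquares (S : Finset (HeightOneSpectrum (𝓞 F))) : Subgroup Fˣ :=
  (⨅ v ∈ S, localSquares (v.valuation F)) ⊓ totallyPositive F

lemma mem_positiveLocalSquares {S : Finset (HeightOneSpectrum (𝓞 F))} {x : Fˣ} :
    x ∈ positiveLocalSquares S ↔
      (∀ v ∈ S, x ∈ localSquares (v.valuation F)) ∧ x ∈ totallyPositive F := by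
  simp [positiveLocalSquares, Subgroup.mem_inf, Subgroup.mem_iInf]

theorem index_positiveLocalSquares_le (S : Finset (HeightOneSpectrum (𝓞 F))) :
    (positiveLocalSquares S).index ≤ 4 ^ (Fintype.card (InfinitePlace F) + S.card) ∧
      (positiveLocalSquares S).index ≠ 0 := by
  choose e he using exists_valuation_two_eq_exp (F := F)
  have hlocal : (⨅ v ∈ S, localSquares (v.valuation F)).index ≠ 0 := by
    rw [iInf_subtype']
    exact Subgroup.index_iInf_ne_zero fun v => (index_localSquares_le (he v.1)).2
  refine ⟨?_, Subgroup.index_inf_ne_zero hlocal index_totallyPositive_le.2⟩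
  calc (positiveLocalSquares S).index
      ≤ (⨅ v ∈ S, localSquares (v.valuation F)).index * (totallyPositive F).index :=
        Subgroup.index_inf_le
    _ ≤ (∏ v ∈ S, 4 * Ideal.absNorm v.asIdeal ^ e v) * 2 ^ InfinitePlace.nrRealPlaces F := by
        refine Nat.mul_le_mul ?_ index_totallyPositive_le.1
        rw [← Subgroup.relIndex_top_right]
        refine (relIndex_biInf_le _ _ S).trans (Finset.prod_le_prod' fun v _ => ?_)
        rw [Subgroup.relIndex_top_right]
        exact (index_localSquares_le (he v)).1
    _ ≤ 4 ^ S.card * 2 ^ Module.finrank ℚ F * 2 ^ InfinitePlace.nrRealPlaces F := by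
        rw [Finset.prod_mul_distrib, Finset.prod_const]
        gcongr
        exact prod_absNorm_pow_le he S
    _ = 4 ^ (Fintype.card (InfinitePlace F) + S.card) := by
        rw [InfinitePlace.card_eq_nrRealPlaces_add_nrComplexPlaces,
          ← InfinitePlace.card_add_two_mul_card_eq_rank, show 4 = 2 ^ 2 by rfl, ← pow_mul,
          ← pow_mul, ← pow_add, ← pow_add]
        ring_nf

end NumberField

section LocalGlobalNorms

lemma inf_le_of_relIndex_le {G : Type*} [Group G] {H K U : Subgroup G} (hHK : H ⊓ U ≤ K)
    (hne : H.relIndex U ≠ 0) (hle : H.relIndex U ≤ K.relIndex U) : K ⊓ U ≤ H := by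
  have hmul := Subgroup.relIndex_mul_relIndex (H ⊓ U) (K ⊓ U) U (le_inf hHK inf_le_right)
    inf_le_right
  rw [Subgroup.inf_relIndex_right, Subgroup.inf_relIndex_right] at hmul
  have hone : (H ⊓ U).relIndex (K ⊓ U) = 1 := by
    have hK : 0 < K.relIndex U := Nat.pos_of_ne_zero fun h => hne (by rw [← hmul, h, mul_zero])
    have hpos : 0 < (H ⊓ U).relIndex (K ⊓ U) :=
      Nat.pos_of_ne_zero fun h => hne (by rw [← hmul, h, zero_mul])
    rw [← hmul] at hle
    have := Nat.le_of_mul_le_mul_right (hle.trans_eq (one_mul _).symm) hK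
    lia
  exact (Subgroup.relIndex_eq_one.1 hone).trans inf_le_left

variable {F : Type*} [Field F] [NumberField F] {S T M : Finset (HeightOneSpectrum (𝓞 F))}
  {a b : Fˣ}

lemma two_pow_card_le_index_localNorms (h2 : ∀ v ∈ M, v.valuation F 2 = 1)
    (ha : ∀ v ∈ M, a ∉ localSquares (v.valuation F))
    (hne : (⨅ v ∈ M, localNorms (v.valuation F) (a : F)).index ≠ 0) :
    2 ^ M.card ≤ (⨅ v ∈ M, localNorms (v.valuation F) (a : F)).index := by
  classical
  rw [← Subgroup.relIndex_top_right] at hne ⊢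
  refine two_pow_card_le_relIndex_biInf M (fun w hw => ?_) hne
  obtain ⟨x, hx⟩ := exists_notMem_localNorms (h2 w hw) (ha w hw)
  obtain ⟨g, hg⟩ := exists_unit_valuation_sub_lt M fun v => if v = w then x else 1
  refine ⟨g, Subgroup.mem_top _, fun h => hx ?_, fun v hv hvw => ?_⟩
  · have := hg w hw
    rw [if_pos rfl] at this
    exact mem_localNorms_of_close h (valuation_sub_lt_four_symm this)
  · have := hg v hv
    rw [if_neg hvw] at this
    exact mem_localNorms_of_close (one_mem _) this

open Classical in
lemma SeparatedBySUnits.relIndex_positiveLocalSquares (hT : SeparatedBySUnits S T)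
    (hS : TrivialSClassGroup F S) (hTS : ∀ v ∈ T, v ∉ S) (h2 : ∀ v ∉ S, v.valuation F 2 = 1) :
    (positiveLocalSquares S).relIndex (sUnits F (S ∪ T)) =
      2 ^ (Fintype.card (InfinitePlace F) + (S.card + T.card)) := by
  set U := sUnits F (S ∪ T)
  have hinf : positiveLocalSquares S ⊓ U = U.map (powMonoidHom 2) ⊓ U := by
    ext x
    rw [Subgroup.mem_inf, Subgroup.mem_inf, and_congr_left]
    refine fun hx => ⟨fun h => ?_, ?_⟩
    · obtain ⟨hloc, hpos⟩ := mem_positiveLocalSquares.1 h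
      exact (mem_map_powMonoidHom_sUnits hx).2 (hT.isSquare hS hTS h2 hx hloc hpos)
    · rintro ⟨y, -, rfl⟩
      refine mem_positiveLocalSquares.2 ⟨fun v _ => sq_mem_localSquares _ y, fun τ => ?_⟩
      have : τ y ≠ 0 := (map_ne_zero τ).2 y.ne_zero
      rw [powMonoidHom_apply, Units.val_pow_eq_pow_val, map_pow]
      positivity
  rw [← Subgroup.inf_relIndex_right, hinf, Subgroup.inf_relIndex_right, relIndex_sq_sUnits,
    Finset.card_union_of_disjoint (Finset.disjoint_right.2 hTS)]

open Classical in
lemma SeparatedBySUnits.index_le_relIndex_mul_two (hT : SeparatedBySUnits S T)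
    (hS : TrivialSClassGroup F S) (hTS : ∀ v ∈ T, v ∉ S) (h2 : ∀ v ∉ S, v.valuation F 2 = 1)
    (hcard : T.card + 1 = Fintype.card (InfinitePlace F) + S.card) {N : Subgroup Fˣ}
    (hN : positiveLocalSquares S ≤ N) :
    N.index ≠ 0 ∧ N.index ≤ N.relIndex (sUnits F (S ∪ T)) * 2 := by
  set U := sUnits F (S ∪ T)
  obtain ⟨hle, hne⟩ := index_positiveLocalSquares_le S
  have hmul := Subgroup.relIndex_mul_index (le_sup_right : positiveLocalSquares S ≤ U ⊔ _)
  rw [Subgroup.relIndex_sup_right, hT.relIndex_positiveLocalSquares hS hTS h2] at hmul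
  have hfour : 4 ^ (Fintype.card (InfinitePlace F) + S.card) =
      2 ^ (Fintype.card (InfinitePlace F) + (S.card + T.card)) * 2 := by
    rw [show 4 = 2 ^ 2 by rfl, ← pow_mul, ← pow_succ]
    congr 1
    lia
  have hsup : (U ⊔ positiveLocalSquares S).index ≤ 2 := by
    rw [← hmul, hfour] at hle
    exact Nat.le_of_mul_le_mul_left hle (by positivity)
  have hsup0 : 0 < (U ⊔ positiveLocalSquares S).index :=
    Nat.pos_of_ne_zero fun h => hne (by rw [← hmul, h, mul_zero])
  refine ⟨ne_zero_of_dvd_ne_zero hne (Subgroup.index_dvd_of_le hN), ?_⟩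
  rw [← Subgroup.relIndex_mul_index (le_sup_right : N ≤ U ⊔ N), Subgroup.relIndex_sup_right]
  refine Nat.mul_le_mul_left _ (le_trans (Nat.le_of_dvd hsup0 ?_) hsup)
  exact Subgroup.index_dvd_of_le (sup_le_sup_left hN U)

/-- Both sides have the same index in the `S ∪ T`-units, where `T` is a large set of auxiliary
places at which `a` is a local square: the index of the global norms is bounded from above by the
unit index computation over `F(√a)`, the index of the local norms from below. -/
theorem mem_normGroup_of_forall_mem_localNorms (ha : a ∈ totallyPositive F)
    (ha_dyadic : ∀ v : HeightOneSpectrum (𝓞 F), v.valuation F 2 ≠ 1 →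
      a ∈ localSquares (v.valuation F))
    (hb : ∀ v : HeightOneSpectrum (𝓞 F), a ∉ localSquares (v.valuation F) →
      b ∈ localNorms (v.valuation F) (a : F)) :
    b ∈ normGroup (a : F) := by
  classical
  by_cases ha_sq : IsSquare (a : F)
  · exact normGroup_eq_top_of_isSquare ha_sq ▸ Subgroup.mem_top b
  obtain ⟨S, -, hS, h2, hX⟩ := exists_sUnits_trivialSClassGroup ∅ {a, b}
  have haS : a ∈ sUnits F S := hX a (by simp)
  have hbS : b ∈ sUnits F S := hX b (by simp)
  have hinf : 0 < Fintype.card (InfinitePlace F) := Fintype.card_pos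
  obtain ⟨T, hTcard, hTS, haT, hT⟩ := exists_separatedBySUnits h2 haS ha_sq
    (k := Fintype.card (InfinitePlace F) + S.card - 1) (by lia)
  set U := sUnits F (S ∪ T)
  have hSU : sUnits F S ≤ U := sUnits_mono Finset.subset_union_left
  set M := (S ∪ T).filter fun w => a ∉ localSquares (w.valuation F)
  have hM (v) (hv : v ∈ M) : v ∈ S ∧ v.valuation F 2 = 1 ∧ a ∉ localSquares (v.valuation F) := by
    obtain ⟨hvST, hav⟩ := Finset.mem_filter.1 hv
    exact ⟨(Finset.mem_union.1 hvST).resolve_right fun h => hav (haT v h),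
      by_contra fun h => hav (ha_dyadic v h), hav⟩
  set N := ⨅ v ∈ M, localNorms (v.valuation F) (a : F)
  have hN : positiveLocalSquares S ≤ N := fun x hx => by
    simp only [N, Subgroup.mem_iInf]
    exact fun v hv =>
      localSquares_le_localNorms _ _ ((mem_positiveLocalSquares.1 hx).1 v (hM v hv).1)
  obtain ⟨hN0, hindex⟩ := hT.index_le_relIndex_mul_two hS hTS h2 (by lia) hN
  have hlocal := two_pow_card_le_index_localNorms (fun v hv => (hM v hv).2.1)
    (fun v hv => (hM v hv).2.2) hN0
  have hglobal := relIndex_normGroup_le ha_sq (hSU haS)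
    (fun v hv => h2 v fun h => hv (Finset.mem_union_left _ h)) (hS.mono Finset.subset_union_left) ha
  have hnorm : normGroup (a : F) ≤ N :=
    le_iInf₂ fun v _ => normGroup_le_localNorms (v.valuation F) (a : F)
  refine inf_le_of_relIndex_le (inf_le_left.trans hnorm) (relIndex_normGroup_ne_zero a _)
    (Nat.le_of_mul_le_mul_right (hglobal.trans (hlocal.trans hindex)) two_pos)
    (Subgroup.mem_inf.2 ⟨?_, hSU hbS⟩)
  simp only [N, Subgroup.mem_iInf]
  exact fun v hv => hb v (hM v hv).2.2

end LocalGlobalNorms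

section HasseMinkowski

lemma exists_forall_valuation_mul_sq_sub_lt {F Γ₀ : Type*} [Field F]
    [LinearOrderedCommGroupWithZero Γ₀] (v : Valuation F Γ₀) (a x₀ : F) {ε : Γ₀} (hε : ε ≠ 0) :
    ∃ γ ≠ 0, ∀ x, v (x - x₀) < γ → v (a * x ^ 2 - a * x₀ ^ 2) < ε := by
  set C := max 1 (v a * max 1 (v (2 * x₀)))
  have hC : 0 < C := zero_lt_one.trans_le (le_max_left _ _)
  have hγ : 0 < min 1 (ε / C) := lt_min zero_lt_one (div_pos (zero_lt_iff.2 hε) hC)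
  refine ⟨min 1 (ε / C), hγ.ne', fun x hx => ?_⟩
  have hsum : v (a * ((x - x₀) + 2 * x₀)) ≤ C := by
    rw [map_mul]
    refine (mul_le_mul_right ((v.map_add _ _).trans ?_) _).trans (le_max_right _ _)
    exact max_le_max (hx.trans_le (min_le_left _ _)).le le_rfl
  calc v (a * x ^ 2 - a * x₀ ^ 2) = v (x - x₀) * v (a * ((x - x₀) + 2 * x₀)) := by
        rw [← map_mul]
        ring_nf
    _ ≤ v (x - x₀) * C := mul_le_mul_right hsum _
    _ < ε := (lt_div_iff₀ hC).1 (hx.trans_le (min_le_right _ _))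

lemma mul_mem_localNorms_of_locallySolvable {F Γ₀ : Type*} [Field F] [CharZero F]
    [LinearOrderedCommGroupWithZero Γ₀] {v : Valuation F Γ₀} (h2 : v 2 = 1) {a b d : Fˣ}
    (hloc : LocallySolvable v (a : F) (b : F)) {x y : F} (hd : (d : F) = a * x ^ 2 + b * y ^ 2)
    (hd_not : d ∉ localSquares v) : a * b * d ∈ localNorms v (d : F) := by
  have h4 (t : F) : v (4 * t) = v t := by rw [map_mul, valuation_four, h2, one_mul, one_mul]
  obtain ⟨X, Y, z, hz, hz_sq⟩ := hloc
  obtain ⟨s, t, hst⟩ : ∃ s t : F, (z : F) = d * s ^ 2 + (a * b * d) * t ^ 2 := by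
    have hd0 := d.ne_zero
    rw [hd] at hd0
    refine ⟨(a * X * x + b * Y * y) / d, (x * Y - y * X) / d, ?_⟩
    rw [hz, hd]
    field_simp
    ring
  have ht : t ≠ 0 := by
    rintro rfl
    have hs : s ≠ 0 := by
      rintro rfl
      simp at hst
    have hzd : z = d * Units.mk0 s hs ^ 2 := Units.ext (by simpa using hst)
    rw [hzd, Subgroup.mul_mem_cancel_right _ (sq_mem_localSquares v _)] at hz_sq
    exact hd_not hz_sq
  obtain ⟨ζ, -, hlt⟩ := (mem_localSquares v).1 hz_sq
  rw [h4] at hlt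
  have hlt' : v (z - ζ ^ 2) < v (ζ ^ 2 - d * s ^ 2) := by
    rw [valuation_sq_sub_mul_sq_eq_max h2 hd_not]
    exact hlt.trans_le (le_max_left _ _)
  have hn : ζ ^ 2 - d * s ^ 2 ≠ 0 := fun h => by simp [h] at hlt'
  refine (Subgroup.mul_mem_cancel_right _
    (localSquares_le_localNorms v _ (sq_mem_localSquares v (Units.mk0 t ht)))).1 ?_
  refine mem_localNorms_of_close (y := Units.mk0 _ hn)
    (normGroup_le_localNorms v _ ((mem_normGroup).2 ⟨ζ, s, rfl⟩)) ?_
  rw [h4, Units.val_mk0]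
  convert hlt' using 2
  push_cast
  rw [hst, Units.val_mk0]
  ring

variable {F : Type*} [Field F] [NumberField F] {a b : Fˣ}

lemma exists_value_mem_localSquares (S : Finset (HeightOneSpectrum (𝓞 F)))
    (hloc : ∀ v ∈ S, LocallySolvable (v.valuation F) (a : F) (b : F)) :
    ∃ x y : F, ¬(x = 0 ∧ y = 0) ∧ ∀ d : Fˣ, (d : F) = a * x ^ 2 + b * y ^ 2 →
      ∀ v ∈ S, d ∈ localSquares (v.valuation F) := by
  choose! x₀ y₀ z₀ hz₀ hz₀_sq using hloc
  have h4 (v : HeightOneSpectrum (𝓞 F)) : v.valuation F (4 * (z₀ v : F)) ≠ 0 := by simp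
  choose γ hγ0 hγ using fun v => exists_forall_valuation_mul_sq_sub_lt _ (a : F) (x₀ v) (h4 v)
  choose δ hδ0 hδ using fun v => exists_forall_valuation_mul_sq_sub_lt _ (b : F) (y₀ v) (h4 v)
  obtain ⟨x, hx⟩ := exists_valuation_sub_lt S x₀ fun v _ => hγ0 v
  obtain ⟨y, hy⟩ := exists_valuation_sub_lt S y₀ fun v _ => hδ0 v
  have hclose (v) (hv : v ∈ S) :
      v.valuation F (a * x ^ 2 + b * y ^ 2 - z₀ v) < v.valuation F (4 * (z₀ v : F)) := by
    have := (v.valuation F).map_add_lt (hγ v _ (hx v hv)) (hδ v _ (hy v hv))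
    rwa [sub_add_sub_comm, ← hz₀ v hv] at this
  by_cases h0 : x = 0 ∧ y = 0
  · refine ⟨1, 0, by simp, fun d _ v hv => absurd (hclose v hv) (not_lt.2 ?_)⟩
    simpa [h0] using mul_le_of_le_one_left' (valuation_four_le_one (v.valuation F))
  · exact ⟨x, y, h0, fun d hd v hv => mem_localSquares_of_close (hz₀_sq v hv) (hd ▸ hclose v hv)⟩

/-- If `d` is a value of `⟨a, b⟩`, then `⟨a, b⟩ ≅ d ⟨1, a * b⟩`, so that `⟨a, b⟩` represents a
square if and only if `a * b * d` is a norm from `F(√d)`. The value `d` is chosen to be a local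
square at the dyadic places. -/
theorem conicSolvable_of_forall_locallySolvable (ha : a ∈ totallyPositive F)
    (hb : b ∈ totallyPositive F)
    (hloc : ∀ v : HeightOneSpectrum (𝓞 F), LocallySolvable (v.valuation F) (a : F) (b : F)) :
    ConicSolvable (a : F) (b : F) := by
  have hdyadic := finite_valuation_ne_one (R := 𝓞 F) (Units.mk0 (2 : F) two_ne_zero)
  obtain ⟨x, y, h0, hd_sq⟩ := exists_value_mem_localSquares hdyadic.toFinset fun v _ => hloc v
  by_cases hd0 : (a * x ^ 2 + b * y ^ 2 : F) = 0
  · exact ⟨0, x, y, fun h => h0 h.2, by linear_combination -hd0⟩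
  have hpos : Units.mk0 _ hd0 ∈ totallyPositive F := fun τ => by
    have hpos_a := ha τ
    have hpos_b := hb τ
    rw [Units.val_mk0, map_add, map_mul, map_mul, map_pow, map_pow]
    rcases not_and_or.1 h0 with h | h <;> have := (map_ne_zero τ).2 h <;> positivity
  have hd_sq' (v : HeightOneSpectrum (𝓞 F)) (hv : v.valuation F 2 ≠ 1) :=
    hd_sq (Units.mk0 _ hd0) rfl v (by simpa using hv)
  obtain ⟨p, q, hpq⟩ := mem_normGroup.1 <| mem_normGroup_of_forall_mem_localNorms
    (b := a * b * Units.mk0 _ hd0) hpos hd_sq' fun v hv =>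
      mul_mem_localNorms_of_locallySolvable (by_contra fun h => hv (hd_sq' v h)) (hloc v) rfl hv
  push_cast [Units.val_mk0] at hpq
  refine ⟨p, q * x - b * y, q * y + a * x, fun ⟨_, hx, hy⟩ => hd0 ?_, by linear_combination -hpq⟩
  linear_combination x * hy - y * hx

end HasseMinkowski

/-! ### Ramified quaternion algebras -/

section ReducedNorm

variable {R : Type*} [CommRing R] {a b : R}

/-- The square `a * u ^ 2 + b * t ^ 2 - a * b * s ^ 2` of the pure quaternion `u i + t j + s ij`. -/
def pureSquare (a b u t s : R) : R := a * u ^ 2 + b * t ^ 2 - a * b * s ^ 2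

lemma pureSquare_mul (c u t s : R) :
    pureSquare a b (c * u) (c * t) (c * s) = c ^ 2 * pureSquare a b u t s := by
  simp only [pureSquare]
  ring

/-- The reduced norm `x * star x` of a quaternion algebra, as a map to the base ring. -/
def reducedNorm : ℍ[R,a,b] →* R where
  toFun x := x.re ^ 2 - pureSquare a b x.imI x.imJ x.imK
  map_one' := by simp [pureSquare]
  map_mul' x y := by
    simp [pureSquare]
    ring

lemma reducedNorm_apply (x : ℍ[R,a,b]) :
    reducedNorm x = x.re ^ 2 - pureSquare a b x.imI x.imJ x.imK := rfl

lemma reducedNorm_smul (c : R) (x : ℍ[R,a,b]) : reducedNorm (c • x) = c ^ 2 * reducedNorm x := by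
  simp only [reducedNorm_apply, QuaternionAlgebra.re_smul, QuaternionAlgebra.imI_smul,
    QuaternionAlgebra.imJ_smul, QuaternionAlgebra.imK_smul, smul_eq_mul, pureSquare_mul]
  ring

lemma reducedNorm_neg (x : ℍ[R,a,b]) : reducedNorm (-x) = reducedNorm x := by
  simp [reducedNorm_apply, pureSquare]

lemma reducedNorm_star (x : ℍ[R,a,b]) : reducedNorm (star x) = reducedNorm x := by
  simp [reducedNorm_apply, pureSquare]

lemma reducedNorm_one_add (x : ℍ[R,a,b]) : reducedNorm (1 + x) = 1 + 2 * x.re + reducedNorm x := by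
  simp [reducedNorm_apply, pureSquare]
  ring

lemma reducedNorm_sub_smul_one (x : ℍ[R,a,b]) (c : R) :
    reducedNorm (x - c • 1) = c ^ 2 - c * (2 * x.re) + reducedNorm x := by
  simp [reducedNorm_apply, pureSquare]
  ring

lemma mul_star_eq_reducedNorm_smul_one (x : ℍ[R,a,b]) : x * star x = reducedNorm x • 1 := by
  ext <;> simp [reducedNorm_apply, pureSquare] <;> ring

lemma star_mul_eq_reducedNorm_smul_one (x : ℍ[R,a,b]) : star x * x = reducedNorm x • 1 := by
  rw [← reducedNorm_star, ← mul_star_eq_reducedNorm_smul_one, star_star]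

lemma mul_star_eq_one_iff (x : ℍ[R,a,b]) : x * star x = 1 ↔ reducedNorm x = 1 := by
  rw [mul_star_eq_reducedNorm_smul_one]
  refine ⟨fun h => ?_, fun h => by rw [h, one_smul]⟩
  simpa using congrArg QuaternionAlgebra.re h

lemma add_star_eq_algebraMap_iff (x : ℍ[R,a,b]) (s : R) :
    x + star x = algebraMap R _ s ↔ 2 * x.re = s := by
  rw [QuaternionAlgebra.self_add_star', zero_mul, add_zero]
  exact ⟨congrArg QuaternionAlgebra.re, congrArg _⟩

end ReducedNorm

section Field

variable {F : Type*} [Field F] {a b : F}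

lemma reducedNorm_inv_smul_mul_star (x y : ℍ[F,a,b]) :
    reducedNorm ((reducedNorm y)⁻¹ • (x * star y)) = reducedNorm x / reducedNorm y := by
  rw [reducedNorm_smul, map_mul, reducedNorm_star]
  rcases eq_or_ne (reducedNorm y) 0 with h | h
  · simp [h]
  · field_simp

lemma inv_smul_mul_star_mul_cancel {y : ℍ[F,a,b]} (hy : reducedNorm y ≠ 0) (x : ℍ[F,a,b]) :
    (reducedNorm y)⁻¹ • (x * star y) * y = x := by
  rw [smul_mul_assoc, mul_assoc, star_mul_eq_reducedNorm_smul_one, mul_smul_comm, mul_one,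
    smul_smul, inv_mul_cancel₀ hy, one_smul]

lemma exists_pureSquare_eq [NeZero (2 : F)] (ha : a ≠ 0) (hb : b ≠ 0) {u t s : F}
    (h0 : pureSquare a b u t s = 0) (hne : ¬(u = 0 ∧ t = 0 ∧ s = 0)) (d : F) :
    ∃ u' t' s' : F, pureSquare a b u' t' s' = d := by
  unfold pureSquare at h0 ⊢
  have h2 := two_ne_zero (α := F)
  by_cases hu : u = 0
  · by_cases ht : t = 0
    · have hs : s ≠ 0 := fun hs => hne ⟨hu, ht, hs⟩
      obtain ⟨l, hl⟩ : ∃ l, l * (-2 * a * b * s) = d + a * b := ⟨_, div_mul_cancel₀ _ (by simp [*])⟩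
      exact ⟨l * u, l * t, 1 + l * s, by linear_combination hl + l ^ 2 * h0⟩
    · obtain ⟨l, hl⟩ : ∃ l, l * (2 * b * t) = d - b := ⟨_, div_mul_cancel₀ _ (by simp [*])⟩
      exact ⟨l * u, 1 + l * t, l * s, by linear_combination hl + l ^ 2 * h0⟩
  · obtain ⟨l, hl⟩ : ∃ l, l * (2 * a * u) = d - a := ⟨_, div_mul_cancel₀ _ (by simp [*])⟩
    exact ⟨1 + l * u, l * t, l * s, by linear_combination hl + l ^ 2 * h0⟩

end Field

section Ramified

variable {F Γ₀ : Type*} [Field F] [CharZero F] [LinearOrderedCommGroupWithZero Γ₀]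
  {v : Valuation F Γ₀} {a b : F}

/-- The quaternion algebra `H_{a,b}` is ramified at `v`: no pure quaternion over `F` squares to a
nonzero local square. As `F` is dense in its completion, this agrees with the condition that the
completion of `H_{a,b}` is a division algebra. -/
def IsRamified (v : Valuation F Γ₀) (a b : F) : Prop :=
  ∀ u t s : F, ∀ x : Fˣ, (x : F) = pureSquare a b u t s → x ∉ localSquares v

namespace IsRamified

lemma valuation_two_mul_re_sq_le (h : IsRamified v a b) (x : ℍ[F,a,b]) :
    v (2 * x.re) ^ 2 ≤ v (reducedNorm x) := by
  rw [← map_pow, mul_pow, show (2 : F) ^ 2 = 4 by norm_num]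
  by_contra! hlt
  set q := pureSquare a b x.imI x.imJ x.imK
  have hq : q - x.re ^ 2 = -reducedNorm x := by rw [reducedNorm_apply, neg_sub]
  have hq0 : q ≠ 0 := fun h0 => by
    rw [h0, zero_sub, neg_inj] at hq
    rw [← hq] at hlt
    exact hlt.not_ge (valuation_four_mul_le v _)
  refine h _ _ _ (Units.mk0 q hq0) rfl ((mem_localSquares v).2 ⟨x.re, ?_, ?_⟩)
  · intro h0
    simp [h0] at hlt
  · rwa [Units.val_mk0, hq, Valuation.map_neg]

lemma valuation_two_mul_re_le_one (h : IsRamified v a b) {x : ℍ[F,a,b]}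
    (hx : v (reducedNorm x) ≤ 1) : v (2 * x.re) ≤ 1 :=
  (pow_le_one_iff two_ne_zero).1 ((h.valuation_two_mul_re_sq_le x).trans hx)

lemma eq_zero_of_pureSquare_eq_zero (h : IsRamified v a b) (ha : a ≠ 0) (hb : b ≠ 0) {u t s : F}
    (h0 : pureSquare a b u t s = 0) : u = 0 ∧ t = 0 ∧ s = 0 := by
  by_contra hne
  obtain ⟨u', t', s', h1⟩ := exists_pureSquare_eq ha hb h0 hne 1
  exact h u' t' s' 1 h1.symm (one_mem _)

lemma eq_zero_of_reducedNorm_eq_zero (h : IsRamified v a b) (ha : a ≠ 0) (hb : b ≠ 0)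
    {x : ℍ[F,a,b]} (hx : reducedNorm x = 0) : x = 0 := by
  have hre : x.re = 0 := by simpa [hx] using h.valuation_two_mul_re_sq_le x
  rw [reducedNorm_apply, hre, zero_pow two_ne_zero, zero_sub, neg_eq_zero] at hx
  obtain ⟨hI, hJ, hK⟩ := h.eq_zero_of_pureSquare_eq_zero ha hb hx
  ext <;> assumption

lemma valuation_reducedNorm_add_le_right (h : IsRamified v a b) (ha : a ≠ 0) (hb : b ≠ 0)
    {x y : ℍ[F,a,b]} (hxy : v (reducedNorm x) ≤ v (reducedNorm y)) :
    v (reducedNorm (x + y)) ≤ v (reducedNorm y) := by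
  by_cases hy : reducedNorm y = 0
  · have hx : reducedNorm x = 0 := by simpa [hy] using hxy
    simp [h.eq_zero_of_reducedNorm_eq_zero ha hb hx]
  set z := (reducedNorm y)⁻¹ • (x * star y)
  have hfactor : x + y = (1 + z) * y := by
    rw [add_mul, one_mul, inv_smul_mul_star_mul_cancel hy, add_comm]
  have hz : v (reducedNorm z) ≤ 1 := by
    rw [reducedNorm_inv_smul_mul_star, map_div₀]
    exact div_le_one_of_le₀ hxy zero_le
  rw [hfactor, map_mul, map_mul, reducedNorm_one_add]
  have hre := h.valuation_two_mul_re_le_one hz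
  exact mul_le_of_le_one_left' (v.map_add_le (v.map_add_le v.map_one.le hre) hz)

/-- At a ramified place the valuation of the reduced norm is a valuation on the quaternion
algebra. -/
lemma valuation_reducedNorm_add_le (h : IsRamified v a b) (ha : a ≠ 0) (hb : b ≠ 0)
    {x y : ℍ[F,a,b]} {γ : Γ₀} (hx : v (reducedNorm x) ≤ γ) (hy : v (reducedNorm y) ≤ γ) :
    v (reducedNorm (x + y)) ≤ γ := by
  rcases le_total (v (reducedNorm x)) (v (reducedNorm y)) with hle | hle
  · exact (h.valuation_reducedNorm_add_le_right ha hb hle).trans hy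
  · rw [add_comm]
    exact (h.valuation_reducedNorm_add_le_right ha hb hle).trans hx

end IsRamified

end Ramified

section Centre

open IsLocalRing

variable {F Γ₀ : Type*} [Field F] [LinearOrderedCommGroupWithZero Γ₀] {v : Valuation F Γ₀}
  {a b : F} {x : ℍ[F,a,b]}

lemma valuation_reducedNorm_sub_re_smul_one_lt_one (h2 : v 2 = 1)
    (hdisc : v ((2 * x.re) ^ 2 - 4 * reducedNorm x) < 1) :
    v (reducedNorm (x - x.re • 1)) < 1 := by
  have h4 : v 4 = 1 := by rw [valuation_four, h2, one_mul]
  rw [← Valuation.map_neg, ← one_mul (v _), ← h4, ← map_mul, reducedNorm_sub_smul_one]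
  convert hdisc using 2
  ring

lemma exists_valuation_reducedNorm_sub_smul_one_lt_one_of_dyadic
    [Finite (ResidueField v.valuationSubring)] (h2 : v 2 < 1) (hx : v (reducedNorm x) ≤ 1)
    (hdisc : v ((2 * x.re) ^ 2 - 4 * reducedNorm x) < 1) :
    ∃ c : F, v c ≤ 1 ∧ v (reducedNorm (x - c • 1)) < 1 := by
  have hlt {y z : F} (hy : v y < 1) (hz : v z ≤ 1) : v (y * z) < 1 := by
    rw [map_mul]
    exact mul_lt_one_of_lt_of_le hy hz
  have h4 : v 4 < 1 := by
    rw [valuation_four]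
    exact mul_lt_one_of_lt_of_le h2 h2.le
  have htrace : v (2 * x.re) < 1 := by
    have hsq := v.map_add_lt hdisc (hlt h4 hx)
    rw [sub_add_cancel, map_pow] at hsq
    exact (pow_lt_one_iff two_ne_zero).1 hsq
  obtain ⟨ρ, hρ⟩ := FiniteField.isSquare_of_char_two (ringChar_residueField_eq_two_iff.2 h2)
    (residue v.valuationSubring ⟨reducedNorm x, hx⟩)
  obtain ⟨⟨c, hc⟩, rfl⟩ := residue_surjective ρ
  rw [← map_mul, residue_eq_residue_iff] at hρ
  refine ⟨c, hc, ?_⟩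
  rw [reducedNorm_sub_smul_one,
    show c ^ 2 - c * (2 * x.re) + reducedNorm x = -(reducedNorm x - c * c) - 2 * x.re * c +
      2 * reducedNorm x by ring]
  refine v.map_add_lt (v.map_sub_lt ?_ (hlt htrace hc)) (hlt h2 hx)
  rwa [Valuation.map_neg]

end Centre

namespace IsRamified

section Residue

open IsLocalRing

variable {F Γ₀ : Type*} [Field F] [CharZero F] [LinearOrderedCommGroupWithZero Γ₀]
  {v : Valuation F Γ₀} {a b : F} {x y : ℍ[F,a,b]}

lemma valuation_discr_le_one (h : IsRamified v a b) (hx : v (reducedNorm x) ≤ 1) :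
    v ((2 * x.re) ^ 2 - 4 * reducedNorm x) ≤ 1 := by
  refine v.map_sub_le ?_ ((valuation_four_mul_le v _).trans hx)
  rw [map_pow]
  exact pow_le_one' (h.valuation_two_mul_re_le_one hx) 2

lemma exists_valuation_reducedNorm_sub_smul_one_lt_one
    [Finite (ResidueField v.valuationSubring)] (h : IsRamified v a b)
    (hx : v (reducedNorm x) ≤ 1) (hdisc : v ((2 * x.re) ^ 2 - 4 * reducedNorm x) < 1) :
    ∃ c : F, v c ≤ 1 ∧ v (reducedNorm (x - c • 1)) < 1 := by
  rcases (valuation_two_le_one v).eq_or_lt with h2 | h2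
  · have htrace := h.valuation_two_mul_re_le_one hx
    rw [map_mul, h2, one_mul] at htrace
    exact ⟨x.re, htrace, valuation_reducedNorm_sub_re_smul_one_lt_one h2 hdisc⟩
  · exact exists_valuation_reducedNorm_sub_smul_one_lt_one_of_dyadic h2 hx hdisc

lemma valuation_reducedNorm_commutator_le_one (h : IsRamified v a b) (ha : a ≠ 0) (hb : b ≠ 0)
    (hx : v (reducedNorm x) ≤ 1) (hy : v (reducedNorm y) ≤ 1) :
    v (reducedNorm (x * y - y * x)) ≤ 1 := by
  rw [sub_eq_add_neg]
  apply h.valuation_reducedNorm_add_le ha hb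
  · rw [map_mul, map_mul]
    exact mul_le_one' hx hy
  · rw [reducedNorm_neg, map_mul, map_mul]
    exact mul_le_one' hy hx

end Residue

end IsRamified

section Uniformizer

variable {F : Type*} [Field F] {v : Valuation F ℤᵐ⁰} {a b π : F}

lemma ne_zero_of_valuation_eq_exp {x : F} {n : ℤ} (hx : v x = WithZero.exp n) : x ≠ 0 := by
  rintro rfl
  exact WithZero.exp_ne_zero (hx ▸ v.map_zero)

lemma valuation_le_one_of_eq_exp_neg_one (hπ : v π = WithZero.exp (-1)) : v π ≤ 1 := by
  rw [hπ, ← WithZero.exp_zero, WithZero.exp_le_exp]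
  norm_num

lemma exists_eq_smul_of_valuation_reducedNorm_le (hπ : v π = WithZero.exp (-1)) {x : ℍ[F,a,b]}
    (hx : v (reducedNorm x) ≤ WithZero.exp (-2)) :
    ∃ z : ℍ[F,a,b], v (reducedNorm z) ≤ 1 ∧ x = π • z := by
  refine ⟨π⁻¹ • x, ?_, (smul_inv_smul₀ (ne_zero_of_valuation_eq_exp hπ) x).symm⟩
  rw [reducedNorm_smul, map_mul, map_pow, map_inv₀, hπ, ← WithZero.exp_neg, ← WithZero.exp_nsmul]
  exact (mul_le_mul_right hx _).trans_eq (by rw [← WithZero.exp_add]; simp)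

lemma exists_valuation_mul_sq_lt_one (hπ : v π = WithZero.exp (-1)) (x : F) :
    ∃ c ≠ 0, v (x * c ^ 2) < 1 := by
  rcases eq_or_ne x 0 with rfl | hx
  · exact ⟨1, one_ne_zero, by simp⟩
  obtain ⟨n, hn⟩ := WithZero.exists_exp_neg_natCast_lt (inv_ne_zero ((v.ne_zero_iff).2 hx))
  have hle : v (π ^ n) ^ 2 ≤ WithZero.exp (-n : ℤ) := by
    rw [map_pow, hπ, ← WithZero.exp_nsmul, ← WithZero.exp_nsmul, WithZero.exp_le_exp]
    simp only [nsmul_eq_mul]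
    push_cast
    omega
  refine ⟨π ^ n, pow_ne_zero n (ne_zero_of_valuation_eq_exp hπ), ?_⟩
  have hlt := (lt_mul_inv_iff₀' (zero_lt_iff.2 (v.ne_zero_iff.2 hx))).1
    (hle.trans_lt (hn.trans_eq (one_mul _).symm))
  rwa [map_mul, map_pow]

lemma exists_reducedNorm_commutator_ne_zero [NeZero (2 : F)] (ha : a ≠ 0) (hb : b ≠ 0)
    (hπ : v π = WithZero.exp (-1)) : ∃ x y : ℍ[F,a,b], v (reducedNorm x) ≤ 1 ∧
      v (reducedNorm y) ≤ 1 ∧ reducedNorm (x * y - y * x) ≠ 0 := by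
  obtain ⟨c, hc, hca⟩ := exists_valuation_mul_sq_lt_one hπ a
  obtain ⟨d, hd, hdb⟩ := exists_valuation_mul_sq_lt_one hπ b
  refine ⟨⟨0, c, 0, 0⟩, ⟨0, 0, d, 0⟩, ?_, ?_, ?_⟩
  · simpa [reducedNorm_apply, pureSquare] using hca.le
  · simpa [reducedNorm_apply, pureSquare] using hdb.le
  · have hnorm : reducedNorm ((⟨0, c, 0, 0⟩ : ℍ[F,a,b]) * ⟨0, 0, d, 0⟩ -
        ⟨0, 0, d, 0⟩ * ⟨0, c, 0, 0⟩) = 2 ^ 2 * a * b * c ^ 2 * d ^ 2 := by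
      simp [reducedNorm_apply, pureSquare]
      ring
    rw [hnorm]
    have h2 : (2 : F) ≠ 0 := two_ne_zero
    simp [ha, hb, hc, hd, h2]

end Uniformizer

namespace IsRamified

open IsLocalRing

variable {F : Type*} [Field F] [CharZero F] {v : Valuation F ℤᵐ⁰} {a b π : F}

lemma exists_decomposition_of_valuation_reducedNorm_eq
    [Finite (ResidueField v.valuationSubring)] (h : IsRamified v a b)
    (hdisc : ∀ x : ℍ[F,a,b], v (reducedNorm x) ≤ 1 → v ((2 * x.re) ^ 2 - 4 * reducedNorm x) < 1)
    (hπ : v π = WithZero.exp (-1)) {p : ℍ[F,a,b]} (hp : v (reducedNorm p) = WithZero.exp (-1))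
    {x : ℍ[F,a,b]} (hx : v (reducedNorm x) ≤ 1) :
    ∃ α β : F, ∃ z : ℍ[F,a,b], v β ≤ 1 ∧ v (reducedNorm z) ≤ 1 ∧ x = α • 1 + β • p + π • z := by
  have hp0 := ne_zero_of_valuation_eq_exp hp
  have hexp {y : ℤᵐ⁰} (hy : y < 1) : y ≤ WithZero.exp (-1) := by
    rwa [← WithZero.lt_mul_exp_iff_le WithZero.exp_ne_zero, ← WithZero.exp_add]
  obtain ⟨α, -, hα⟩ := h.exists_valuation_reducedNorm_sub_smul_one_lt_one hx (hdisc x hx)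
  set y := (reducedNorm p)⁻¹ • ((x - α • 1) * star p)
  have hyp : y * p = x - α • 1 := inv_smul_mul_star_mul_cancel hp0 _
  have hy : v (reducedNorm y) ≤ 1 := by
    rw [reducedNorm_inv_smul_mul_star, map_div₀, hp]
    exact div_le_one_of_le₀ (hexp hα) zero_le
  obtain ⟨β, hβ, hyβ⟩ := h.exists_valuation_reducedNorm_sub_smul_one_lt_one hy (hdisc y hy)
  obtain ⟨z, hz, hz_eq⟩ := exists_eq_smul_of_valuation_reducedNorm_le hπ
    (x := (y - β • 1) * p) <| by
      rw [map_mul, map_mul, hp, show (-2 : ℤ) = -1 + -1 by norm_num, WithZero.exp_add]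
      exact mul_le_mul_left (hexp hyβ) _
  refine ⟨α, β, z, hβ, hz, ?_⟩
  rw [← hz_eq, sub_mul, hyp, smul_mul_assoc, one_mul]
  abel

lemma exists_decomposition [Finite (ResidueField v.valuationSubring)] (h : IsRamified v a b)
    (hdisc : ∀ x : ℍ[F,a,b], v (reducedNorm x) ≤ 1 → v ((2 * x.re) ^ 2 - 4 * reducedNorm x) < 1)
    (hπ : v π = WithZero.exp (-1)) :
    ∃ p : ℍ[F,a,b], v (reducedNorm p) ≤ 1 ∧ ∀ x : ℍ[F,a,b], v (reducedNorm x) ≤ 1 →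
      ∃ α β : F, ∃ z : ℍ[F,a,b], v β ≤ 1 ∧ v (reducedNorm z) ≤ 1 ∧
        x = α • 1 + β • p + π • z := by
  by_cases hp : ∃ p : ℍ[F,a,b], v (reducedNorm p) = WithZero.exp (-1)
  · obtain ⟨p, hp⟩ := hp
    exact ⟨p, valuation_le_one_of_eq_exp_neg_one hp, fun x hx =>
      h.exists_decomposition_of_valuation_reducedNorm_eq hdisc hπ hp hx⟩
  · push Not at hp
    refine ⟨0, by simp [reducedNorm_apply, pureSquare], fun x hx => ?_⟩
    obtain ⟨α, -, hα⟩ := h.exists_valuation_reducedNorm_sub_smul_one_lt_one hx (hdisc x hx)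
    have hle : v (reducedNorm (x - α • 1)) ≤ WithZero.exp (-2) := by
      rw [← WithZero.lt_mul_exp_iff_le WithZero.exp_ne_zero, ← WithZero.exp_add]
      refine lt_of_le_of_ne ?_ (hp _)
      rwa [← WithZero.lt_mul_exp_iff_le WithZero.exp_ne_zero, ← WithZero.exp_add]
    obtain ⟨z, hz, hz_eq⟩ := exists_eq_smul_of_valuation_reducedNorm_le hπ hle
    exact ⟨α, 0, z, by simp, hz, by rw [← hz_eq]; simp⟩

/-- If `x` and `y` are congruent to elements of `F(p)` modulo `π`, then their commutator is `π`
times a combination of commutators of integral quaternions. -/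
lemma valuation_reducedNorm_commutator_le (h : IsRamified v a b) (ha : a ≠ 0) (hb : b ≠ 0)
    (hπ : v π = WithZero.exp (-1)) {p : ℍ[F,a,b]} (hp : v (reducedNorm p) ≤ 1)
    (hdec : ∀ x : ℍ[F,a,b], v (reducedNorm x) ≤ 1 → ∃ α β : F, ∃ z : ℍ[F,a,b],
      v β ≤ 1 ∧ v (reducedNorm z) ≤ 1 ∧ x = α • 1 + β • p + π • z) (n : ℕ) :
    ∀ x y : ℍ[F,a,b], v (reducedNorm x) ≤ 1 → v (reducedNorm y) ≤ 1 →
      v (reducedNorm (x * y - y * x)) ≤ WithZero.exp (-n : ℤ) := by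
  induction n with
  | zero => simpa using fun x y hx hy => h.valuation_reducedNorm_commutator_le_one ha hb hx hy
  | succ n ih =>
    intro x y hx hy
    obtain ⟨α, β, z, hβ, hz, rfl⟩ := hdec x hx
    obtain ⟨α', β', z', hβ', hz', rfl⟩ := hdec y hy
    have hcomm : (α • 1 + β • p + π • z) * (α' • 1 + β' • p + π • z') -
        (α' • 1 + β' • p + π • z') * (α • 1 + β • p + π • z) =
        π • (β • (p * z' - z' * p) + β' • (z * p - p * z) + π • (z * z' - z' * z)) := by
      simp only [add_mul, mul_add, smul_mul_assoc, mul_smul_comm, one_mul, mul_one, smul_add,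
        smul_sub, smul_smul]
      module
    have hsmul {c : F} {q : ℍ[F,a,b]} (hc : v c ≤ 1)
        (hq : v (reducedNorm q) ≤ WithZero.exp (-n : ℤ)) :
        v (reducedNorm (c • q)) ≤ WithZero.exp (-n : ℤ) := by
      rw [reducedNorm_smul, map_mul, map_pow]
      exact (mul_le_of_le_one_left' (pow_le_one' hc 2)).trans hq
    have hsum := h.valuation_reducedNorm_add_le ha hb (h.valuation_reducedNorm_add_le ha hb
      (hsmul hβ (ih p z' hp hz')) (hsmul hβ' (ih z p hz hp)))
      (hsmul (valuation_le_one_of_eq_exp_neg_one hπ) (ih z z' hz hz'))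
    rw [hcomm, reducedNorm_smul, map_mul, map_pow, hπ]
    refine (mul_le_mul_right hsum _).trans ?_
    rw [← WithZero.exp_nsmul, ← WithZero.exp_add, WithZero.exp_le_exp]
    push_cast
    simp only [nsmul_eq_mul]
    omega

theorem exists_valuation_discr_eq_one [Finite (ResidueField v.valuationSubring)]
    (h : IsRamified v a b) (ha : a ≠ 0) (hb : b ≠ 0) (hπ : v π = WithZero.exp (-1)) :
    ∃ x : ℍ[F,a,b], v (reducedNorm x) ≤ 1 ∧ v ((2 * x.re) ^ 2 - 4 * reducedNorm x) = 1 := by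
  by_contra! hne
  obtain ⟨p, hp, hdec⟩ := h.exists_decomposition
    (fun x hx => (h.valuation_discr_le_one hx).lt_of_ne (hne x hx)) hπ
  obtain ⟨x, y, hx, hy, hxy⟩ := exists_reducedNorm_commutator_ne_zero ha hb hπ
  obtain ⟨n, hn⟩ := WithZero.exists_exp_neg_natCast_lt (v.ne_zero_iff.2 hxy)
  exact hn.not_ge (h.valuation_reducedNorm_commutator_le ha hb hπ hp hdec n x y hx hy)

end IsRamified

/-! ### Local traces -/

section SplitTraces

variable {k : Type*} [Field k]

lemma exists_sub_sq_eq_add [Finite k] [CharP k 2] {α β : k} (hα : ∀ δ, δ - δ ^ 2 ≠ α)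
    (hβ : ∀ δ, δ - δ ^ 2 ≠ β) : ∃ δ, δ - δ ^ 2 = α + β := by
  let φ : k →+ k :=
    { toFun := fun δ => δ - δ ^ 2
      map_zero' := by simp
      map_add' := fun x y => by rw [CharTwo.add_sq]; ring }
  have hker : (φ.ker : Set k) = {0, 1} := by
    ext x
    change x - x ^ 2 = 0 ↔ x = 0 ∨ x = 1
    rw [show x - x ^ 2 = x * (1 - x) by ring, mul_eq_zero, sub_eq_zero, eq_comm (a := (1 : k))]
  have hcard : Nat.card φ.ker = 2 := by
    rw [← SetLike.coe_sort_coe, hker, Nat.card_coe_set_eq, Set.ncard_pair zero_ne_one]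
  have hindex : φ.range.index = 2 := by
    have hmul := AddSubgroup.card_mul_index φ.ker
    rw [AddSubgroup.index_ker, hcard, ← AddSubgroup.card_mul_index φ.range, mul_comm 2] at hmul
    exact (Nat.eq_of_mul_eq_mul_left Nat.card_pos hmul).symm
  have hα' : α ∉ φ.range := fun ⟨δ, h⟩ => hα δ h
  have hβ' : β ∉ φ.range := fun ⟨δ, h⟩ => hβ δ h
  exact (AddSubgroup.add_mem_iff_of_index_two hindex).2 (iff_of_false hα' hβ')

variable (k) in
/-- The traces `ρ + ρ⁻¹` of the norm-one elements of the split étale algebra `k × k`, encoded as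
the coefficients `σ` for which `X² - σX + 1` has a root in `k`. -/
def splitTraces : Set k :=
  {σ | ∃ ρ, ρ ^ 2 - σ * ρ + 1 = 0}

lemma exists_add_inv_eq_of_mem_splitTraces {σ : k} (hσ : σ ∈ splitTraces k) :
    ∃ ρ ≠ 0, ρ + ρ⁻¹ = σ := by
  obtain ⟨ρ, hρ⟩ := hσ
  have hρ0 : ρ ≠ 0 := by rintro rfl; simp at hρ
  refine ⟨ρ, hρ0, ?_⟩
  field_simp
  linear_combination hρ

lemma two_mul_ncard_splitTraces_diff_le [Finite k] :
    2 * (splitTraces k \ {2, -2}).ncard ≤ ({0, 1, -1}ᶜ : Set k).ncard := by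
  classical
  have := Fintype.ofFinite k
  rw [Set.ncard_eq_toFinset_card', Set.ncard_eq_toFinset_card', mul_comm,
    ← mul_one (Finset.card (Set.toFinset {0, 1, -1}ᶜ))]
  refine Finset.card_mul_le_card_mul (fun σ ρ => ρ + ρ⁻¹ = σ) (fun σ hσ => ?_) fun ρ _ => ?_
  · obtain ⟨hσ, hσ2⟩ := Set.mem_toFinset.1 hσ
    obtain ⟨ρ, hρ0, rfl⟩ := exists_add_inv_eq_of_mem_splitTraces hσ
    have hρ1 : ρ ≠ 1 := by rintro rfl; norm_num at hσ2
    have hρ1' : ρ ≠ -1 := by rintro rfl; norm_num at hσ2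
    refine Finset.one_lt_card.2 ⟨ρ, ?_, ρ⁻¹, ?_, fun h => ?_⟩
    · simp [hρ0, hρ1, hρ1']
    · simp [hρ0, hρ1, inv_eq_iff_eq_inv, inv_neg, hρ1', add_comm]
    · simpa [hρ0, hρ1, hρ1'] using inv_eq_self₀.1 h.symm
  · refine Finset.card_le_one.2 fun σ hσ τ hτ => ?_
    rw [← ((Finset.mem_bipartiteBelow _).1 hσ).2, ← ((Finset.mem_bipartiteBelow _).1 hτ).2]

lemma ncard_splitTraces_add_ncard_diff_lt [Finite k] :
    (splitTraces k).ncard + (splitTraces k \ {2, -2}).ncard < Nat.card k := by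
  have hsplit : (splitTraces k).ncard ≤ (splitTraces k \ {2, -2}).ncard + ({2, -2} : Set k).ncard :=
    Set.ncard_le_ncard_sdiff_add_ncard _ _
  have htwo : ({2, -2} : Set k).ncard ≤ ({1, -1} : Set k).ncard := by
    have himage : ({2, -2} : Set k) = (fun x => 2 * x) '' {1, -1} := by simp [Set.image_pair]
    rw [himage]
    exact Set.ncard_image_le
  have hcompl := Set.ncard_add_ncard_compl ({0, 1, -1} : Set k)
  rw [Set.ncard_insert_of_notMem (by simp)] at hcompl
  have := two_mul_ncard_splitTraces_diff_le (k := k)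
  omega

lemma exists_notMem_splitTraces [Finite k] (τ : k) : ∃ σ ∉ splitTraces k,
    τ - σ ∉ splitTraces k ∨ τ - σ = 2 ∨ τ - σ = -2 := by
  have hlt : (splitTraces k ∪ (τ - ·) '' (splitTraces k \ {2, -2})).ncard <
      (Set.univ : Set k).ncard := by
    rw [Set.ncard_univ]
    exact ((Set.ncard_union_le _ _).trans (Nat.add_le_add_left Set.ncard_image_le _)).trans_lt
      ncard_splitTraces_add_ncard_diff_lt
  obtain ⟨σ, -, hσ⟩ := Set.exists_mem_notMem_of_ncard_lt_ncard hlt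
  rw [Set.mem_union, not_or] at hσ
  refine ⟨σ, hσ.1, ?_⟩
  by_contra! hτσ
  exact hσ.2 ⟨τ - σ, ⟨hτσ.1, by simpa using hτσ.2⟩, sub_sub_cancel _ _⟩

end SplitTraces

section SplitTraceField

variable {k : Type*} [Field k]

lemma sq_sub_four_ne_zero_of_notMem_splitTraces {σ : k} (hσ : σ ∉ splitTraces k) :
    σ ^ 2 - 4 ≠ 0 := by
  rw [show σ ^ 2 - 4 = (σ - 2) * (σ + 2) by ring]
  refine mul_ne_zero (fun h => hσ ⟨1, ?_⟩) fun h => hσ ⟨-1, ?_⟩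
  · linear_combination -h
  · linear_combination h

end SplitTraceField

section UnramifiedSquareClass

open IsLocalRing

variable {F Γ₀ : Type*} [Field F] [CharZero F] [LinearOrderedCommGroupWithZero Γ₀]
  {v : Valuation F Γ₀}

lemma mem_localSquares_of_residue_eq_sub_sq (h2 : v 2 < 1) {A : v.valuationSubring} {x : Fˣ}
    (hx : (x : F) = 1 - 4 * A) {δ : ResidueField v.valuationSubring}
    (hδ : δ - δ ^ 2 = residue v.valuationSubring A) : x ∈ localSquares v := by
  obtain ⟨D, rfl⟩ := residue_surjective δ
  rw [← map_pow, ← map_sub, residue_eq_residue_iff] at hδ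
  have hD : v (1 - 2 * (D : F)) = 1 :=
    v.map_one_sub_of_lt (by rw [map_mul]; exact mul_lt_one_of_lt_of_le h2 D.2)
  refine (mem_localSquares v).2 ⟨1 - 2 * D, fun h0 => by simp [h0] at hD, ?_⟩
  have h4 : 0 < v 4 := zero_lt_iff.2 (v.ne_zero_iff.2 (OfNat.ofNat_ne_zero 4))
  have hsub : (x : F) - (1 - 2 * D) ^ 2 = 4 * ((D - D ^ 2 : F) - A) := by
    rw [hx]
    ring
  rw [hsub, map_mul, map_mul, map_pow, hD, one_pow]
  exact mul_lt_mul_of_pos_left hδ h4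

lemma mul_mem_localSquares_of_one_sub_four_mul [Finite (ResidueField v.valuationSubring)]
    (h2 : v 2 < 1) {A B : v.valuationSubring} {x y : Fˣ} (hx : (x : F) = 1 - 4 * A)
    (hy : (y : F) = 1 - 4 * B) (hx_not : x ∉ localSquares v) (hy_not : y ∉ localSquares v) :
    x * y ∈ localSquares v := by
  have : CharP (ResidueField v.valuationSubring) 2 :=
    ringChar.of_eq (ringChar_residueField_eq_two_iff.2 h2)
  obtain ⟨δ, hδ⟩ := exists_sub_sq_eq_add
    (fun δ hδ => hx_not (mem_localSquares_of_residue_eq_sub_sq h2 hx hδ))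
    (fun δ hδ => hy_not (mem_localSquares_of_residue_eq_sub_sq h2 hy hδ))
  have hfour : (4 : ResidueField v.valuationSubring) = 0 := by
    rw [show (4 : ResidueField v.valuationSubring) = 2 * 2 by norm_num, CharTwo.two_eq_zero,
      zero_mul]
  refine mem_localSquares_of_residue_eq_sub_sq h2 (A := A + B - 4 * (A * B)) (δ := δ) ?_ ?_
  · rw [Units.val_mul, hx, hy]
    change _ = 1 - 4 * ((A : F) + B - 4 * (A * B))
    ring
  · rw [hδ, map_sub, map_add, map_mul, map_ofNat, hfour, zero_mul, sub_zero]

omit [CharZero F] in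
lemma exists_eq_sq_mul_one_sub_four_mul (h2 : v 2 < 1) {T N : F} (hN : v N ≤ 1) {e : Fˣ}
    (he : (e : F) = T ^ 2 - 4 * N) (hev : v (e : F) = 1) :
    ∃ y x : Fˣ, ∃ A : v.valuationSubring, e = y ^ 2 * x ∧ (x : F) = 1 - 4 * A := by
  have hT : v T = 1 := by
    have h4 : v (4 * N) < 1 := by
      rw [map_mul, valuation_four]
      exact mul_lt_one_of_lt_of_le (mul_lt_one_of_lt_of_le h2 h2.le) hN
    have hsq : v (T ^ 2) = v (e : F) := v.map_eq_of_sub_lt (by rwa [hev, he, sub_sub_cancel])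
    rw [hev, map_pow] at hsq
    exact (pow_eq_one_iff.1 hsq).resolve_right two_ne_zero
  have hT0 : T ≠ 0 := fun h => by simp [h] at hT
  have hA : v (N / T ^ 2) ≤ 1 := by rwa [map_div₀, map_pow, hT, one_pow, div_one]
  refine ⟨Units.mk0 T hT0, e * (Units.mk0 T hT0)⁻¹ ^ 2, ⟨N / T ^ 2, hA⟩, ?_, ?_⟩
  · rw [mul_left_comm, ← mul_pow, mul_inv_cancel, one_pow, mul_one]
  · simp only [Units.val_mul, he, Units.val_pow_eq_pow_val, Units.val_inv_eq_inv_val,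
      Units.val_mk0]
    field_simp

end UnramifiedSquareClass

section NumberField

variable {F : Type*} [Field F] [NumberField F] {w : HeightOneSpectrum (𝓞 F)}

/-- Unit discriminants of integral quadratic polynomials that are not local squares all define the
unramified quadratic extension of the completion. -/
theorem mul_mem_localSquares_of_discr {T N s M : F} (hN : w.valuation F N ≤ 1)
    (hM : w.valuation F M ≤ 1) {e d : Fˣ} (he : (e : F) = T ^ 2 - 4 * N)
    (hd : (d : F) = s ^ 2 - 4 * M) (hev : w.valuation F (e : F) = 1)
    (hdv : w.valuation F (d : F) = 1) (he_not : e ∉ localSquares (w.valuation F))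
    (hd_not : d ∉ localSquares (w.valuation F)) : e * d ∈ localSquares (w.valuation F) := by
  rcases (valuation_two_le_one (w.valuation F)).eq_or_lt with h2 | h2
  · exact mul_mem_localSquares_of_notMem h2 hev hdv he_not hd_not
  · obtain ⟨y, x, A, rfl, hx⟩ := exists_eq_sq_mul_one_sub_four_mul h2 hN he hev
    obtain ⟨y', x', B, rfl, hx'⟩ := exists_eq_sq_mul_one_sub_four_mul h2 hM hd hdv
    rw [Subgroup.mul_mem_cancel_left _ (sq_mem_localSquares _ _)] at he_not hd_not
    rw [mul_mul_mul_comm, Subgroup.mul_mem_cancel_left _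
      (mul_mem (sq_mem_localSquares _ _) (sq_mem_localSquares _ _))]
    exact mul_mem_localSquares_of_one_sub_four_mul h2 hx hx' he_not hd_not

end NumberField

section NonsplitTrace

open IsLocalRing

variable {F Γ₀ : Type*} [Field F] [LinearOrderedCommGroupWithZero Γ₀] {v : Valuation F Γ₀}

lemma valuation_sq_sub_four_eq_one {s : v.valuationSubring}
    (hs : residue v.valuationSubring s ∉ splitTraces (ResidueField v.valuationSubring)) :
    v ((s : F) ^ 2 - 4) = 1 := by
  have hne := sq_sub_four_ne_zero_of_notMem_splitTraces hs
  rw [← map_pow, ← map_ofNat (residue v.valuationSubring) 4, ← map_sub] at hne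
  exact residue_ne_zero_iff_valuation_eq_one.1 hne

lemma valuation_le_one_of_sq_sub_mul_add_one {s r : F} (hs : v s ≤ 1)
    (h : v (r ^ 2 - s * r + 1) ≤ 1) : v r ≤ 1 := by
  by_contra! hr
  have hsub : v (r - s) = v r := v.map_sub_eq_of_lt_left (hs.trans_lt hr)
  have hmul : v (r * (r - s)) ≤ 1 := by
    rw [show r * (r - s) = r ^ 2 - s * r + 1 - 1 by ring]
    exact v.map_sub_le h v.map_one.le
  rw [map_mul, hsub] at hmul
  exact (one_lt_mul'' hr hr).not_ge hmul

lemma notMem_localSquares_of_eq_sq_sub_four [CharZero F] {s : v.valuationSubring}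
    (hs : residue v.valuationSubring s ∉ splitTraces (ResidueField v.valuationSubring)) {d : Fˣ}
    (hd : (d : F) = (s : F) ^ 2 - 4) : d ∉ localSquares v := by
  intro hsq
  obtain ⟨y, -, hlt⟩ := (mem_localSquares v).1 hsq
  have hy : v (y ^ 2) = 1 := by
    rw [← valuation_eq_of_sub_lt_four hlt, hd, valuation_sq_sub_four_eq_one hs]
  have hroot : v (((s + y) / 2) ^ 2 - s * ((s + y) / 2) + 1) < 1 := by
    rw [show ((s + y) / 2) ^ 2 - s * ((s + y) / 2) + 1 = -((s ^ 2 - 4 - y ^ 2 : F) / 4) by ring,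
      Valuation.map_neg, map_div₀, div_lt_one₀ (zero_lt_iff.2 (v.ne_zero_iff.2
        (OfNat.ofNat_ne_zero 4))), ← hd]
    rwa [map_mul, hy, mul_one] at hlt
  refine hs ⟨residue _ ⟨(s + y) / 2, valuation_le_one_of_sq_sub_mul_add_one s.2 hroot.le⟩, ?_⟩
  rw [← map_pow, ← map_mul, ← map_sub, ← map_one (residue v.valuationSubring), ← map_add,
    residue_eq_zero_iff_valuation_lt_one]
  exact hroot

end NonsplitTrace

section LocalTrace

variable {F Γ₀ : Type*} [Field F] [CharZero F] [LinearOrderedCommGroupWithZero Γ₀]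
  {v : Valuation F Γ₀} {a b s : F}

/-- The quaternion algebra `H_{a,b}` has an element of norm one and trace `s ≠ ±2` locally at `v`:
the discriminant `s² - 4` is, up to a local square factor, the square of a pure quaternion. -/
def IsLocalTrace (v : Valuation F Γ₀) (a b s : F) : Prop :=
  ∃ u t r : F, ∃ x : Fˣ, (x : F) = pureSquare a b u t r * (s ^ 2 - 4) ∧ x ∈ localSquares v

lemma IsLocalTrace.eventually (h : IsLocalTrace v a b s) :
    ∃ γ ≠ 0, ∀ s' : F, v (s' - s) < γ → IsLocalTrace v a b s' := by
  obtain ⟨u, t, r, x, hx, hx_mem⟩ := h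
  obtain ⟨γ, hγ, happrox⟩ := exists_forall_valuation_mul_sq_sub_lt v (pureSquare a b u t r) s
    (v.ne_zero_iff.2 (mul_ne_zero (OfNat.ofNat_ne_zero 4) x.ne_zero))
  refine ⟨γ, hγ, fun s' hs' => ?_⟩
  have hlt : v (pureSquare a b u t r * (s' ^ 2 - 4) - x) < v (4 * (x : F)) := by
    convert happrox s' hs' using 2
    rw [hx]
    ring
  have h0 : pureSquare a b u t r * (s' ^ 2 - 4) ≠ 0 := fun h0 => by
    have hx0 := valuation_eq_of_sub_lt_four hlt
    rw [h0, map_zero] at hx0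
    exact v.ne_zero_iff.2 x.ne_zero hx0.symm
  exact ⟨u, t, r, Units.mk0 _ h0, rfl, mem_localSquares_of_close hx_mem hlt⟩

end LocalTrace

lemma exists_isLocalTrace_valuation_sub_lt_one {F : Type*} [Field F] [CharZero F]
    {v : Valuation F ℤᵐ⁰} {π : F} (hπ : v π = WithZero.exp (-1)) {a : F} (ha : a ≠ 0) (b : F)
    {ε : F} (hε : ε ^ 2 = 1) : ∃ s : F, v (s - 2 * ε) < 1 ∧ IsLocalTrace v a b s := by
  obtain ⟨c, hc, hlt⟩ := exists_valuation_mul_sq_lt_one hπ a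
  set P := a * c ^ 2 with hP
  have hP0 : P ≠ 0 := mul_ne_zero ha (pow_ne_zero 2 hc)
  have hvP : v (1 - P) = 1 := v.map_one_sub_of_lt hlt
  have h1P : 1 - P ≠ 0 := fun h => by simp [h] at hvP
  have hvε : v ε = 1 := by
    have hsq : v ε ^ 2 = 1 := by rw [← map_pow, hε, map_one]
    exact (pow_eq_one_iff.1 hsq).resolve_right two_ne_zero
  -- `4 / (1 - P) - 2` is the trace of `(1 + q) / (1 - q)` for the pure quaternion `q = c i`.
  refine ⟨ε * (4 / (1 - P) - 2), ?_, c, 0, 0,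
    Units.mk0 (4 * P / (1 - P)) (div_ne_zero (mul_ne_zero (OfNat.ofNat_ne_zero 4) hP0) h1P) ^ 2, ?_,
    sq_mem_localSquares _ _⟩
  · rw [show ε * (4 / (1 - P) - 2) - 2 * ε = ε * (4 * P / (1 - P)) by field_simp; ring, map_mul,
      map_div₀, hvε, hvP, div_one, one_mul]
    exact (valuation_four_mul_le v P).trans_lt hlt
  · have hpure : pureSquare a b c 0 0 = P := by simp [pureSquare, hP]
    rw [hpure, Units.val_pow_eq_pow_val, Units.val_mk0, mul_pow, hε]
    field_simp
    ring

namespace IsRamified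

open IsLocalRing

variable {F : Type*} [Field F] [NumberField F] {a b : F} {w : HeightOneSpectrum (𝓞 F)}

lemma isLocalTrace_of_notMem_splitTraces (h : IsRamified (w.valuation F) a b) (ha : a ≠ 0)
    (hb : b ≠ 0) {s : (w.valuation F).valuationSubring}
    (hs : residue _ s ∉ splitTraces (ResidueField (w.valuation F).valuationSubring)) :
    IsLocalTrace (w.valuation F) a b s := by
  obtain ⟨π, hπ⟩ := w.valuation_exists_uniformizer F
  obtain ⟨x, hx, hdiscr⟩ := h.exists_valuation_discr_eq_one ha hb hπ
  have hpure : (2 * x.re) ^ 2 - 4 * reducedNorm x =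
      pureSquare a b (2 * x.imI) (2 * x.imJ) (2 * x.imK) := by
    rw [reducedNorm_apply, pureSquare_mul]
    ring
  have hsv := valuation_sq_sub_four_eq_one hs
  have hx0 : (2 * x.re) ^ 2 - 4 * reducedNorm x ≠ 0 := fun h0 => by simp [h0] at hdiscr
  have hs0 : (s : F) ^ 2 - 4 ≠ 0 := fun h0 => by simp [h0] at hsv
  refine ⟨2 * x.imI, 2 * x.imJ, 2 * x.imK, Units.mk0 _ hx0 * Units.mk0 _ hs0, ?_, ?_⟩
  · rw [← hpure, Units.val_mul, Units.val_mk0, Units.val_mk0]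
  · exact mul_mem_localSquares_of_discr (s := (s : F)) (M := 1) hx (map_one _).le rfl (by simp)
      hdiscr hsv
      (h _ _ _ _ hpure) (notMem_localSquares_of_eq_sq_sub_four hs rfl)

lemma exists_isLocalTrace_sub_of_residue_eq (h : IsRamified (w.valuation F) a b) (ha : a ≠ 0)
    (hb : b ≠ 0) {t s ε : (w.valuation F).valuationSubring}
    (hs : residue _ s ∉ splitTraces (ResidueField (w.valuation F).valuationSubring))
    (hε : ε ^ 2 = 1) (hts : residue _ t - residue _ s = residue _ (2 * ε)) :
    ∃ s' : F, IsLocalTrace (w.valuation F) a b s' ∧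
      IsLocalTrace (w.valuation F) a b ((t : F) - s') := by
  obtain ⟨π, hπ⟩ := w.valuation_exists_uniformizer F
  obtain ⟨s', hlt, hs'⟩ := exists_isLocalTrace_valuation_sub_lt_one hπ ha b (ε := ε)
    (congrArg Subtype.val hε)
  have hs'v : w.valuation F s' ≤ 1 := by
    have h2ε : w.valuation F (2 * (ε : F)) ≤ 1 := (2 * ε : (w.valuation F).valuationSubring).2
    simpa only [sub_add_cancel] using (w.valuation F).map_add_le hlt.le h2ε
  lift s' to (w.valuation F).valuationSubring using hs'v
  refine ⟨s', hs', h.isLocalTrace_of_notMem_splitTraces ha hb (s := t - s') ?_⟩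
  have hres : residue _ s' = residue _ (2 * ε) := residue_eq_residue_iff.2 hlt
  rwa [map_sub, hres, ← hts, sub_sub_cancel]

/-- Modulo `w`, split `t` as a sum of two traces of which at least one is not a split trace and the
other is not a split trace or is `±2`. -/
theorem exists_isLocalTrace_sub (h : IsRamified (w.valuation F) a b) (ha : a ≠ 0)
    (hb : b ≠ 0) {t : F} (ht : w.valuation F t ≤ 1) :
    ∃ s : F, IsLocalTrace (w.valuation F) a b s ∧ IsLocalTrace (w.valuation F) a b (t - s) := by
  lift t to (w.valuation F).valuationSubring using ht
  obtain ⟨σ, hσ, hτσ⟩ := exists_notMem_splitTraces (residue _ t)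
  obtain ⟨s, rfl⟩ := residue_surjective σ
  rcases hτσ with hτσ | hτσ | hτσ
  · rw [← map_sub] at hτσ
    exact ⟨s, h.isLocalTrace_of_notMem_splitTraces ha hb hσ,
      h.isLocalTrace_of_notMem_splitTraces ha hb hτσ⟩
  · exact h.exists_isLocalTrace_sub_of_residue_eq ha hb hσ (ε := 1) (one_pow 2)
      (by rw [hτσ, mul_one, map_ofNat])
  · exact h.exists_isLocalTrace_sub_of_residue_eq ha hb hσ (ε := -1) neg_one_sq
      (by rw [hτσ, mul_neg_one, map_neg, map_ofNat])

end IsRamified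

/-! ### From local to global traces -/

section UnitConic

open IsLocalRing Polynomial

lemma exists_mul_sq_add_mul_sq_eq {k : Type*} [Field k] [Finite k] (hk : ringChar k ≠ 2) {α β : k}
    (hα : α ≠ 0) (hβ : β ≠ 0) (γ : k) : ∃ x y : k, α * x ^ 2 + β * y ^ 2 = γ := by
  have := Fintype.ofFinite k
  have hdeg : (C β * X ^ 2 : k[X]).degree = 2 := degree_C_mul_X_pow 2 hβ
  have hdeg' : (C β * X ^ 2 - C γ).degree = 2 := by
    rwa [degree_sub_C (by rw [hdeg]; norm_num)]
  obtain ⟨x, y, h⟩ := FiniteField.exists_root_sum_quadratic (degree_C_mul_X_pow 2 hα) hdeg'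
    (FiniteField.odd_card_of_char_ne_two hk)
  refine ⟨x, y, ?_⟩
  simp only [eval_mul, eval_sub, eval_C, eval_pow, eval_X] at h
  linear_combination h

lemma locallySolvable_of_valuation_eq_one {F Γ₀ : Type*} [Field F] [CharZero F]
    [LinearOrderedCommGroupWithZero Γ₀] {v : Valuation F Γ₀}
    [Finite (ResidueField v.valuationSubring)] (h2 : v 2 = 1) {a b : F} (ha : v a = 1)
    (hb : v b = 1) : LocallySolvable v a b := by
  have hchar : ringChar (ResidueField v.valuationSubring) ≠ 2 := by
    rw [Ne, ringChar_residueField_eq_two_iff, h2]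
    exact lt_irrefl 1
  lift a to v.valuationSubring using ha.le
  lift b to v.valuationSubring using hb.le
  obtain ⟨ξ, η, h⟩ := exists_mul_sq_add_mul_sq_eq hchar
    (residue_ne_zero_iff_valuation_eq_one.2 ha) (residue_ne_zero_iff_valuation_eq_one.2 hb) 1
  obtain ⟨x, rfl⟩ := residue_surjective ξ
  obtain ⟨y, rfl⟩ := residue_surjective η
  rw [← map_one (residue _), ← map_pow, ← map_pow, ← map_mul, ← map_mul, ← map_add,
    residue_eq_residue_iff] at h
  have hlt : v ((a * x ^ 2 + b * y ^ 2 : F) - 1) < v (4 * 1) := by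
    rwa [mul_one, valuation_four, h2, one_mul]
  have h0 : (a * x ^ 2 + b * y ^ 2 : F) ≠ 0 := fun h0 => by
    simpa [h0] using valuation_eq_of_sub_lt_four hlt
  exact ⟨x, y, Units.mk0 _ h0, rfl, (mem_localSquares v).2 ⟨1, one_ne_zero, by simpa using hlt⟩⟩

end UnitConic

section RamifiedPlaces

lemma LocallySolvable.not_isRamified {F Γ₀ : Type*} [Field F] [CharZero F]
    [LinearOrderedCommGroupWithZero Γ₀] {v : Valuation F Γ₀} {a b : F}
    (h : LocallySolvable v a b) : ¬ IsRamified v a b := by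
  obtain ⟨x, y, z, hz, hz_mem⟩ := h
  exact fun hram => hram x y 0 z (by rw [hz, pureSquare]; ring) hz_mem

variable {F : Type*} [Field F] [NumberField F] {a b : F} {w : HeightOneSpectrum (𝓞 F)}

lemma conicSolvable_of_pureSquare_mem_localSquares {u t s : F} {x : Fˣ}
    (hx : (x : F) = pureSquare a b u t s) (h : x ∈ localSquares (w.valuation F)) :
    ConicSolvable (algebraMap F (w.adicCompletion F) a) (algebraMap F _ b) := by
  obtain ⟨r, hr⟩ := isSquare_algebraMap_of_mem_localSquares w h
  have hr0 : r ≠ 0 := by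
    rintro rfl
    simp at hr
  refine conicSolvable_of_pure_sq hr0 (u := algebraMap F _ u) (v := algebraMap F _ t)
    (w := algebraMap F _ s) ?_
  rw [sq, ← hr, hx, pureSquare]
  simp only [map_add, map_sub, map_mul, map_pow]

lemma conicSolvable_of_not_isRamified (h : ¬ IsRamified (w.valuation F) a b) :
    ConicSolvable (algebraMap F (w.adicCompletion F) a) (algebraMap F _ b) := by
  simp only [IsRamified, not_forall, not_not] at h
  obtain ⟨u, t, s, x, hx, hx_mem⟩ := h
  exact conicSolvable_of_pureSquare_mem_localSquares hx hx_mem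

lemma not_isRamified_iff_locallySolvable (ha : a ≠ 0) (hb : b ≠ 0) :
    ¬ IsRamified (w.valuation F) a b ↔ LocallySolvable (w.valuation F) a b :=
  ⟨fun h => locallySolvable_of_conicSolvable w ha hb (conicSolvable_of_not_isRamified h),
    LocallySolvable.not_isRamified⟩

theorem isRamified_iff_not_conicSolvable (ha : a ≠ 0) (hb : b ≠ 0) :
    IsRamified (w.valuation F) a b ↔
      ¬ ConicSolvable (algebraMap F (w.adicCompletion F) a) (algebraMap F _ b) :=
  ⟨fun h hconic => (locallySolvable_of_conicSolvable w ha hb hconic).not_isRamified h,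
    not_imp_comm.1 conicSolvable_of_not_isRamified⟩

lemma finite_isRamified (ha : a ≠ 0) (hb : b ≠ 0) :
    {w : HeightOneSpectrum (𝓞 F) | IsRamified (w.valuation F) a b}.Finite := by
  refine (((finite_valuation_ne_one (Units.mk0 (2 : F) two_ne_zero)).union
    (finite_valuation_ne_one (Units.mk0 a ha))).union
    (finite_valuation_ne_one (Units.mk0 b hb))).subset fun w hw => ?_
  by_contra hn
  simp only [Set.mem_union, Set.mem_ofPred_eq, Units.val_mk0, not_or, not_not] at hn
  obtain ⟨⟨h2, ha⟩, hb⟩ := hn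
  exact (locallySolvable_of_valuation_eq_one h2 ha hb).not_isRamified hw

end RamifiedPlaces

section AdjoinSqrt

variable {F : Type*} [Field F] {a b d : F}

/-- A product `q q'` of orthogonal pure quaternions is pure, with square `-q² q'²`. -/
lemma exists_pureSquare_eq_of_orthogonal {u t s u' t' s' : F}
    (h : pureSquare a b u t s + d * pureSquare a b u' t' s' = 0)
    (horth : a * u * u' + b * t * t' - a * b * s * s' = 0) (h' : pureSquare a b u' t' s' ≠ 0) :
    ∃ x y z : F, pureSquare a b x y z = d := by
  set q : ℍ[F,a,b] := ⟨0, u, t, s⟩ * ⟨0, u', t', s'⟩ with hq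
  have hq_re : q.re = 0 := by simpa [hq] using horth
  have hq_norm : reducedNorm q = pureSquare a b u t s * pureSquare a b u' t' s' := by
    rw [hq, map_mul, reducedNorm_apply, reducedNorm_apply]
    ring
  have hq_sq : pureSquare a b q.imI q.imJ q.imK = d * pureSquare a b u' t' s' ^ 2 := by
    rw [reducedNorm_apply, hq_re] at hq_norm
    linear_combination -hq_norm - pureSquare a b u' t' s' * h
  refine ⟨(pureSquare a b u' t' s')⁻¹ * q.imI, (pureSquare a b u' t' s')⁻¹ * q.imJ,
    (pureSquare a b u' t' s')⁻¹ * q.imK, ?_⟩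
  rw [pureSquare_mul, hq_sq]
  field_simp

theorem exists_pureSquare_eq_of_adjoinSqrt [NeZero (2 : F)] (ha : a ≠ 0) (hb : b ≠ 0)
    {U T S : AdjoinSqrt d} (h0 : pureSquare (algebraMap F _ a) (algebraMap F _ b) U T S = 0)
    (hne : ¬(U = 0 ∧ T = 0 ∧ S = 0)) : ∃ u t s : F, pureSquare a b u t s = d := by
  obtain ⟨u, u'⟩ := U
  obtain ⟨t, t'⟩ := T
  obtain ⟨s, s'⟩ := S
  have hre : pureSquare a b u t s + d * pureSquare a b u' t' s' = 0 := by
    refine Eq.trans ?_ (congrArg QuadraticAlgebra.re h0)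
    simp only [pureSquare, sq, QuadraticAlgebra.mk_mul_mk, QuadraticAlgebra.re_sub,
      QuadraticAlgebra.re_add, QuadraticAlgebra.re_mul, QuadraticAlgebra.algebraMap_re,
      QuadraticAlgebra.algebraMap_im, QuadraticAlgebra.im_mul, zero_mul, mul_zero, add_zero]
    ring
  have him : 2 * (a * u * u' + b * t * t' - a * b * s * s') = 0 := by
    refine Eq.trans ?_ (congrArg QuadraticAlgebra.im h0)
    simp only [pureSquare, sq, QuadraticAlgebra.mk_mul_mk, QuadraticAlgebra.im_sub,
      QuadraticAlgebra.im_add, QuadraticAlgebra.im_mul, QuadraticAlgebra.algebraMap_re,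
      QuadraticAlgebra.algebraMap_im, QuadraticAlgebra.re_mul, zero_mul, mul_zero, add_zero]
    ring
  by_cases hz : pureSquare a b u' t' s' = 0
  · by_cases h' : u' = 0 ∧ t' = 0 ∧ s' = 0
    · obtain ⟨rfl, rfl, rfl⟩ := h'
      refine exists_pureSquare_eq ha hb (u := u) (t := t) (s := s) (by rw [← hre, hz]; ring) ?_ d
      rintro ⟨rfl, rfl, rfl⟩
      exact hne ⟨rfl, rfl, rfl⟩
    · exact exists_pureSquare_eq ha hb hz h' d
  · exact exists_pureSquare_eq_of_orthogonal hre ((mul_eq_zero.1 him).resolve_left two_ne_zero) hz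

end AdjoinSqrt

section Global

lemma map_mem_totallyPositive {F E : Type*} [Field F] [Field E] (f : F →+* E) {a : Fˣ}
    (ha : a ∈ totallyPositive F) : Units.map (f : F →* E) a ∈ totallyPositive E :=
  mem_totallyPositive.2 fun τ => mem_totallyPositive.1 ha (τ.comp f)

variable {F : Type*} [Field F] [NumberField F] {a b : Fˣ}

lemma exists_pureSquare_eq_zero_of_forall_locallySolvable (ha : a ∈ totallyPositive F)
    (hb : b ∈ totallyPositive F)
    (h : ∀ w : HeightOneSpectrum (𝓞 F), LocallySolvable (w.valuation F) (a : F) b) :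
    ∃ u t s : F, pureSquare (a : F) b u t s = 0 ∧ ¬(u = 0 ∧ t = 0 ∧ s = 0) := by
  obtain ⟨z, x, y, hne, hz⟩ := conicSolvable_of_forall_locallySolvable ha hb h
  refine ⟨b * y, a * x, z, ?_, fun h0 => hne ?_⟩
  · unfold pureSquare
    linear_combination (-a * b : F) * hz
  · simpa [and_comm, and_assoc, and_left_comm] using h0

lemma LocallySolvable.of_under {E : Type*} [Field E] [NumberField E] [Algebra F E]
    {P : HeightOneSpectrum (𝓞 E)} {a b : F}
    (h : LocallySolvable ((P.under (𝓞 F)).valuation F) a b) :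
    LocallySolvable (P.valuation E) (algebraMap F E a) (algebraMap F E b) := by
  obtain ⟨x, y, z, hz, hz_mem⟩ := h
  exact ⟨algebraMap F E x, algebraMap F E y, _, by simp [hz], map_mem_localSquares hz_mem⟩

lemma locallySolvable_adjoinSqrt {a b d : F} [Fact (∀ r : F, r ^ 2 ≠ d + 0 * r)] (ha : a ≠ 0)
    (hb : b ≠ 0) {P : HeightOneSpectrum (𝓞 (AdjoinSqrt d))}
    (h : IsRamified ((P.under (𝓞 F)).valuation F) a b → ∃ u t s : F, ∃ x : Fˣ,
      (x : F) = pureSquare a b u t s * d ∧ x ∈ localSquares ((P.under (𝓞 F)).valuation F)) :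
    LocallySolvable (P.valuation (AdjoinSqrt d)) (algebraMap F _ a) (algebraMap F _ b) := by
  by_cases hram : IsRamified ((P.under (𝓞 F)).valuation F) a b
  · obtain ⟨u, t, s, x, hx, hx_mem⟩ := h hram
    rw [← not_isRamified_iff_locallySolvable (by simpa using ha) (by simpa using hb)]
    refine fun hram => hram (QuadraticAlgebra.omega * algebraMap F _ u)
      (QuadraticAlgebra.omega * algebraMap F _ t) (QuadraticAlgebra.omega * algebraMap F _ s) _ ?_
      (map_mem_localSquares hx_mem)
    rw [pureSquare_mul, omega_sq]
    simp only [pureSquare, Units.coe_map, MonoidHom.coe_coe, hx, map_mul, map_sub, map_add, map_pow]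
    ring
  · exact ((not_isRamified_iff_locallySolvable ha hb).1 hram).of_under

/-- The extension `F(√d)` splits `H_{a,b}` at every place, so the local-global principle for conics
over `F(√d)` applies. -/
theorem exists_pureSquare_eq_of_forall_isRamified (ha : a ∈ totallyPositive F)
    (hb : b ∈ totallyPositive F) {d : F}
    (h : ∀ w : HeightOneSpectrum (𝓞 F), IsRamified (w.valuation F) (a : F) b →
      ∃ u t s : F, ∃ x : Fˣ,
        (x : F) = pureSquare (a : F) b u t s * d ∧ x ∈ localSquares (w.valuation F)) :
    ∃ u t s : F, pureSquare (a : F) b u t s = d := by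
  by_cases hd : IsSquare d
  · obtain ⟨y, rfl⟩ := hd
    obtain ⟨u, t, s, h0, hne⟩ := exists_pureSquare_eq_zero_of_forall_locallySolvable ha hb
      fun w => (not_isRamified_iff_locallySolvable a.ne_zero b.ne_zero).1 fun hram => by
        obtain ⟨u, t, s, x, hx, hx_mem⟩ := h w hram
        exact hram (y * u) (y * t) (y * s) x (by rw [hx, pureSquare_mul]; ring) hx_mem
    exact exists_pureSquare_eq a.ne_zero b.ne_zero h0 hne _
  · have := fact_ne_of_not_isSquare hd
    obtain ⟨U, T, S, h0, hne⟩ := exists_pureSquare_eq_zero_of_forall_locallySolvable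
      (map_mem_totallyPositive (algebraMap F (AdjoinSqrt d)) ha)
      (map_mem_totallyPositive (algebraMap F (AdjoinSqrt d)) hb)
      fun P => locallySolvable_adjoinSqrt a.ne_zero b.ne_zero (h _)
    exact exists_pureSquare_eq_of_adjoinSqrt a.ne_zero b.ne_zero h0 hne

/-- The set `S` of reduced traces of elements of reduced norm one in `H_{a,b}`. -/
def normOneTraces {R : Type*} [CommRing R] (a b : R) : Set R :=
  {s | ∃ x : ℍ[R,a,b], x * star x = 1 ∧ x + star x = algebraMap R ℍ[R,a,b] s}

lemma mem_normOneTraces_of_pureSquare_eq {K : Type*} [Field K] [NeZero (2 : K)] {a b s u t r : K}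
    (h : pureSquare a b u t r = s ^ 2 - 4) : s ∈ normOneTraces a b := by
  have h2 : (2 : K) ≠ 0 := two_ne_zero
  refine ⟨⟨s / 2, u / 2, t / 2, r / 2⟩, ?_, ?_⟩
  · rw [mul_star_eq_one_iff, reducedNorm_apply]
    unfold pureSquare at h ⊢
    field_simp
    linear_combination -h
  · rw [add_star_eq_algebraMap_iff]
    field_simp

theorem mem_normOneTraces_of_forall_isLocalTrace (ha : a ∈ totallyPositive F)
    (hb : b ∈ totallyPositive F) {s : F}
    (h : ∀ w : HeightOneSpectrum (𝓞 F), IsRamified (w.valuation F) (a : F) b →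
      IsLocalTrace (w.valuation F) (a : F) b s) : s ∈ normOneTraces (a : F) b := by
  obtain ⟨u, t, r, hs⟩ := exists_pureSquare_eq_of_forall_isRamified ha hb h
  exact mem_normOneTraces_of_pureSquare_eq hs

lemma IsRamified.valuation_le_one_of_mem_normOneTraces {F Γ₀ : Type*} [Field F] [CharZero F]
    [LinearOrderedCommGroupWithZero Γ₀] {v : Valuation F Γ₀} {a b s : F} (h : IsRamified v a b)
    (hs : s ∈ normOneTraces a b) : v s ≤ 1 := by
  obtain ⟨x, hx, hxs⟩ := hs
  rw [mul_star_eq_one_iff] at hx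
  rw [add_star_eq_algebraMap_iff] at hxs
  rw [← hxs]
  exact h.valuation_two_mul_re_le_one (by rw [hx, map_one])

lemma IsRamified.exists_forall_isLocalTrace_sub {a b t : F} {w : HeightOneSpectrum (𝓞 F)}
    (h : IsRamified (w.valuation F) a b) (ha : a ≠ 0) (hb : b ≠ 0) (ht : w.valuation F t ≤ 1) :
    ∃ s : F, ∃ γ ≠ 0, ∀ s' : F, w.valuation F (s' - s) < γ →
      IsLocalTrace (w.valuation F) a b s' ∧ IsLocalTrace (w.valuation F) a b (t - s') := by
  obtain ⟨s, hs, hts⟩ := h.exists_isLocalTrace_sub ha hb ht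
  obtain ⟨γ, hγ, hs⟩ := hs.eventually
  obtain ⟨γ', hγ', hts⟩ := hts.eventually
  refine ⟨s, min γ γ', (lt_min (zero_lt_iff.2 hγ) (zero_lt_iff.2 hγ')).ne', fun s' hs' =>
    ⟨hs _ (hs'.trans_le (min_le_left _ _)), hts _ ?_⟩⟩
  rw [sub_sub_sub_cancel_left, Valuation.map_sub_swap]
  exact hs'.trans_le (min_le_right _ _)

lemma exists_forall_isRamified_isLocalTrace_sub {a b t : F} (ha : a ≠ 0) (hb : b ≠ 0)
    (h : ∀ w : HeightOneSpectrum (𝓞 F), IsRamified (w.valuation F) a b → w.valuation F t ≤ 1) :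
    ∃ s : F, ∀ w : HeightOneSpectrum (𝓞 F), IsRamified (w.valuation F) a b →
      IsLocalTrace (w.valuation F) a b s ∧ IsLocalTrace (w.valuation F) a b (t - s) := by
  choose! σ γ hγ hσ using fun w hw =>
    IsRamified.exists_forall_isLocalTrace_sub (F := F) hw ha hb (h w hw)
  obtain ⟨s, hs⟩ := exists_valuation_sub_lt (finite_isRamified ha hb).toFinset σ
    fun w hw => hγ w ((Set.Finite.mem_toFinset _).1 hw)
  exact ⟨s, fun w hw => hσ w hw s (hs w ((Set.Finite.mem_toFinset _).2 hw))⟩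

theorem exists_add_mem_normOneTraces_iff (ha : a ∈ totallyPositive F) (hb : b ∈ totallyPositive F)
    {t : F} :
    (∃ s s' : F, s ∈ normOneTraces (a : F) b ∧ s' ∈ normOneTraces (a : F) b ∧ t = s + s') ↔
      ∀ w : HeightOneSpectrum (𝓞 F), IsRamified (w.valuation F) (a : F) b →
        w.valuation F t ≤ 1 := by
  constructor
  · rintro ⟨s, s', hs, hs', rfl⟩ w hw
    exact Valuation.map_add_le _ (hw.valuation_le_one_of_mem_normOneTraces hs)
      (hw.valuation_le_one_of_mem_normOneTraces hs')
  · intro h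
    obtain ⟨s, hs⟩ := exists_forall_isRamified_isLocalTrace_sub a.ne_zero b.ne_zero h
    exact ⟨s, t - s, mem_normOneTraces_of_forall_isLocalTrace ha hb fun w hw => (hs w hw).1,
      mem_normOneTraces_of_forall_isLocalTrace ha hb fun w hw => (hs w hw).2,
      (add_sub_cancel s t).symm⟩

end Global

end NormOneTrace

/-- For totally positive `a, b ∈ Kˣ` over a number field `K`, the set
`T = S + S`, where `S` is the set of reduced traces of norm-one quaternions in `H_(a,b)`,
equals the set of elements of `K` that are integral at every finite place `𝔮` at which the
quaternion algebra `H_(a,b)` does not split (i.e. at which the conic `z² − au² − bv²` is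
anisotropic). -/
theorem traces_of_norm_one_quaternions
    (K : Type*) [Field K] [NumberField K] (a b : K) (ha0 : a ≠ 0) (hb0 : b ≠ 0)
    (ha : ∀ σ : K →+* ℝ, 0 < σ a) (hb : ∀ σ : K →+* ℝ, 0 < σ b) :
    {t : K | ∃ s s' : K,
        (∃ x : ℍ[K,a,b], x * star x = 1 ∧ x + star x = algebraMap K ℍ[K,a,b] s) ∧
        (∃ x : ℍ[K,a,b], x * star x = 1 ∧ x + star x = algebraMap K ℍ[K,a,b] s') ∧
        t = s + s'} =
      {t : K | ∀ 𝔮 : HeightOneSpectrum (𝓞 K),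
        (¬ ∃ z u v : 𝔮.adicCompletion K, ¬(z = 0 ∧ u = 0 ∧ v = 0) ∧
            z ^ 2 - algebraMap K (𝔮.adicCompletion K) a * u ^ 2 -
              algebraMap K (𝔮.adicCompletion K) b * v ^ 2 = 0) →
          algebraMap K (𝔮.adicCompletion K) t ∈ 𝔮.adicCompletionIntegers K} := by
  ext t
  refine (NormOneTrace.exists_add_mem_normOneTraces_iff (a := Units.mk0 a ha0)
    (b := Units.mk0 b hb0) ha hb).trans (forall_congr' fun 𝔮 => imp_congr ?_ ?_)
  · exact NormOneTrace.isRamified_iff_not_conicSolvable ha0 hb0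
  · rw [HeightOneSpectrum.mem_adicCompletionIntegers,
      ← HeightOneSpectrum.valuedAdicCompletion_eq_valuation']
    rfl
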